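/- arXiv:2210.04487 — 2 statements merged into one kernel-verified Lean document; each statement's English description precedes it below -/
import Mathlib

section
/- There exists an F₄-linear code C ⊆ F₄^{74} of F₄-dimension 55 whose minimum Hamming distance is 9 and which contains its Hermitian dual: C^{⊥h} ⊆ C. -/
open Polynomial

set_option synthInstance.maxHeartbeats 1000000
set_option maxHeartbeats 1000000

noncomputable section

/-- The field `F₄ = GF(4)`. -/
abbrev F4 : Type := GaloisField 2 2

/-- The coefficient vector `[p]ₙ ∈ F₄ⁿ` of the remainder of `p` modulo `Xⁿ - 1`
(coefficient of `X^i` in position `i`). -/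
def coeffVec (n : ℕ) (p : Polynomial F4) : Fin n → F4 :=
  fun i => (p % (X ^ n - 1)).coeff i

/-- The Hermitian inner product `⟨u,v⟩_h = ∑ i, u i * (v i)²` on `F₄^m`. -/
def hermInner {m : ℕ} (u v : Fin m → F4) : F4 := ∑ i, u i * (v i) ^ 2

/-- The Hermitian inner product on `F₄ⁿ × F₄ⁿ`: the sum of the Hermitian inner
products of the two components. -/
def hermInner2 {n : ℕ} (u v : (Fin n → F4) × (Fin n → F4)) : F4 :=
  hermInner u.1 v.1 + hermInner u.2 v.2

/-- The conjugate transform `f̄ := f₀² + ∑_{i=1}^{n-1} f_i² X^{n-i}`, where `f` is first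
reduced modulo `Xⁿ - 1`. -/
def conjT (n : ℕ) (f : Polynomial F4) : Polynomial F4 :=
  C (((f % (X ^ n - 1)).coeff 0) ^ 2) +
    ∑ i ∈ Finset.Ico 1 n, C (((f % (X ^ n - 1)).coeff i) ^ 2) * X ^ (n - i)

/-- The Hermitian dual generator `g^{⊥h}(X) := ∑_{j=0}^{deg h} (h_j)² X^{deg h - j}`,
the conjugate reciprocal of the check polynomial `h = (Xⁿ-1)/g`. -/
def dualGen (n : ℕ) (g : Polynomial F4) : Polynomial F4 :=
  ∑ j ∈ Finset.range (((X ^ n - 1) / g).natDegree + 1),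
    C ((((X ^ n - 1) / g).coeff j) ^ 2) * X ^ (((X ^ n - 1) / g).natDegree - j)

lemma hermInner_add_right {m : ℕ} (u v w : Fin m → F4) :
    hermInner u (v + w) = hermInner u v + hermInner u w := by
  simp only [hermInner, Pi.add_apply]
  rw [← Finset.sum_add_distrib]
  refine Finset.sum_congr rfl fun i _ => ?_
  rw [add_pow_char (v i) (w i) 2, mul_add]

lemma hermInner_smul_right {m : ℕ} (c : F4) (u v : Fin m → F4) :
    hermInner u (c • v) = c ^ 2 * hermInner u v := by
  simp only [hermInner, Pi.smul_apply, smul_eq_mul, mul_pow, Finset.mul_sum]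
  exact Finset.sum_congr rfl fun i _ => by ring

/-- The Hermitian dual code `C^{⊥h} = {v | ∀ u ∈ C, ⟨u,v⟩_h = 0}` of a linear code in `F₄^m`. -/
def hermDual {m : ℕ} (Ccode : Submodule F4 (Fin m → F4)) : Submodule F4 (Fin m → F4) where
  carrier := {v | ∀ u ∈ Ccode, hermInner u v = 0}
  zero_mem' := by intro u _; simp [hermInner]
  add_mem' := by
    intro v w hv hw u hu
    rw [hermInner_add_right, hv u hu, hw u hu, add_zero]
  smul_mem' := by
    intro c v hv u hu
    rw [hermInner_smul_right, hv u hu, mul_zero]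

lemma hermInner2_add_right {n : ℕ} (u v w : (Fin n → F4) × (Fin n → F4)) :
    hermInner2 u (v + w) = hermInner2 u v + hermInner2 u w := by
  simp only [hermInner2, Prod.fst_add, Prod.snd_add, hermInner_add_right]
  ring

lemma hermInner2_smul_right {n : ℕ} (c : F4) (u v : (Fin n → F4) × (Fin n → F4)) :
    hermInner2 u (c • v) = c ^ 2 * hermInner2 u v := by
  simp only [hermInner2, Prod.smul_fst, Prod.smul_snd, hermInner_smul_right]
  ring

/-- The Hermitian dual code of a linear code in `F₄ⁿ × F₄ⁿ` (identified with `F₄^{2n}`). -/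
def hermDualPair {n : ℕ} (Ccode : Submodule F4 ((Fin n → F4) × (Fin n → F4))) :
    Submodule F4 ((Fin n → F4) × (Fin n → F4)) where
  carrier := {v | ∀ u ∈ Ccode, hermInner2 u v = 0}
  zero_mem' := by intro u _; simp [hermInner2, hermInner]
  add_mem' := by
    intro v w hv hw u hu
    rw [hermInner2_add_right, hv u hu, hw u hu, add_zero]
  smul_mem' := by
    intro c v hv u hu
    rw [hermInner2_smul_right, hv u hu, mul_zero]

/-- Hamming weight of a vector. -/
def hammingWt {m : ℕ} (u : Fin m → F4) : ℕ := Nat.card {i : Fin m // u i ≠ 0}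

/-- The 2-generator quasi-cyclic code `C(g₁,g₂,ν)` of length `2n` and index 2:
the `F₄`-span of all `([a·ν·g₁]ₙ, [a·g₁]ₙ)` and `([b·g₂]ₙ, [b·ν·g₂]ₙ)`. -/
def Cqc (n : ℕ) (g₁ g₂ ν : Polynomial F4) : Submodule F4 ((Fin n → F4) × (Fin n → F4)) :=
  Submodule.span F4
    ({x | ∃ a : Polynomial F4, x = (coeffVec n (a * ν * g₁), coeffVec n (a * g₁))} ∪
     {x | ∃ b : Polynomial F4, x = (coeffVec n (b * g₂), coeffVec n (b * ν * g₂))})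

/-- The quasi-cyclic code `D`: the `F₄`-span of all `([-ν̄·c·g₁^{⊥h}]ₙ, [c·g₁^{⊥h}]ₙ)`
and `([s·g₂^{⊥h}]ₙ, [-ν̄·s·g₂^{⊥h}]ₙ)`. -/
def Dqc (n : ℕ) (g₁ g₂ ν : Polynomial F4) : Submodule F4 ((Fin n → F4) × (Fin n → F4)) :=
  Submodule.span F4
    ({x | ∃ c : Polynomial F4,
        x = (coeffVec n (-(conjT n ν) * c * dualGen n g₁), coeffVec n (c * dualGen n g₁))} ∪
     {x | ∃ s : Polynomial F4,
        x = (coeffVec n (s * dualGen n g₂), coeffVec n (-(conjT n ν) * s * dualGen n g₂))})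

/-- The quotient ring `R = F₄[X]/(Xⁿ - 1)`. -/
abbrev Rng (n : ℕ) : Type := Polynomial F4 ⧸ Ideal.span ({X ^ n - 1} : Set (Polynomial F4))

/-- The natural projection `F₄[X] → R`. -/
def toRng (n : ℕ) : Polynomial F4 →+* Rng n := Ideal.Quotient.mk _

/-- The `R`-linear map `R → R × R`, `a ↦ (a·û, a·v̂)`, where `û, v̂` are the images of
`u, v` in `R`. -/
def qcMap (n : ℕ) (u v : Polynomial F4) : Rng n →ₗ[Rng n] Rng n × Rng n :=
  (LinearMap.toSpanSingleton (Rng n) (Rng n) (toRng n u)).prod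
    (LinearMap.toSpanSingleton (Rng n) (Rng n) (toRng n v))

namespace QC74

/-- Bit slices: a list of pairs of bit vectors, one pair for each base-4 digit. -/
inductive Sl where
  | nil : Sl
  | cons (x y : Nat) (r : Sl) : Sl

/-- `n` lanes, stored as bit slices. -/
structure Ln where
  n : Nat
  S : Sl

/-- Multiplication by `ω` of a packed vector over `F₄` (base-4 digits). -/
def mw (s : Nat) : Nat :=
  Nat.lor (Nat.land (Nat.shiftRight s 1) 91625968981)
    (Nat.shiftLeft (Nat.land (Nat.xor s (Nat.shiftRight s 1)) 91625968981) 1)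

/-- `x`, complemented (within `full`) if `b` is nonzero. -/
def xb (b full x : Nat) : Nat := Nat.rec x (fun _ _ => Nat.xor x full) b

/-- Append to the `n` lanes of `S` the lanes of `T`, translated by `c`. -/
def cat (n full : Nat) (S : Sl) : Sl → Nat → Sl :=
  Sl.rec (fun _ _ => Sl.nil)
    (fun x y _ ih T c => Sl.rec Sl.nil
      (fun x' y' r' _ => Sl.cons (Nat.lor x (Nat.shiftLeft (xb (Nat.land c 1) full x') n))
        (Nat.lor y (Nat.shiftLeft (xb (Nat.land c 2) full y') n)) (ih r' (Nat.shiftRight c 2))) T) S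

def ones (n : Nat) : Nat := Nat.sub (Nat.shiftLeft 1 n) 1

def zeroS (k : Nat) : Sl := Nat.rec Sl.nil (fun _ ih => Sl.cons 0 0 ih) k
/-- One zero lane. -/
def lnZ : Ln := ⟨1, zeroS 19⟩
/-- No lanes. -/
def lnE : Ln := ⟨0, zeroS 19⟩

def ext1 (L T : Ln) (c : Nat) : Ln :=
  ⟨Nat.add L.n T.n, cat L.n (ones T.n) L.S T.S c⟩

/-- Append the lanes of `T` translated by the three nonzero multiples of `h`. -/
def ext (L T : Ln) (h : Nat) : Ln :=
  ext1 L (ext1 (ext1 (ext1 lnE T h) T (mw h)) T (Nat.xor h (mw h))) 0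

def updA (h : Nat) (l : List Ln) : Ln → List Ln :=
  List.rec (fun _ => []) (fun b _ ih p => ext b p h :: ih b) l
def upd (h : Nat) (l : List Ln) : List Ln :=
  List.rec [] (fun b r _ => b :: updA h r b) l

/-- Update of the threshold counters (`p` is the counter preceding `T`) by a mask. -/
def bump (m : Nat) (T : List Nat) : Nat → List Nat :=
  List.rec (fun _ => []) (fun t _ ih p => Nat.lor t (Nat.land p m) :: ih t) T

/-- Lanes whose digit `(x, y)` differs from the lowest digit of `c`. -/
def msk (full x y c : Nat) : Nat :=
  Nat.rec
    (Nat.rec (Nat.lor x y) (fun _ _ => Nat.lor x (Nat.xor y full)) (Nat.land c 2))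
    (fun _ _ => Nat.rec (Nat.lor (Nat.xor x full) y)
      (fun _ _ => Nat.lor (Nat.xor x full) (Nat.xor y full)) (Nat.land c 2))
    (Nat.land c 1)

def cnt (full : Nat) (S : Sl) : Nat → List Nat → List Nat :=
  Sl.rec (fun _ T => T)
    (fun x y _ ih c T => ih (Nat.shiftRight c 2) (bump (msk full x y c) T full)) S

def lastD (l : List Nat) : Nat → Nat :=
  List.rec (fun d => d) (fun a _ ih _ => ih a) l

def zeros (k : Nat) : List Nat := Nat.rec [] (fun _ ih => 0 :: ih) k

/-- Every lane, translated by `c`, has at least `t` nonzero digits. -/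
def good (L : Ln) (c t : Nat) : Bool :=
  Nat.beq (lastD (cnt (ones L.n) L.S c (zeros t)) (ones L.n)) (ones L.n)

def goods (h : Nat) (st : List Ln) : Nat → Bool :=
  List.rec (fun _ => true) (fun L _ ih b => and (good L h b) (ih (Nat.pred b))) st

def run (us : List Nat) : List Ln → Nat → Bool :=
  List.rec (fun _ _ => true) (fun h _ ih st b => and (goods h st b) (ih (upd h st) b)) us

def build (us : List Nat) : List Ln → List Ln :=
  List.rec (fun st => st) (fun h _ ih st => ih (upd h st)) us

def nth (k : Nat) : List Ln → Ln :=
  Nat.rec (fun l => List.rec lnE (fun a _ _ => a) l)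
    (fun _ ih l => List.rec lnE (fun _ r _ => ih r) l) k

def subS (lo full : Nat) (S : Sl) : Sl :=
  Sl.rec Sl.nil (fun x y _ ih => Sl.cons (Nat.land (Nat.shiftRight x lo) full)
    (Nat.land (Nat.shiftRight y lo) full) ih) S
/-- The lanes `lo, …, lo + n - 1` of `L`. -/
def sub (L : Ln) (lo n : Nat) : Ln := ⟨n, subS lo (ones n) L.S⟩

/-- Columns of the left block. -/
def Ut : List Nat :=
  [21336921167, 85347684668, 222172731341, 164948421919, 59417646442, 237670585768, 231202563211,
   274329952263, 102826635831, 150411434977, 104684883602, 127644051829, 43592005353,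
   174368021412, 232729776006, 207008844851, 172996903655, 229092420234, 265588168707,
   136710001191, 15381289889, 61525159556, 246100638224, 59045091947, 236180367788, 221063140507,
   160728162375, 8518721546, 34074886184, 136299544736, 9506886077, 38027544308, 152110177232,
   111177469526, 117242964581, 77143292585, 253916576153]
/-- Columns of the right block outside the redundancy positions. -/
def Vt : List Nat :=
  [261036675901, 118486220511, 79988484161, 235019579961, 216570968783, 142793021719,
   71803831626, 266717988373, 72665033343, 272366451393, 90807900463, 173219903361, 228061232914,
   261651336803, 116553436071, 69969296801, 266003113401, 133978645711]

def Bs : List Ln := build Vt [lnZ, lnE, lnE, lnE]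

def wordW : Nat := 1045347431201426569086311226873021821091977

set_option maxRecDepth 100000
theorem rv : run Vt [lnZ, lnE, lnE] 8 = true := by decide +kernel
theorem r0 : run Ut [nth 0 Bs, lnE, lnE, lnE] 8 = true := by decide +kernel
theorem r3 : run Ut [nth 3 Bs] 5 = true := by decide +kernel
theorem r1a : run Ut [sub (nth 1 Bs) 0 9, lnE, lnE, lnE] 7 = true := by decide +kernel
theorem r1b : run Ut [sub (nth 1 Bs) 9 9, lnE, lnE, lnE] 7 = true := by decide +kernel
theorem r1c : run Ut [sub (nth 1 Bs) 18 9, lnE, lnE, lnE] 7 = true := by decide +kernel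
theorem r1d : run Ut [sub (nth 1 Bs) 27 9, lnE, lnE, lnE] 7 = true := by decide +kernel
theorem r1e : run Ut [sub (nth 1 Bs) 36 9, lnE, lnE, lnE] 7 = true := by decide +kernel
theorem r1f : run Ut [sub (nth 1 Bs) 45 9, lnE, lnE, lnE] 7 = true := by decide +kernel
theorem r2a : run Ut [sub (nth 2 Bs) 0 230, lnE, lnE] 6 = true := by decide +kernel
theorem r2b : run Ut [sub (nth 2 Bs) 230 230, lnE, lnE] 6 = true := by decide +kernel
theorem r2c : run Ut [sub (nth 2 Bs) 460 230, lnE, lnE] 6 = true := by decide +kernel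
theorem r2d : run Ut [sub (nth 2 Bs) 690 230, lnE, lnE] 6 = true := by decide +kernel
theorem r2e : run Ut [sub (nth 2 Bs) 920 230, lnE, lnE] 6 = true := by decide +kernel
theorem r2f : run Ut [sub (nth 2 Bs) 1150 230, lnE, lnE] 6 = true := by decide +kernel

/-! ### Soundness of the lane computations -/

def Sl.len : Sl → Nat
  | .nil => 0
  | .cons _ _ r => r.len + 1

/-- Lane `i` of `S` holds the packed vector `s`. -/
def Rep : Sl → Nat → Nat → Prop
  | .nil, _, _ => True
  | .cons x y r, i, s => x.testBit i = s.testBit 0 ∧ y.testBit i = s.testBit 1 ∧ Rep r i (s >>> 2)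

/-- The slices have no bits at positions `≥ n`. -/
def Bd (n : Nat) : Sl → Prop
  | .nil => True
  | .cons x y r => (∀ i, n ≤ i → x.testBit i = false) ∧ (∀ i, n ≤ i → y.testBit i = false) ∧ Bd n r

/-- Number of nonzero digits among the first `k`. -/
def wt : Nat → Nat → Nat
  | 0, _ => 0
  | k + 1, s => (s.testBit 0 || s.testBit 1).toNat + wt k (s >>> 2)

theorem testBit_ones (n i : Nat) : (ones n).testBit i = decide (i < n) := by
  have : ones n = 2 ^ n - 1 := by
    show 1 <<< n - 1 = _
    rw [Nat.one_shiftLeft]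
  rw [this, Nat.testBit_two_pow_sub_one]

theorem land_one_cases (c : Nat) : (Nat.land c 1 = 0 ∧ c.testBit 0 = false) ∨
    (Nat.land c 1 = 1 ∧ c.testBit 0 = true) := by
  have h : Nat.land c 1 = c % 2 := Nat.and_one_is_mod c
  rw [h, Nat.testBit_zero]
  rcases Nat.mod_two_eq_zero_or_one c with h | h <;> simp [h]

theorem land_two_cases (c : Nat) : (Nat.land c 2 = 0 ∧ c.testBit 1 = false) ∨
    (Nat.land c 2 = 2 ∧ c.testBit 1 = true) := by
  have h : Nat.land c 2 = (c.testBit 1).toNat <<< 1 := by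
    show c &&& 2 = _
    apply Nat.eq_of_testBit_eq
    intro i
    have h2 : (2 : Nat) = 2 ^ 1 := rfl
    rw [Nat.testBit_and, Nat.testBit_shiftLeft]
    rw [h2, Nat.testBit_two_pow]
    rcases i with _ | _ | i
    · simp
    · cases c.testBit 1 <;> simp
    · cases c.testBit 1 <;> simp [Nat.testBit_succ]
  rw [h]
  cases c.testBit 1 <;> simp

theorem xb_one (c full x i : Nat) (hf : full.testBit i = true) :
    (xb (Nat.land c 1) full x).testBit i = (x.testBit i ^^ c.testBit 0) := by
  rcases land_one_cases c with ⟨h, h'⟩ | ⟨h, h'⟩ <;> rw [h, h']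
  · show x.testBit i = _
    simp
  · show (x ^^^ full).testBit i = _
    rw [Nat.testBit_xor, hf]

theorem xb_two (c full x i : Nat) (hf : full.testBit i = true) :
    (xb (Nat.land c 2) full x).testBit i = (x.testBit i ^^ c.testBit 1) := by
  rcases land_two_cases c with ⟨h, h'⟩ | ⟨h, h'⟩ <;> rw [h, h']
  · show x.testBit i = _
    simp
  · show (x ^^^ full).testBit i = _
    rw [Nat.testBit_xor, hf]

theorem xb_bd (b full x i : Nat) (hf : full.testBit i = false) (hx : x.testBit i = false) :
    (xb b full x).testBit i = false := by
  cases b with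
  | zero => exact hx
  | succ b =>
    show (x ^^^ full).testBit i = _
    rw [Nat.testBit_xor, hf, hx]; rfl

theorem cat_len (n full : Nat) (S : Sl) : ∀ (T : Sl) (c : Nat), T.len = S.len →
    (cat n full S T c).len = S.len := by
  induction S with
  | nil => intro T c h; rfl
  | cons x y r ih =>
    intro T c h
    cases T with
    | nil => simp [Sl.len] at h
    | cons x' y' r' =>
      show (cat n full r r' (Nat.shiftRight c 2)).len + 1 = r.len + 1
      rw [ih]
      simpa [Sl.len] using h

theorem tb_app (x y n i : Nat) : (Nat.lor x (Nat.shiftLeft y n)).testBit i =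
    (x.testBit i || (decide (n ≤ i) && y.testBit (i - n))) := by
  show (x ||| y <<< n).testBit i = _
  rw [Nat.testBit_or, Nat.testBit_shiftLeft]

theorem cat_bd (n m : Nat) (S : Sl) : ∀ (T : Sl) (c : Nat), Bd n S → Bd m T →
    Bd (n + m) (cat n (ones m) S T c) := by
  induction S with
  | nil => intro T c h _; trivial
  | cons x y r ih =>
    intro T c h hT
    cases T with
    | nil => trivial
    | cons x' y' r' =>
      obtain ⟨h1, h2, h3⟩ := h
      obtain ⟨k1, k2, k3⟩ := hT
      refine ⟨?_, ?_, ih r' _ h3 k3⟩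
      · intro i hi
        rw [tb_app, h1 i (by omega), xb_bd]
        · simp
        · rw [testBit_ones]; simp; omega
        · exact k1 _ (by omega)
      · intro i hi
        rw [tb_app, h2 i (by omega), xb_bd]
        · simp
        · rw [testBit_ones]; simp; omega
        · exact k2 _ (by omega)

theorem cat_left (n full : Nat) (S : Sl) : ∀ (T : Sl) (c i s : Nat), i < n → T.len = S.len →
    Rep S i s → Rep (cat n full S T c) i s := by
  induction S with
  | nil => intro T c i s _ _ _; trivial
  | cons x y r ih =>
    intro T c i s hi hl h
    cases T with
    | nil => trivial
    | cons x' y' r' =>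
      obtain ⟨h1, h2, h3⟩ := h
      refine ⟨?_, ?_, ih r' _ i _ hi (by simpa [Sl.len] using hl) h3⟩
      · rw [tb_app, h1]; simp; omega
      · rw [tb_app, h2]; simp; omega

theorem cat_right (n m : Nat) (S : Sl) : ∀ (T : Sl) (c i s : Nat), i < m → Bd n S →
    Rep T i s → Rep (cat n (ones m) S T c) (n + i) (s ^^^ c) := by
  induction S with
  | nil => intro T c i s _ _ _; trivial
  | cons x y r ih =>
    intro T c i s hi hS h
    cases T with
    | nil => trivial
    | cons x' y' r' =>
      obtain ⟨h1, h2, h3⟩ := h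
      obtain ⟨b1, b2, b3⟩ := hS
      refine ⟨?_, ?_, ?_⟩
      · rw [tb_app, b1 _ (by omega), Nat.testBit_xor]
        simp only [Nat.le_add_right, Nat.add_sub_cancel_left]
        rw [xb_one _ _ _ _ (by rw [testBit_ones]; simpa using hi), h1]; simp
      · rw [tb_app, b2 _ (by omega), Nat.testBit_xor]
        simp only [Nat.le_add_right, Nat.add_sub_cancel_left]
        rw [xb_two _ _ _ _ (by rw [testBit_ones]; simpa using hi), h2]; simp
      · rw [Nat.shiftRight_xor_distrib]
        exact ih r' _ i _ hi b3 h3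

/-- `L` has a lane for every vector satisfying `Q`. -/
structure Cov (L : Ln) (Q : Nat → Prop) : Prop where
  len : L.S.len = 19
  bd : Bd L.n L.S
  cov : ∀ s, Q s → ∃ i, i < L.n ∧ Rep L.S i s

theorem Cov.mono {L : Ln} {Q Q' : Nat → Prop} (h : Cov L Q) (hQ : ∀ s, Q' s → Q s) : Cov L Q' :=
  ⟨h.len, h.bd, fun s hs => h.cov s (hQ s hs)⟩

theorem ext1_cov {L T : Ln} {Q R : Nat → Prop} (hL : Cov L Q) (hT : Cov T R) (c : Nat) :
    Cov (ext1 L T c) (fun s => Q s ∨ ∃ s', R s' ∧ s = s' ^^^ c) := by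
  refine ⟨?_, ?_, ?_⟩
  · exact (cat_len _ _ _ _ _ (hT.len.trans hL.len.symm)).trans hL.len
  · exact cat_bd _ _ _ _ _ hL.bd hT.bd
  · rintro s (hs | ⟨s', hs', rfl⟩)
    · obtain ⟨i, hi, hr⟩ := hL.cov s hs
      exact ⟨i, Nat.lt_add_right _ hi, cat_left _ _ _ _ _ _ _ hi (hT.len.trans hL.len.symm) hr⟩
    · obtain ⟨i, hi, hr⟩ := hT.cov s' hs'
      exact ⟨L.n + i, Nat.add_lt_add_left hi _, cat_right _ _ _ _ _ _ _ hi hL.bd hr⟩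

theorem zeroS_len (k : Nat) : (zeroS k).len = k := by
  induction k with
  | zero => rfl
  | succ k ih => show (zeroS k).len + 1 = _; rw [ih]

theorem zeroS_bd (n k : Nat) : Bd n (zeroS k) := by
  induction k with
  | zero => trivial
  | succ k ih => exact ⟨by simp, by simp, ih⟩

theorem zeroS_rep (i k : Nat) : Rep (zeroS k) i 0 := by
  induction k with
  | zero => trivial
  | succ k ih => exact ⟨by simp, by simp, by rw [Nat.zero_shiftRight]; exact ih⟩

theorem lnE_cov (Q : Nat → Prop) (h : ∀ s, ¬ Q s) : Cov lnE Q :=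
  ⟨zeroS_len 19, zeroS_bd _ 19, fun s hs => absurd hs (h s)⟩

theorem lnZ_cov : Cov lnZ (fun s => s = 0) :=
  ⟨zeroS_len 19, zeroS_bd _ 19, by rintro s rfl; exact ⟨0, Nat.one_pos, zeroS_rep 0 19⟩⟩

theorem ext_cov {L T : Ln} {Q R : Nat → Prop} (hL : Cov L Q) (hT : Cov T R) (h : Nat) :
    Cov (ext L T h) (fun s => Q s ∨ ∃ s', R s' ∧
      (s = s' ^^^ h ∨ s = s' ^^^ mw h ∨ s = s' ^^^ (h ^^^ mw h))) := by
  have h0 := lnE_cov (fun _ => False) (fun _ => id)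
  have := ext1_cov hL (ext1_cov (ext1_cov (ext1_cov h0 hT h) hT (mw h)) hT (h ^^^ mw h)) 0
  refine this.mono ?_
  rintro s (hs | ⟨s', hs', e⟩)
  · exact Or.inl hs
  · refine Or.inr ⟨s, ?_, by simp⟩
    rcases e with e | e | e
    · exact Or.inl (Or.inl (Or.inr ⟨s', hs', e⟩))
    · exact Or.inl (Or.inr ⟨s', hs', e⟩)
    · exact Or.inr ⟨s', hs', e⟩

/-- `s` is the sum of a vector satisfying `P` and nonzero multiples of exactly `j` of the columns. -/
inductive Combo (P : Nat → Prop) : List Nat → Nat → Nat → Prop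
  | base {s : Nat} : P s → Combo P [] 0 s
  | skip {l : List Nat} {j s : Nat} (h : Nat) : Combo P l j s → Combo P (h :: l) j s
  | t1 {l : List Nat} {j s : Nat} (h : Nat) : Combo P l j s → Combo P (h :: l) (j + 1) (s ^^^ h)
  | t2 {l : List Nat} {j s : Nat} (h : Nat) : Combo P l j s → Combo P (h :: l) (j + 1) (s ^^^ mw h)
  | t3 {l : List Nat} {j s : Nat} (h : Nat) :
      Combo P l j s → Combo P (h :: l) (j + 1) (s ^^^ (h ^^^ mw h))

theorem combo_nil {P : Nat → Prop} {s : Nat} (h : Combo P [] 0 s) : P s := by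
  cases h; assumption

theorem combo_nil_succ {P : Nat → Prop} {j s : Nat} : ¬ Combo P [] (j + 1) s := by
  intro h; cases h

/-- The lanes in the state cover the combinations of the columns `d`. -/
def SC (P : Nat → Prop) (d : List Nat) : Nat → List Ln → Prop
  | _, [] => True
  | j, L :: r => Cov L (Combo P d j) ∧ SC P d (j + 1) r

theorem updA_sc (P : Nat → Prop) (d : List Nat) (h : Nat) (l : List Ln) : ∀ (j : Nat) (p : Ln),
    Cov p (Combo P d j) → SC P d (j + 1) l → SC P (h :: d) (j + 1) (updA h l p) := by
  induction l with
  | nil => intro j p _ _; trivial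
  | cons b r ih =>
    intro j p hp hs
    obtain ⟨hb, hr⟩ := hs
    refine ⟨?_, ih (j + 1) b hb hr⟩
    refine (ext_cov hb hp h).mono ?_
    intro s hs
    cases hs with
    | skip _ hs => exact Or.inl hs
    | t1 _ hs => exact Or.inr ⟨_, hs, Or.inl rfl⟩
    | t2 _ hs => exact Or.inr ⟨_, hs, Or.inr (Or.inl rfl)⟩
    | t3 _ hs => exact Or.inr ⟨_, hs, Or.inr (Or.inr rfl)⟩

theorem upd_sc (P : Nat → Prop) (d : List Nat) (h : Nat) (l : List Ln) (hs : SC P d 0 l) :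
    SC P (h :: d) 0 (upd h l) := by
  cases l with
  | nil => trivial
  | cons b r =>
    obtain ⟨hb, hr⟩ := hs
    refine ⟨hb.mono ?_, updA_sc P d h r 0 b hb hr⟩
    intro s hs
    cases hs with
    | skip _ hs => exact hs

theorem build_sc (P : Nat → Prop) (us : List Nat) : ∀ (d : List Nat) (l : List Ln), SC P d 0 l →
    SC P (us.reverse ++ d) 0 (build us l) := by
  induction us with
  | nil => intro d l h; exact h
  | cons h us ih =>
    intro d l hs
    have := ih (h :: d) (upd h l) (upd_sc P d h l hs)
    rw [List.reverse_cons, List.append_assoc]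
    exact this

theorem SC_E (P : Nat → Prop) (k j : Nat) : SC P [] (j + 1) (List.replicate k lnE) := by
  induction k generalizing j with
  | zero => trivial
  | succ k ih => exact ⟨lnE_cov _ (fun _ => combo_nil_succ), ih (j + 1)⟩

theorem SC_init (P : Nat → Prop) (L : Ln) (k : Nat) (h : Cov L P) :
    SC P [] 0 (L :: List.replicate k lnE) :=
  ⟨h.mono fun _ => combo_nil, SC_E P k 0⟩

theorem nth_sc (P : Nat → Prop) (d : List Nat) (k : Nat) : ∀ (j : Nat) (l : List Ln),
    SC P d j l → k < l.length → Cov (nth k l) (Combo P d (j + k)) := by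
  induction k with
  | zero =>
    intro j l h hk
    cases l with
    | nil => simp at hk
    | cons a r => exact h.1
  | succ k ih =>
    intro j l h hk
    cases l with
    | nil => simp at hk
    | cons a r =>
      have := ih (j + 1) r h.2 (by simpa using hk)
      rw [show j + (k + 1) = j + 1 + k by omega]
      exact this

theorem subS_len (lo full : Nat) (S : Sl) : (subS lo full S).len = S.len := by
  induction S with
  | nil => rfl
  | cons x y r ih => show (subS lo full r).len + 1 = _; rw [ih]; rfl

theorem tb_sub (x lo n i : Nat) : (Nat.land (Nat.shiftRight x lo) (ones n)).testBit i =
    (x.testBit (lo + i) && decide (i < n)) := by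
  show (x >>> lo &&& ones n).testBit i = _
  rw [Nat.testBit_and, Nat.testBit_shiftRight, testBit_ones]

theorem subS_bd (lo n : Nat) (S : Sl) : Bd n (subS lo (ones n) S) := by
  induction S with
  | nil => trivial
  | cons x y r ih =>
    refine ⟨?_, ?_, ih⟩
    · intro i hi; rw [tb_sub]; simp; omega
    · intro i hi; rw [tb_sub]; simp; omega

theorem subS_rep (lo n : Nat) (S : Sl) : ∀ (i s : Nat), i < n → Rep S (lo + i) s →
    Rep (subS lo (ones n) S) i s := by
  induction S with
  | nil => intro i s _ _; trivial
  | cons x y r ih =>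
    intro i s hi h
    obtain ⟨h1, h2, h3⟩ := h
    refine ⟨?_, ?_, ih i _ hi h3⟩
    · rw [tb_sub, h1]; simp [hi]
    · rw [tb_sub, h2]; simp [hi]

theorem sub_cov {L : Ln} {Q : Nat → Prop} (h : Cov L Q) (lo n : Nat) :
    Cov (sub L lo n) (fun s => ∃ i, i < n ∧ Rep L.S (lo + i) s) :=
  ⟨(subS_len _ _ _).trans h.len, subS_bd _ _ _, fun _ ⟨i, hi, hr⟩ =>
    ⟨i, hi, subS_rep _ _ _ _ _ hi hr⟩⟩

theorem msk_tb (full x y c i : Nat) (hf : full.testBit i = true) :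
    (msk full x y c).testBit i = ((x.testBit i ^^ c.testBit 0) || (y.testBit i ^^ c.testBit 1)) := by
  unfold msk
  rcases land_one_cases c with ⟨h, h'⟩ | ⟨h, h'⟩ <;>
    rcases land_two_cases c with ⟨k, k'⟩ | ⟨k, k'⟩ <;> rw [h, h', k, k']
  · show (x ||| y).testBit i = _
    simp
  · show (x ||| (y ^^^ full)).testBit i = _
    simp [hf]
  · show ((x ^^^ full) ||| y).testBit i = _
    simp [hf]
  · show ((x ^^^ full) ||| (y ^^^ full)).testBit i = _
    simp [hf]

/-- The counters `T` (numbered from `j`) are right for lane `i` with current count `w`. -/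
def CT (i w : Nat) : Nat → List Nat → Prop
  | _, [] => True
  | j, t :: T => t.testBit i = decide (j ≤ w) ∧ CT i w (j + 1) T

theorem bump_ct (i w m : Nat) (T : List Nat) : ∀ (j p : Nat), p.testBit i = decide (j ≤ w) →
    CT i w (j + 1) T → CT i (w + (m.testBit i).toNat) (j + 1) (bump m T p) := by
  induction T with
  | nil => intro j p _ _; trivial
  | cons t T ih =>
    intro j p hp h
    obtain ⟨h1, h2⟩ := h
    refine ⟨?_, ih (j + 1) t h1 h2⟩
    show (t ||| (p &&& m)).testBit i = _
    rw [Nat.testBit_or, Nat.testBit_and, h1, hp]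
    cases m.testBit i
    · simp
    · simp; omega

theorem cnt_ct (full i : Nat) (hf : full.testBit i = true) (S : Sl) : ∀ (c s w : Nat) (T : List Nat),
    Rep S i s → CT i w 1 T → CT i (w + wt S.len (s ^^^ c)) 1 (cnt full S c T) := by
  induction S with
  | nil => intro c s w T _ h; exact h
  | cons x y r ih =>
    intro c s w T h hT
    obtain ⟨h1, h2, h3⟩ := h
    have hb := bump_ct i w (msk full x y c) T 0 full (by simp [hf]) hT
    have := ih (Nat.shiftRight c 2) (s >>> 2) _ _ h3 hb
    rw [msk_tb _ _ _ _ _ hf, h1, h2] at this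
    show CT i _ 1 (cnt full r (Nat.shiftRight c 2) (bump (msk full x y c) T full))
    have e : w + wt (Sl.cons x y r).len (s ^^^ c) = w + ((s.testBit 0 ^^ c.testBit 0) ||
        (s.testBit 1 ^^ c.testBit 1)).toNat + wt r.len (s >>> 2 ^^^ Nat.shiftRight c 2) := by
      show w + wt (r.len + 1) (s ^^^ c) = _
      simp only [wt, Nat.testBit_xor, Nat.shiftRight_xor_distrib]
      rw [add_assoc]
      rfl
    rw [e]
    exact this

theorem zeros_ct (i k j : Nat) : CT i 0 (j + 1) (zeros k) := by
  induction k generalizing j with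
  | zero => trivial
  | succ k ih => exact ⟨by simp, ih (j + 1)⟩

theorem lastD_ct (i w : Nat) (T : List Nat) : ∀ (j d : Nat), d.testBit i = decide (j ≤ w) →
    CT i w (j + 1) T → (lastD T d).testBit i = decide (j + T.length ≤ w) := by
  induction T with
  | nil => intro j d h _; exact h
  | cons t T ih =>
    intro j d _ hT
    have := ih (j + 1) t hT.1 hT.2
    show (lastD T t).testBit i = _
    rw [this, List.length_cons, show j + 1 + T.length = j + (T.length + 1) by omega]

theorem bump_len (m : Nat) (T : List Nat) : ∀ p, (bump m T p).length = T.length := by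
  induction T with
  | nil => intro p; rfl
  | cons t T ih => intro p; show (bump m T t).length + 1 = _; rw [ih]; rfl

theorem cnt_len (full : Nat) (S : Sl) : ∀ (c : Nat) (T : List Nat),
    (cnt full S c T).length = T.length := by
  induction S with
  | nil => intro c T; rfl
  | cons x y r ih =>
    intro c T
    exact (ih (Nat.shiftRight c 2) (bump (msk full x y c) T full)).trans (bump_len _ _ _)

theorem zeros_len (k : Nat) : (zeros k).length = k := by
  induction k with
  | zero => rfl
  | succ k ih => show (zeros k).length + 1 = _; rw [ih]

theorem good_sound {L : Ln} {Q : Nat → Prop} (hL : Cov L Q) {c t : Nat} (h : good L c t = true)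
    {s : Nat} (hs : Q s) : t ≤ wt 19 (s ^^^ c) := by
  obtain ⟨i, hi, hr⟩ := hL.cov s hs
  have hf : (ones L.n).testBit i = true := by rw [testBit_ones]; simpa using hi
  have h1 := cnt_ct _ i hf L.S c s 0 (zeros t) hr (zeros_ct i t 0)
  have h2 := lastD_ct i _ _ 0 (ones L.n) (by simp [hf]) h1
  have h3 := Nat.eq_of_beq_eq_true h
  rw [h3, hf, cnt_len, zeros_len, hL.len] at h2
  simpa using h2

theorem goods_sound (P : Nat → Prop) (d : List Nat) (h : Nat) (st : List Ln) : ∀ (j b : Nat),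
    SC P d j st → goods h st b = true → ∀ i s, i < st.length → Combo P d (j + i) s →
      b - i ≤ wt 19 (s ^^^ h) := by
  induction st with
  | nil => intro j b _ _ i s hi; simp at hi
  | cons L r ih =>
    intro j b hs hg i s hi hc
    have hg' : (good L h b && goods h r (Nat.pred b)) = true := hg
    rw [Bool.and_eq_true] at hg'
    cases i with
    | zero => exact good_sound hs.1 hg'.1 hc
    | succ i =>
      have := ih (j + 1) (Nat.pred b) hs.2 hg'.2 i s (by simpa using hi)
        (by rwa [show j + 1 + i = j + (i + 1) by omega])
      rw [Nat.pred_eq_sub_one] at this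
      omega

theorem upd_len (h : Nat) (l : List Ln) : (upd h l).length = l.length := by
  have : ∀ (l : List Ln) (p : Ln), (updA h l p).length = l.length := by
    intro l
    induction l with
    | nil => intro p; rfl
    | cons b r ih => intro p; show (updA h r b).length + 1 = _; rw [ih]; rfl
  cases l with
  | nil => rfl
  | cons b r => show (updA h r b).length + 1 = _; rw [this]; rfl

theorem run_sound (P : Nat → Prop) (us : List Nat) : ∀ (d : List Nat) (st : List Ln) (b : Nat),
    SC P d 0 st → run us st b = true → ∀ pre h post, us = pre ++ h :: post → ∀ i s,
      i < st.length → Combo P (pre.reverse ++ d) i s → b - i ≤ wt 19 (s ^^^ h) := by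
  induction us with
  | nil => intro d st b _ _ pre h post e; simp at e
  | cons g us ih =>
    intro d st b hs hr pre h post e i s hi hc
    have hr' : (goods g st b && run us (upd g st) b) = true := hr
    rw [Bool.and_eq_true] at hr'
    cases pre with
    | nil =>
      simp only [List.nil_append, List.cons.injEq] at e
      obtain ⟨rfl, _⟩ := e
      exact goods_sound P d g st 0 b hs hr'.1 i s hi (by simpa using hc)
    | cons g' pre =>
      simp only [List.cons_append, List.cons.injEq] at e
      obtain ⟨rfl, e⟩ := e
      exact ih (g :: d) (upd g st) b (upd_sc P d g st hs) hr'.2 pre h post e i s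
        (by rwa [upd_len]) (by simpa using hc)

theorem Bs_cov (k : Nat) (hk : k < 4) :
    Cov (nth k Bs) (Combo (fun s => s = 0) Vt.reverse k) := by
  have := build_sc (fun s => s = 0) Vt [] [lnZ, lnE, lnE, lnE] (SC_init _ lnZ 3 lnZ_cov)
  rw [List.append_nil] at this
  have hl : ∀ (us : List Nat) (st : List Ln), (build us st).length = st.length := by
    intro us
    induction us with
    | nil => intro st; rfl
    | cons u us ih => intro st; exact (ih (upd u st)).trans (upd_len _ _)
  have h2 := nth_sc _ _ k 0 _ this (by rw [hl]; exact hk)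
  rwa [Nat.zero_add] at h2

/-- Combinations with at least one column of the left block, the last one with coefficient 1. -/
theorem main_U {s0 k : Nat} (h0 : Combo (fun s => s = 0) Vt.reverse k s0)
    {pre post : List Nat} {h i s : Nat} (e : Ut = pre ++ h :: post)
    (hc : Combo (fun s => s = s0) pre.reverse i s)
    (hik : (k ≤ 1 ∧ i ≤ 3) ∨ (k = 2 ∧ i ≤ 2) ∨ (k = 3 ∧ i = 0)) :
    8 - k - i ≤ wt 19 (s ^^^ h) := by
  have key : ∀ (L : Ln) (Q : Nat → Prop) (n b : Nat), Cov L Q → Q s0 → i ≤ n →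
      run Ut (L :: List.replicate n lnE) b = true → b - i ≤ wt 19 (s ^^^ h) := by
    intro L Q n b hL hQ hi hr
    refine run_sound (fun s => s = s0) Ut [] _ b (SC_init _ L n (hL.mono ?_)) hr pre h post e i s
      (by simp; omega) (by simpa using hc)
    rintro _ rfl; exact hQ
  have hcov := Bs_cov k (by omega)
  have hk : k = 0 ∨ k = 1 ∨ k = 2 ∨ k = 3 := by omega
  rcases hk with rfl | rfl | rfl | rfl
  · exact key _ _ 3 8 hcov h0 (by omega) r0
  · obtain ⟨j, hj, hr⟩ := hcov.cov _ h0
    have hn : (nth 1 Bs).n = 54 := by decide +kernel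
    have key2 : ∀ lo, lo ≤ j → j < lo + 9 →
        run Ut (sub (nth 1 Bs) lo 9 :: List.replicate 3 lnE) 7 = true → 7 - i ≤ wt 19 (s ^^^ h) := by
      intro lo h1 h2 hrun
      refine key _ _ 3 7 (sub_cov hcov lo 9) ⟨j - lo, by omega, ?_⟩ (by omega) hrun
      rwa [show lo + (j - lo) = j by omega]
    rcases lt_or_ge j 9 with h9 | h9
    · exact key2 0 (by omega) (by omega) r1a
    rcases lt_or_ge j 18 with h9 | h9
    · exact key2 9 (by omega) (by omega) r1b
    rcases lt_or_ge j 27 with h9 | h9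
    · exact key2 18 (by omega) (by omega) r1c
    rcases lt_or_ge j 36 with h9 | h9
    · exact key2 27 (by omega) (by omega) r1d
    rcases lt_or_ge j 45 with h9 | h9
    · exact key2 36 (by omega) (by omega) r1e
    · exact key2 45 (by omega) (by omega) r1f
  · obtain ⟨j, hj, hr⟩ := hcov.cov _ h0
    have hn : (nth 2 Bs).n = 1377 := by decide +kernel
    have key2 : ∀ lo, lo ≤ j → j < lo + 230 →
        run Ut (sub (nth 2 Bs) lo 230 :: List.replicate 2 lnE) 6 = true →
          6 - i ≤ wt 19 (s ^^^ h) := by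
      intro lo h1 h2 hrun
      refine key _ _ 2 6 (sub_cov hcov lo 230) ⟨j - lo, by omega, ?_⟩ (by omega) hrun
      rwa [show lo + (j - lo) = j by omega]
    rcases lt_or_ge j 230 with h9 | h9
    · exact key2 0 (by omega) (by omega) r2a
    rcases lt_or_ge j 460 with h9 | h9
    · exact key2 230 (by omega) (by omega) r2b
    rcases lt_or_ge j 690 with h9 | h9
    · exact key2 460 (by omega) (by omega) r2c
    rcases lt_or_ge j 920 with h9 | h9
    · exact key2 690 (by omega) (by omega) r2d
    rcases lt_or_ge j 1150 with h9 | h9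
    · exact key2 920 (by omega) (by omega) r2e
    · exact key2 1150 (by omega) (by omega) r2f
  · exact key _ _ 0 5 hcov h0 (by omega) r3

theorem main_V {pre post : List Nat} {h i s : Nat} (e : Vt = pre ++ h :: post)
    (hc : Combo (fun s => s = 0) pre.reverse i s) (hi : i ≤ 2) : 8 - i ≤ wt 19 (s ^^^ h) :=
  run_sound (fun s => s = 0) Vt [] [lnZ, lnE, lnE] 8 (SC_init _ lnZ 2 lnZ_cov) rv pre h post e i s
    (by simp; omega) (by simpa using hc)

/-! ### The field `F₄` -/

theorem exists_w : ∃ w : F4, w ^ 2 = w + 1 := by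
  classical
  have hc : Nat.card F4 = 4 := by
    rw [GaloisField.card 2 2 (by norm_num)]; norm_num
  have : Fintype F4 := Fintype.ofFinite F4
  have hc' : Fintype.card F4 = 4 := by rw [← Nat.card_eq_fintype_card]; exact hc
  have : ∃ x : F4, x ∉ ({0, 1} : Finset F4) := by
    by_contra hcon
    push Not at hcon
    have h1 : Finset.univ ⊆ ({0, 1} : Finset F4) := fun x _ => hcon x
    have h2 := Finset.card_le_card h1
    rw [Finset.card_univ, hc'] at h2
    have h3 := Finset.card_le_two (a := (0 : F4)) (b := 1)
    omega
  obtain ⟨x, hx⟩ := this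
  simp only [Finset.mem_insert, Finset.mem_singleton, not_or] at hx
  refine ⟨x, ?_⟩
  have h4 : x ^ 4 = x := by rw [← hc']; exact FiniteField.pow_card x
  have h2 : (2 : F4) = 0 := CharP.cast_eq_zero F4 2
  have h5 : x * (x - 1) * (x ^ 2 + x + 1) = 0 := by linear_combination h4
  have h6 : x ^ 2 + x + 1 = 0 := by
    rcases mul_eq_zero.1 h5 with h | h
    · rcases mul_eq_zero.1 h with h | h
      · exact absurd h hx.1
      · exact absurd (sub_eq_zero.1 h) hx.2
    · exact h
  linear_combination h6 - (x + 1) * h2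

/-- The primitive element `ω`. -/
def w : F4 := Classical.choose exists_w
theorem w_sq : w ^ 2 = w + 1 := Classical.choose_spec exists_w
theorem two0 : (2 : F4) = 0 := CharP.cast_eq_zero F4 2
theorem add_self (x : F4) : x + x = 0 := by linear_combination x * two0
theorem eq_of_add {x y : F4} (h : x + y = 0) : x = y := by linear_combination h - y * two0
theorem pow4 (x : F4) : x ^ 4 = x := by
  have : Fintype F4 := Fintype.ofFinite F4
  have hc' : Fintype.card F4 = 4 := by
    rw [← Nat.card_eq_fintype_card, GaloisField.card 2 2 (by norm_num)]; norm_num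
  rw [← hc']; exact FiniteField.pow_card x

theorem w_ne : w ≠ 0 := by
  intro h
  have := w_sq
  rw [h] at this
  simp at this

theorem w1_ne : 1 + w ≠ 0 := by
  intro h
  have h1 := w_sq
  have : (1 : F4) = 0 := by linear_combination (w + 2) * h - h1 - (2 * w + 1) * two0
  exact one_ne_zero this

theorem F4_cases (x : F4) : x = 0 ∨ x = 1 ∨ x = w ∨ x = 1 + w := by
  have h : x * (x - 1) * ((x - w) * (x - (1 + w))) = 0 := by
    linear_combination pow4 x + (x ^ 2 - x) * w_sq +
      (x ^ 2 - x ^ 3 + w * (x ^ 2 - x ^ 3) + w * (x ^ 2 - x)) * two0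
  rcases mul_eq_zero.1 h with h | h
  · rcases mul_eq_zero.1 h with h | h
    · exact Or.inl h
    · exact Or.inr (Or.inl (sub_eq_zero.1 h))
  · rcases mul_eq_zero.1 h with h | h
    · exact Or.inr (Or.inr (Or.inl (sub_eq_zero.1 h)))
    · exact Or.inr (Or.inr (Or.inr (sub_eq_zero.1 h)))

def bt (b : Bool) : F4 := if b then 1 else 0

theorem bt_xor (a b : Bool) : bt (a ^^ b) = bt a + bt b := by
  cases a <;> cases b <;> simp [bt, add_self]

/-- Base-4 digit `q` of `s` as an element of `F₄`. -/
def dig (s q : Nat) : F4 := bt (s.testBit (2 * q)) + bt (s.testBit (2 * q + 1)) * w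

theorem dig_xor (s t q : Nat) : dig (s ^^^ t) q = dig s q + dig t q := by
  simp only [dig, Nat.testBit_xor, bt_xor]; ring

theorem dig_zero (q : Nat) : dig 0 q = 0 := by simp [dig, bt]

theorem dig_shift (s q : Nat) : dig (s >>> 2) q = dig s (q + 1) := by
  simp only [dig, Nat.testBit_shiftRight]
  rw [show 2 + 2 * q = 2 * (q + 1) by ring, show 2 + (2 * q + 1) = 2 * (q + 1) + 1 by ring]

theorem dig_ne (s q : Nat) : dig s q ≠ 0 ↔ (s.testBit (2 * q) || s.testBit (2 * q + 1)) = true := by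
  unfold dig
  cases s.testBit (2 * q) <;> cases s.testBit (2 * q + 1) <;> simp [bt, w_ne, w1_ne]

theorem mask_tb : ∀ i < 38, Nat.testBit 91625968981 i = decide (i % 2 = 0) := by decide +kernel

theorem mw_tb (s i : Nat) : (mw s).testBit i =
    ((s.testBit (1 + i) && Nat.testBit 91625968981 i) ||
      (decide (1 ≤ i) && ((s.testBit (i - 1) ^^ s.testBit (1 + (i - 1))) &&
        Nat.testBit 91625968981 (i - 1)))) := by
  show ((s >>> 1 &&& 91625968981) ||| (((s ^^^ s >>> 1) &&& 91625968981) <<< 1)).testBit i = _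
  simp only [Nat.testBit_or, Nat.testBit_and, Nat.testBit_shiftLeft, Nat.testBit_shiftRight,
    Nat.testBit_xor]

theorem dig_mw (s q : Nat) (hq : q < 19) : dig (mw s) q = w * dig s q := by
  have h1 : (mw s).testBit (2 * q) = s.testBit (2 * q + 1) := by
    rw [mw_tb, mask_tb _ (by omega), show 1 + 2 * q = 2 * q + 1 by ring]
    rcases Nat.eq_zero_or_pos q with rfl | h
    · simp
    · rw [mask_tb (2 * q - 1) (by omega)]
      have : (2 * q - 1) % 2 = 1 := by omega
      simp [this]
  have h2 : (mw s).testBit (2 * q + 1) = (s.testBit (2 * q) ^^ s.testBit (2 * q + 1)) := by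
    rw [mw_tb, mask_tb _ (by omega), show 2 * q + 1 - 1 = 2 * q by omega, mask_tb _ (by omega),
      show 1 + 2 * q = 2 * q + 1 by ring]
    have : (2 * q + 1) % 2 = 1 := by omega
    simp [this]
  unfold dig
  rw [h1, h2, bt_xor]
  linear_combination -bt (s.testBit (2 * q + 1)) * w_sq

/-- The vector in `F₄^19` packed in `s`. -/
def Phi (s : Nat) : Fin 19 → F4 := fun q => dig s q

theorem Phi_xor (s t : Nat) : Phi (s ^^^ t) = Phi s + Phi t := by
  ext q; exact dig_xor _ _ _
theorem Phi_zero : Phi 0 = 0 := by ext q; exact dig_zero _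
theorem Phi_mw (s : Nat) : Phi (mw s) = w • Phi s := by
  ext q; exact dig_mw _ _ q.2

theorem vadd_self (x : Fin 19 → F4) : x + x = 0 := by ext q; exact add_self _
theorem veq_of_add {x y : Fin 19 → F4} (h : x + y = 0) : x = y := by
  ext q; exact eq_of_add (congrFun h q)

def ind (x : F4) : ℕ := by classical exact if x = 0 then 0 else 1
theorem ind_zero : ind 0 = 0 := by simp [ind]
theorem ind_ne {x : F4} (h : x ≠ 0) : ind x = 1 := by simp [ind, h]

theorem wt_eq (k s : Nat) : wt k s = ∑ q : Fin k, ind (dig s q) := by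
  induction k generalizing s with
  | zero => rfl
  | succ k ih =>
    rw [Fin.sum_univ_succ, wt, ih]
    congr 1
    · have := dig_ne s 0
      by_cases h : dig s 0 = 0
      · have h' : (s.testBit (2 * 0) || s.testBit (2 * 0 + 1)) = false := by
          rw [← Bool.not_eq_true, ← this]; simpa using h
        simp only [Fin.val_zero, h, ind_zero]
        rw [show (s.testBit 0 || s.testBit 1) = false from h']; rfl
      · have h' := this.1 h
        simp only [Fin.val_zero, ind_ne h]
        rw [show (s.testBit 0 || s.testBit 1) = true from h']; rfl
    · simp only [dig_shift, Fin.val_succ]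

theorem combo_of {ι : Type} (f : ι → F4) (g : ι → Nat) (P : Nat → Prop) (s0 : Nat) (hP : P s0)
    (l : List ι) : ∃ s, Combo P (l.map g) (l.map fun i => ind (f i)).sum s ∧
      Phi s = Phi s0 + (l.map fun i => f i • Phi (g i)).sum := by
  induction l with
  | nil => exact ⟨s0, Combo.base hP, by simp⟩
  | cons i l ih =>
    obtain ⟨s, hs, e⟩ := ih
    simp only [List.map_cons, List.sum_cons]
    rcases F4_cases (f i) with h | h | h | h
    · exact ⟨s, by rw [h, ind_zero, zero_add]; exact Combo.skip _ hs, by rw [e, h]; simp⟩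
    · refine ⟨s ^^^ g i, by rw [h, ind_ne one_ne_zero, add_comm]; exact Combo.t1 _ hs, ?_⟩
      rw [Phi_xor, e, h, one_smul]; abel
    · refine ⟨s ^^^ mw (g i), by rw [h, ind_ne w_ne, add_comm]; exact Combo.t2 _ hs, ?_⟩
      rw [Phi_xor, Phi_mw, e, h]; abel
    · refine ⟨s ^^^ (g i ^^^ mw (g i)), by
        rw [h, ind_ne w1_ne, add_comm]; exact Combo.t3 _ hs, ?_⟩
      rw [Phi_xor, Phi_xor, Phi_mw, e, h, add_smul, one_smul]; abel

theorem split_last {ι : Type} (f : ι → F4) (l : List ι) (h : ∃ i ∈ l, f i ≠ 0) :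
    ∃ pre i post, l = pre ++ i :: post ∧ f i ≠ 0 ∧ ∀ j ∈ post, f j = 0 := by
  induction l with
  | nil => simp at h
  | cons a l ih =>
    by_cases hl : ∃ i ∈ l, f i ≠ 0
    · obtain ⟨pre, i, post, e, h1, h2⟩ := ih hl
      exact ⟨a :: pre, i, post, by rw [e]; rfl, h1, h2⟩
    · push Not at hl
      refine ⟨[], a, l, rfl, ?_, hl⟩
      obtain ⟨i, hi, hf⟩ := h
      rcases List.mem_cons.1 hi with rfl | hi
      · exact hf
      · exact absurd (hl i hi) hf

/-! ### The code -/

/-- All columns of the right block. -/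
def VV : List Nat :=
  [1, 4, 16, 64, 256, 1024, 4096, 16384, 65536, 262144, 1048576, 4194304, 16777216, 67108864,
   268435456, 1073741824, 4294967296, 17179869184, 68719476736, 261036675901, 118486220511,
   79988484161, 235019579961, 216570968783, 142793021719, 71803831626, 266717988373, 72665033343,
   272366451393, 90807900463, 173219903361, 228061232914, 261651336803, 116553436071,
   69969296801, 266003113401, 133978645711]

def colU (j : Fin 37) : Nat := Ut.getD j 0
def colV (j : Fin 37) : Nat := VV.getD j 0
def rI (q : Fin 19) : Fin 37 := Fin.castAdd 18 q
def vI (q : Fin 18) : Fin 37 := Fin.natAdd 19 q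

theorem colU_list : (List.finRange 37).map colU = Ut := by decide +kernel
theorem colV_list : ((List.finRange 18).map vI).map colV = Vt := by decide +kernel
theorem colR (q : Fin 19) : colV (rI q) = 2 ^ (2 * (q : ℕ)) := by
  revert q; decide +kernel

theorem Phi_colR (q : Fin 19) : Phi (colV (rI q)) = Pi.single q 1 := by
  ext p
  rw [colR]
  show dig _ _ = _
  unfold dig
  rw [Nat.testBit_two_pow, Nat.testBit_two_pow]
  have h2 : decide (2 * (q : ℕ) = 2 * (p : ℕ) + 1) = false := by simp; omega
  rw [h2]
  by_cases h : p = q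
  · subst h; simp [bt]
  · have : ¬ (2 * (q : ℕ) = 2 * (p : ℕ)) := fun e => h (Fin.ext (by omega))
    simp [bt, this, h]

/-- The parity check equations. -/
def InC (x y : Fin 37 → F4) : Prop :=
  ∑ j, x j • Phi (colU j) + ∑ j, y j • Phi (colV j) = 0

theorem InC_smul {x y : Fin 37 → F4} (h : InC x y) (a : F4) :
    InC (fun j => a * x j) (fun j => a * y j) := by
  unfold InC at *
  simp only [mul_smul, ← Finset.smul_sum]
  rw [← smul_add, h, smul_zero]

theorem sumV {M : Type} [AddCommMonoid M] (f : Fin 37 → M) :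
    ∑ j, f j = ∑ q, f (rI q) + ∑ q, f (vI q) := Fin.sum_univ_add (a := 19) (b := 18) f

theorem Phi_sumR (y : Fin 37 → F4) :
    ∑ q, y (rI q) • Phi (colV (rI q)) = fun q => y (rI q) := by
  ext p
  simp only [Phi_colR, Finset.sum_apply, Pi.smul_apply, smul_eq_mul, Pi.single_apply]
  simp

theorem ab1 {M : Type} [AddCommMonoid M] (A B R : M) (h : A + (R + B) = 0) : A + B + R = 0 := by
  rw [← h, add_assoc, add_comm B R]

theorem red (x y : Fin 37 → F4) (h : InC x y) (s : ℕ) (hs : Phi s = ∑ j, x j • Phi (colU j) +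
      ∑ q, y (vI q) • Phi (colV (vI q))) : wt 19 s = ∑ q, ind (y (rI q)) := by
  have h1 : Phi s = fun q => y (rI q) := by
    apply veq_of_add
    rw [← Phi_sumR, hs]
    apply ab1
    unfold InC at h
    rw [sumV (fun j => y j • Phi (colV j))] at h
    exact h
  have h3 : ∀ q : Fin 19, dig s q = y (rI q) := fun q => congrFun h1 q
  rw [wt_eq]
  simp only [h3]

theorem core {x y : Fin 37 → F4} (hc : InC x y) (a k r : ℕ)
    (ha : a = ∑ j, ind (x j)) (hk : k = ∑ q, ind (y (vI q))) (hr : r = ∑ q, ind (y (rI q)))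
    (hne : ¬ (a = 0 ∧ k = 0 ∧ r = 0))
    (hak : (k ≤ 1 ∧ a ≤ 4) ∨ (k = 2 ∧ a ≤ 3) ∨ (k = 3 ∧ a ≤ 1)) : 9 ≤ a + k + r := by
  have indmul : ∀ b z : F4, b ≠ 0 → ind (b * z) = ind z := by
    intro b z hb
    by_cases hz : z = 0
    · rw [hz, mul_zero]
    · rw [ind_ne hz, ind_ne (mul_ne_zero hb hz)]
  have zsum : ∀ (l : List (Fin 37)) (x : Fin 37 → F4), (∀ j ∈ l, x j = 0) →
      (l.map fun i => ind (x i)).sum = 0 := by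
    intro l x h
    induction l with
    | nil => rfl
    | cons i l ih =>
      rw [List.map_cons, List.sum_cons, ih fun j hj => h j (List.mem_cons_of_mem _ hj),
        h i List.mem_cons_self, ind_zero]
  have zsum2 : ∀ (l : List (Fin 37)) (x : Fin 37 → F4) (g : Fin 37 → Nat), (∀ j ∈ l, x j = 0) →
      (l.map fun i => x i • Phi (g i)).sum = 0 := by
    intro l x g h
    induction l with
    | nil => rfl
    | cons i l ih =>
      rw [List.map_cons, List.sum_cons, ih fun j hj => h j (List.mem_cons_of_mem _ hj),
        h i List.mem_cons_self, zero_smul, zero_add]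
  rcases Nat.eq_zero_or_pos a with h0 | h0
  · -- nothing on the left
    have hx : ∀ j, x j = 0 := by
      intro j
      by_contra hj
      have := Finset.single_le_sum (f := fun j => ind (x j)) (fun i _ => Nat.zero_le _)
        (Finset.mem_univ j)
      rw [← ha] at this
      simp only [ind_ne hj] at this
      omega
    rcases Nat.eq_zero_or_pos k with hk0 | hk0
    · have h1 := red x y hc 0 ?_
      · rw [← hr] at h1
        have h2 : wt 19 0 = 0 := by decide
        omega
      · have hy : ∀ q, y (vI q) = 0 := by
          intro j
          by_contra hj
          have := Finset.single_le_sum (f := fun q => ind (y (vI q))) (fun i _ => Nat.zero_le _)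
            (Finset.mem_univ j)
          rw [← hk] at this
          simp only [ind_ne hj] at this
          omega
        simp [hx, hy, Phi_zero]
    · have hex : ∃ i ∈ (List.finRange 18).map vI, y i ≠ 0 := by
        by_contra hcon
        push Not at hcon
        have := zsum _ y hcon
        rw [List.map_map] at this
        rw [Fin.sum_univ_def] at hk
        simp only [Function.comp_def] at this
        omega
      obtain ⟨pre, i, post, e, hi, hpost⟩ := split_last y _ hex
      set y' : Fin 37 → F4 := fun j => (y i)⁻¹ * y j with hy'
      set x' : Fin 37 → F4 := fun j => (y i)⁻¹ * x j with hx'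
      have hc' : InC x' y' := InC_smul hc _
      have hi' : y' i = 1 := inv_mul_cancel₀ hi
      have hpost' : ∀ j ∈ post, y' j = 0 := fun j hj => by
        simp only [hy', hpost j hj, mul_zero]
      have hxz : ∀ j, x' j = 0 := fun j => by simp only [hx', hx j, mul_zero]
      have hk' : k = ∑ q, ind (y' (vI q)) := by
        rw [hk]; exact Finset.sum_congr rfl fun q _ => (indmul _ _ (inv_ne_zero hi)).symm
      have hr' : r = ∑ q, ind (y' (rI q)) := by
        rw [hr]; exact Finset.sum_congr rfl fun q _ => (indmul _ _ (inv_ne_zero hi)).symm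
      obtain ⟨s, hs, es⟩ := combo_of y' colV (fun s => s = 0) 0 rfl pre.reverse
      have hcnt : (pre.reverse.map fun i => ind (y' i)).sum + 1 = k := by
        rw [hk', Fin.sum_univ_def, show (fun q => ind (y' (vI q))) = (fun i => ind (y' i)) ∘ vI from rfl,
          ← List.map_map, e, List.map_append, List.map_cons, List.sum_append, List.sum_cons,
          zsum post y' hpost', hi', ind_ne one_ne_zero, List.map_reverse, List.sum_reverse]
      have hV : Vt = pre.map colV ++ colV i :: post.map colV := by
        rw [← colV_list, e, List.map_append, List.map_cons]
      rw [List.map_reverse] at hs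
      have hm := main_V hV hs (by omega)
      have := red x' y' hc' (s ^^^ colV i) ?_
      · rw [← hr'] at this
        omega
      · simp only [hxz, zero_smul, Finset.sum_const_zero, zero_add]
        rw [Fin.sum_univ_def, show (fun q => y' (vI q) • Phi (colV (vI q))) =
          (fun i => y' i • Phi (colV i)) ∘ vI from rfl,
          ← List.map_map, e, List.map_append, List.map_cons, List.sum_append, List.sum_cons,
          zsum2 post y' colV hpost', hi', Phi_xor, es, Phi_zero, List.map_reverse,
          List.sum_reverse, one_smul]
        abel
  · have hex : ∃ i ∈ List.finRange 37, x i ≠ 0 := by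
      by_contra hcon
      push Not at hcon
      have := zsum _ x hcon
      rw [Fin.sum_univ_def] at ha
      omega
    obtain ⟨pre, i, post, e, hi, hpost⟩ := split_last x _ hex
    set y' : Fin 37 → F4 := fun j => (x i)⁻¹ * y j with hy'
    set x' : Fin 37 → F4 := fun j => (x i)⁻¹ * x j with hx'
    have hc' : InC x' y' := InC_smul hc _
    have hi' : x' i = 1 := inv_mul_cancel₀ hi
    have hpost' : ∀ j ∈ post, x' j = 0 := fun j hj => by
      simp only [hx', hpost j hj, mul_zero]
    have ha' : a = ∑ j, ind (x' j) := by
      rw [ha]; exact Finset.sum_congr rfl fun q _ => (indmul _ _ (inv_ne_zero hi)).symm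
    have hk' : k = ∑ q, ind (y' (vI q)) := by
      rw [hk]; exact Finset.sum_congr rfl fun q _ => (indmul _ _ (inv_ne_zero hi)).symm
    have hr' : r = ∑ q, ind (y' (rI q)) := by
      rw [hr]; exact Finset.sum_congr rfl fun q _ => (indmul _ _ (inv_ne_zero hi)).symm
    obtain ⟨s0, hs0, es0⟩ := combo_of y' colV (fun s => s = 0) 0 rfl ((List.finRange 18).map vI).reverse
    have hk2 : ((((List.finRange 18).map vI).reverse).map fun i => ind (y' i)).sum = k := by
      rw [hk', Fin.sum_univ_def, List.map_reverse, List.sum_reverse, List.map_map]; rfl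
    rw [hk2, List.map_reverse, colV_list] at hs0
    obtain ⟨s, hs, es⟩ := combo_of x' colU (fun s => s = s0) s0 rfl pre.reverse
    have hcnt : (pre.reverse.map fun i => ind (x' i)).sum + 1 = a := by
      rw [ha', Fin.sum_univ_def, e, List.map_append, List.map_cons, List.sum_append, List.sum_cons,
        zsum post x' hpost', hi', ind_ne one_ne_zero, List.map_reverse, List.sum_reverse]
    have hU : Ut = pre.map colU ++ colU i :: post.map colU := by
      rw [← colU_list, e, List.map_append, List.map_cons]
    rw [List.map_reverse] at hs
    have hm := main_U hs0 hU hs (by omega)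
    have := red x' y' hc' (s ^^^ colU i) ?_
    · rw [← hr'] at this
      omega
    · rw [Fin.sum_univ_def (fun j => x' j • Phi (colU j)), e, List.map_append, List.map_cons,
        List.sum_append, List.sum_cons, zsum2 post x' colU hpost', hi', Phi_xor, es, es0, Phi_zero,
        Fin.sum_univ_def, List.map_reverse, List.sum_reverse, List.map_reverse, List.sum_reverse,
        List.map_map, one_smul]
      simp only [Function.comp_def]
      abel


/-! ### Automorphisms -/

/-- The multiple of `h` by the lowest base-4 digit of `s`. -/
def mulc (s h : Nat) : Nat :=
  (bif s.testBit 0 then h else 0) ^^^ (bif s.testBit 1 then mw h else 0)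

theorem Phi_mulc (s h : Nat) : Phi (mulc s h) = dig s 0 • Phi h := by
  unfold mulc dig
  rw [Phi_xor]
  cases s.testBit 0 <;> cases s.testBit 1 <;>
    simp [bt, Phi_zero, Phi_mw, add_smul]

/-- The combination of the entries of `l` with the base-4 digits of `s`. -/
def comb (s : Nat) : List Nat → Nat
  | [] => 0
  | h :: l => mulc s h ^^^ comb (s >>> 2) l

theorem Phi_comb (n s : Nat) (e : Fin n → Nat) :
    Phi (comb s (List.ofFn e)) = ∑ q : Fin n, dig s q • Phi (e q) := by
  induction n generalizing s with
  | zero => simp [comb, Phi_zero]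
  | succ n ih =>
    rw [List.ofFn_succ, comb, Phi_xor, Phi_mulc, ih, Fin.sum_univ_succ]
    simp only [dig_shift, Fin.val_succ, Fin.val_zero]

theorem InC_map {x y : Fin 37 → F4} (h : InC x y) (e : Fin 19 → Nat) (fU fV : Fin 37 → Nat)
    (hU : ∀ j, fU j = comb (colU j) (List.ofFn e)) (hV : ∀ j, fV j = comb (colV j) (List.ofFn e)) :
    ∑ j, x j • Phi (fU j) + ∑ j, y j • Phi (fV j) = 0 := by
  have key : ∀ s, Phi (comb s (List.ofFn e)) =
      Fintype.linearCombination F4 (fun q => Phi (e q)) (Phi s) := by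
    intro s
    rw [Phi_comb, Fintype.linearCombination_apply]
    rfl
  simp only [hU, hV, key, ← map_smul, ← map_sum, ← map_add]
  unfold InC at h
  rw [h, map_zero]

theorem sh_U : ∀ j : Fin 37, colU (j + 1) = comb (colU j) (List.ofFn fun q => colV (rI q + 1)) := by
  decide +kernel
theorem sh_V : ∀ j : Fin 37, colV (j + 1) = comb (colV j) (List.ofFn fun q => colV (rI q + 1)) := by
  decide +kernel
theorem sw_U : ∀ j : Fin 37, colV (-j) = comb (colU j) (List.ofFn fun q => colU (-rI q)) := by
  decide +kernel
theorem sw_V : ∀ j : Fin 37, colU (-j) = comb (colV j) (List.ofFn fun q => colU (-rI q)) := by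
  decide +kernel

theorem InC_shift1 {x y : Fin 37 → F4} (h : InC x y) :
    InC (fun j => x (j - 1)) (fun j => y (j - 1)) := by
  have h1 := InC_map h _ _ _ sh_U sh_V
  unfold InC
  rw [← Equiv.sum_comp (Equiv.addRight (1 : Fin 37)) (fun j => x (j - 1) • Phi (colU j)),
    ← Equiv.sum_comp (Equiv.addRight (1 : Fin 37)) (fun j => y (j - 1) • Phi (colV j))]
  simp only [Equiv.coe_addRight, add_sub_cancel_right]
  exact h1

theorem InC_shift {x y : Fin 37 → F4} (h : InC x y) (n : ℕ) :
    InC (fun j => x (j - n • (1 : Fin 37))) (fun j => y (j - n • (1 : Fin 37))) := by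
  induction n with
  | zero => simpa using h
  | succ n ih =>
    have := InC_shift1 ih
    simp only [sub_sub] at this
    simp only [succ_nsmul, add_comm (n • (1 : Fin 37)) 1]
    exact this

theorem val_smul_one : ∀ t : Fin 37, (t : ℕ) • (1 : Fin 37) = t := by decide +kernel

theorem InC_swap {x y : Fin 37 → F4} (h : InC x y) :
    InC (fun j => y (-j)) (fun j => x (-j)) := by
  have h1 := InC_map h _ _ _ sw_U sw_V
  unfold InC
  rw [← Equiv.sum_comp (Equiv.neg (Fin 37)) (fun j => y (-j) • Phi (colU j)),
    ← Equiv.sum_comp (Equiv.neg (Fin 37)) (fun j => x (-j) • Phi (colV j))]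
  simp only [Equiv.neg_apply, neg_neg]
  rw [add_comm]
  exact h1

theorem pigeon (f : Fin 37 → ℕ) :
    ∃ t : Fin 37, 19 * ∑ j, f j ≤ 37 * ∑ q, f (rI q - t) := by
  by_contra hcon
  push Not at hcon
  have h1 : ∑ t : Fin 37, 37 * ∑ q, f (rI q - t) < ∑ _t : Fin 37, 19 * ∑ j, f j :=
    Finset.sum_lt_sum_of_nonempty Finset.univ_nonempty fun t _ => hcon t
  rw [← Finset.mul_sum, Finset.sum_comm] at h1
  have h2 : ∀ q : Fin 19, ∑ t : Fin 37, f (rI q - t) = ∑ j, f j := fun q =>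
    Equiv.sum_comp (Equiv.subLeft (rI q)) f
  simp only [h2, Finset.sum_const, Finset.card_univ, Fintype.card_fin, smul_eq_mul] at h1
  omega

theorem dist_aux {x y : Fin 37 → F4} (h : InC x y) (h0 : ∑ j, ind (x j) + ∑ j, ind (y j) ≠ 0)
    (hab : ∑ j, ind (x j) ≤ ∑ j, ind (y j)) : 9 ≤ ∑ j, ind (x j) + ∑ j, ind (y j) := by
  obtain ⟨t, ht⟩ := pigeon (fun j => ind (y j))
  have h1 := InC_shift h t
  simp only [val_smul_one] at h1
  have ea : ∑ j, ind (x (j - t)) = ∑ j, ind (x j) :=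
    Equiv.sum_comp (Equiv.subRight t) fun j => ind (x j)
  have eb : ∑ j, ind (y (j - t)) = ∑ j, ind (y j) :=
    Equiv.sum_comp (Equiv.subRight t) fun j => ind (y j)
  rw [sumV] at eb
  by_contra hlt
  have := core h1 _ _ _ rfl rfl rfl (by omega) (by omega)
  omega

theorem dist {x y : Fin 37 → F4} (h : InC x y) (h0 : ∑ j, ind (x j) + ∑ j, ind (y j) ≠ 0) :
    9 ≤ ∑ j, ind (x j) + ∑ j, ind (y j) := by
  rcases le_total (∑ j, ind (x j)) (∑ j, ind (y j)) with hab | hab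
  · exact dist_aux h h0 hab
  · have ea : ∑ j, ind (x (-j)) = ∑ j, ind (x j) :=
      Equiv.sum_comp (Equiv.neg _) fun j => ind (x j)
    have eb : ∑ j, ind (y (-j)) = ∑ j, ind (y j) :=
      Equiv.sum_comp (Equiv.neg _) fun j => ind (y j)
    have := dist_aux (InC_swap h) (by omega) (by omega)
    omega

/-! ### The code as a submodule -/

def col (i : Fin 74) : Nat := Fin.append colU colV i
def RR (q : Fin 19) : Fin 74 := Fin.natAdd 37 (rI q)

theorem col_RR (q : Fin 19) : Phi (col (RR q)) = Pi.single q 1 := by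
  rw [← Phi_colR]
  unfold col RR
  rw [Fin.append_right]

/-- The parity check map. -/
def HH : (Fin 74 → F4) →ₗ[F4] (Fin 19 → F4) :=
  Fintype.linearCombination F4 (fun i => Phi (col i))

theorem HH_apply (u : Fin 74 → F4) : HH u = ∑ i, u i • Phi (col i) :=
  Fintype.linearCombination_apply _ _ _

theorem HH_single (i : Fin 74) : HH (Pi.single i 1) = Phi (col i) := by
  unfold HH
  rw [Fintype.linearCombination_apply_single, one_smul]

theorem sum74 {M : Type} [AddCommMonoid M] (f : Fin 74 → M) :
    ∑ i, f i = ∑ j : Fin 37, f (Fin.castAdd 37 j) + ∑ j : Fin 37, f (Fin.natAdd 37 j) :=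
  Fin.sum_univ_add (a := 37) (b := 37) f

theorem HH_InC {u : Fin 74 → F4} (h : HH u = 0) :
    InC (fun j => u (Fin.castAdd 37 j)) (fun j => u (Fin.natAdd 37 j)) := by
  rw [HH_apply, sum74] at h
  unfold InC
  have e1 : ∀ j : Fin 37, col (Fin.castAdd 37 j) = colU j := fun j => Fin.append_left _ _ j
  have e2 : ∀ j : Fin 37, col (Fin.natAdd 37 j) = colV j := fun j => Fin.append_right _ _ j
  simp only [e1, e2] at h
  exact h

theorem hammingWt_eq {m : ℕ} (u : Fin m → F4) : hammingWt u = ∑ i, ind (u i) := by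
  classical
  unfold hammingWt
  rw [Nat.card_eq_fintype_card, Fintype.card_subtype, Finset.card_filter]
  refine Finset.sum_congr rfl fun i _ => ?_
  by_cases h : u i = 0
  · simp [h, ind_zero]
  · simp [h, ind_ne h]

theorem min_dist {u : Fin 74 → F4} (h : HH u = 0) (hu : u ≠ 0) : 9 ≤ hammingWt u := by
  have h1 := dist (HH_InC h)
  rw [← sum74 (fun i => ind (u i)), ← hammingWt_eq] at h1
  apply h1
  intro h2
  apply hu
  funext i
  by_contra hi
  rw [hammingWt_eq] at h2
  have := Finset.single_le_sum (f := fun j => ind (u j)) (fun i _ => Nat.zero_le _)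
    (Finset.mem_univ i)
  rw [h2] at this
  simp only [ind_ne hi] at this
  omega

theorem HH_comb (z : Fin 19 → F4) : HH (∑ q, z q • Pi.single (RR q) 1) = z := by
  simp only [map_sum, map_smul, HH_single, col_RR]
  ext p
  simp [Finset.sum_apply, Pi.single_apply]

theorem HH_surj : Function.Surjective HH := fun z => ⟨_, HH_comb z⟩

theorem HH_finrank : Module.finrank F4 ↥(LinearMap.ker HH) = 55 := by
  have h := LinearMap.finrank_range_add_finrank_ker HH
  rw [LinearMap.range_eq_top.2 HH_surj, finrank_top, Module.finrank_fin_fun,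
    Module.finrank_fin_fun] at h
  omega

theorem wordW_comb : comb wordW (List.ofFn col) = 0 := by decide +kernel
theorem wordW_wt : wt 74 wordW = 9 := by decide +kernel

theorem exists_word : ∃ u : Fin 74 → F4, HH u = 0 ∧ u ≠ 0 ∧ hammingWt u = 9 := by
  have hw : hammingWt (fun i : Fin 74 => dig wordW i) = 9 := by
    rw [hammingWt_eq, ← wt_eq, wordW_wt]
  refine ⟨fun i => dig wordW i, ?_, ?_, hw⟩
  · rw [HH_apply, ← Phi_comb, wordW_comb, Phi_zero]
  · intro h
    rw [h, hammingWt_eq] at hw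
    simp [ind_zero] at hw

/-! ### The Hermitian dual -/

def mulcj (q h : Nat) : Nat :=
  (bif (h.testBit (2 * q) ^^ h.testBit (2 * q + 1)) then h else 0) ^^^
    (bif h.testBit (2 * q + 1) then mw h else 0)

theorem Phi_mulcj (q h : Nat) : Phi (mulcj q h) = (dig h q) ^ 2 • Phi h := by
  have e : (dig h q) ^ 2 = bt (h.testBit (2 * q) ^^ h.testBit (2 * q + 1)) +
      bt (h.testBit (2 * q + 1)) * w := by
    unfold dig
    rw [add_pow_char _ _ 2, mul_pow, w_sq]
    cases h.testBit (2 * q) <;> cases h.testBit (2 * q + 1) <;> simp [bt] <;>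
      first | ring1 | linear_combination two0
  rw [e]
  unfold mulcj
  rw [Phi_xor]
  cases (h.testBit (2 * q) ^^ h.testBit (2 * q + 1)) <;> cases h.testBit (2 * q + 1) <;>
    simp [bt, Phi_zero, Phi_mw, add_smul]

def sc (q : Nat) : List Nat → Nat
  | [] => 0
  | h :: l => mulcj q h ^^^ sc q l

theorem Phi_sc (n q : Nat) (e : Fin n → Nat) :
    Phi (sc q (List.ofFn e)) = ∑ i : Fin n, (dig (e i) q) ^ 2 • Phi (e i) := by
  induction n with
  | zero => simp [sc, Phi_zero]
  | succ n ih => rw [List.ofFn_succ, sc, Phi_xor, Phi_mulcj, ih, Fin.sum_univ_succ]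

theorem sc_col : ∀ q : Fin 19, sc q (List.ofFn col) = 0 := by decide +kernel

theorem self_orth (p q : Fin 19) : ∑ i, (dig (col i) p) ^ 2 * dig (col i) q = 0 := by
  have h := Phi_sc 74 p col
  rw [sc_col, Phi_zero] at h
  have h2 := congrFun h q
  rw [Finset.sum_apply] at h2
  exact h2.symm

theorem hermInner_lc {m : ℕ} (u v : Fin m → F4) :
    hermInner u v = Fintype.linearCombination F4 (fun i => (v i) ^ 2) u := by
  rw [Fintype.linearCombination_apply]
  rfl

theorem test_word (j : Fin 74) :
    HH (Pi.single j 1 + ∑ q, Phi (col j) q • Pi.single (RR q) 1) = 0 := by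
  rw [map_add, HH_comb, HH_single, vadd_self]

theorem dual_rel {v : Fin 74 → F4} (hv : v ∈ hermDual (LinearMap.ker HH)) (j : Fin 74) :
    (v j) ^ 2 = ∑ q : Fin 19, dig (col j) q * (v (RR q)) ^ 2 := by
  have h := hv _ (LinearMap.mem_ker.2 (test_word j))
  rw [hermInner_lc] at h
  simp only [map_add, map_sum, map_smul, Fintype.linearCombination_apply_single,
    smul_eq_mul, one_mul] at h
  exact eq_of_add h

theorem dual_le : hermDual (LinearMap.ker HH) ≤ LinearMap.ker HH := by
  intro v hv
  rw [LinearMap.mem_ker, HH_apply]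
  ext p
  rw [Finset.sum_apply]
  show ∑ i, v i * dig (col i) p = 0
  have h2 : (∑ i, v i * dig (col i) p) ^ 2 = 0 := by
    rw [sum_pow_char 2]
    have : ∀ i, (v i * dig (col i) p) ^ 2 =
        ∑ q : Fin 19, (v (RR q)) ^ 2 * ((dig (col i) p) ^ 2 * dig (col i) q) := by
      intro i
      rw [mul_pow, dual_rel hv i, Finset.sum_mul]
      exact Finset.sum_congr rfl fun q _ => by ring
    simp only [this]
    rw [Finset.sum_comm]
    simp only [← Finset.mul_sum, self_orth, mul_zero, Finset.sum_const_zero]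
  exact pow_eq_zero_iff (two_ne_zero) |>.1 h2

end QC74

/-- There exists a Hermitian dual-containing `[74, 55, 9]₄` code. -/
theorem exists_dual_containing_74_55_9 :
    ∃ Ccode : Submodule F4 (Fin 74 → F4),
      Module.finrank F4 ↥Ccode = 55 ∧
      (∀ u ∈ Ccode, u ≠ 0 → 9 ≤ hammingWt u) ∧
      (∃ u ∈ Ccode, u ≠ 0 ∧ hammingWt u = 9) ∧
      hermDual Ccode ≤ Ccode := by
  refine ⟨LinearMap.ker QC74.HH, QC74.HH_finrank, ?_, ?_, QC74.dual_le⟩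
  · intro u hu h0
    exact QC74.min_dist (LinearMap.mem_ker.1 hu) h0
  · obtain ⟨u, h1, h2, h3⟩ := QC74.exists_word
    exact ⟨u, LinearMap.mem_ker.2 h1, h2, h3⟩

end
end

section
/- There exists an F₄-linear code C ⊆ F₄^{78} of F₄-dimension 59 whose minimum Hamming distance is 9 and which contains its Hermitian dual: C^{⊥h} ⊆ C. -/
open Polynomial

set_option synthInstance.maxHeartbeats 1000000
set_option maxHeartbeats 1000000

noncomputable section

namespace QC78

def tb (x j : Nat) : Bool := Nat.beq (Nat.land (Nat.shiftRight x j) 1) 1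

def cnd {α : Type} (p : Bool) (a b : α) : α := @Bool.rec (fun _ => α) b a p

def scal (x : Nat) : Nat :=
  Nat.lor (Nat.mod (Nat.shiftRight x 78) (Nat.pow 2 78)) (Nat.shiftLeft (Nat.mod (Nat.xor x (Nat.shiftRight x 78)) (Nat.pow 2 78)) 78)

def dbl (l : List Nat) : List Nat :=
  @List.rec Nat (fun _ => List Nat) [] (fun g _ ih => g :: scal g :: ih) l

/-- the word with code `l` in the coset of `w` : code bits are read from bit `k` downwards -/
def word (bs : List Nat) : Nat → Nat → Nat :=
  @List.rec Nat (fun _ => Nat → Nat → Nat) (fun w _ => w)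
    (fun b t ih w l => ih (cnd (tb l t.length) (Nat.xor w b) w) l) bs

/-- bit-sliced lane of coordinate `j` : for a list of length `k` this has `2^k` bits -/
def lane (j : Nat) (bs : List Nat) : Nat :=
  @List.rec Nat (fun _ => Nat) 0
    (fun b t v => Nat.lor v (Nat.shiftLeft
      (cnd (tb b j) (Nat.xor v (Nat.sub (Nat.pow 2 (Nat.pow 2 t.length)) 1)) v)
      (Nat.pow 2 t.length))) bs

structure Ent where
  a : Nat
  b : Nat
  c : Nat
  d : Nat

def mkEnt (o lo hi : Nat) : Ent :=
  ⟨Nat.lor lo hi, Nat.lor (Nat.xor lo o) hi, Nat.lor lo (Nat.xor hi o),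
    Nat.lor (Nat.xor lo o) (Nat.xor hi o)⟩

/-- table entries for hexad `c + 13 k`, `k < 6` -/
structure Hex where
  a : Ent
  b : Ent
  c : Ent
  d : Ent
  e : Ent
  f : Ent

def table (o : Nat) (bs : List Nat) (n : Nat) : Nat → List Hex :=
  (fun g => @Nat.rec (fun _ => Nat → List Hex) (fun _ => [])
    (fun _ ih c => ⟨g c, g (Nat.add c 13), g (Nat.add c 26), g (Nat.add c 39), g (Nat.add c 52),
      g (Nat.add c 65)⟩ :: ih (Nat.add c 1)) n)
  (fun c => mkEnt o (lane c bs) (lane (Nat.add 78 c) bs))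

/-- continuation-passing selection -/
def pick {α : Type} (e : Ent) (w c : Nat) (k : Nat → α) : α :=
  @Ent.rec (fun _ => α) (fun x y z t => cnd (tb w (Nat.add 78 c)) (cnd (tb w c) (k t) (k z))
    (cnd (tb w c) (k y) (k x))) e

def carry (a b c : Nat) : Nat := Nat.xor (Nat.land a b) (Nat.land (Nat.xor a b) c)
def par (a b c : Nat) : Nat := Nat.xor (Nat.xor a b) c

def hx2 {α : Type} (s1 c1 s2 c2 : Nat) (k : Nat → Nat → Nat → α) : α :=
  (fun t => k (Nat.xor s1 s2) (par c1 c2 t) (carry c1 c2 t)) (Nat.land s1 s2)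

def hexS (w : Nat) {α : Type} (h : Hex) (j : Nat) (k : Nat → Nat → Nat → α) : α :=
  @Hex.rec (fun _ => α) (fun a b c d e f =>
    pick a w j (fun a => pick b w (Nat.add j 13) (fun b => pick c w (Nat.add j 26) (fun c =>
    pick d w (Nat.add j 39) (fun d => pick e w (Nat.add j 52) (fun e => pick f w (Nat.add j 65) (fun f =>
      hx2 (par a b c) (carry a b c) (par d e f) (carry d e f) k)))))))  h

def inds {α : Type} (w : Nat) (t : List Hex) : Nat → List Nat → List Nat → List Nat → (List Nat → List Nat → List Nat → α) → α :=
  @List.rec Hex (fun _ => Nat → List Nat → List Nat → List Nat → (List Nat → List Nat → List Nat → α) → α)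
    (fun _ ss us qs k => k ss us qs)
    (fun h _ ih j ss us qs k => hexS w h j (fun s u q => ih (Nat.add j 1) (s :: ss) (u :: us) (q :: qs) k)) t

def csa (l : List Nat) : Bool → Nat → Nat → List Nat → (Nat → List Nat → List Nat) → List Nat :=
  @List.rec Nat (fun _ => Bool → Nat → Nat → List Nat → (Nat → List Nat → List Nat) → List Nat)
    (fun pend acc a cs k =>
      cnd pend (k (Nat.xor acc a) (Nat.land acc a :: cs)) (k acc cs))
    (fun b _ ih pend acc a cs k =>
      cnd pend
        (ih false (Nat.xor (Nat.xor a b) acc) 0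
          (Nat.xor (Nat.land a b) (Nat.land (Nat.xor a b) acc) :: cs) k)
        (ih true acc b cs k)) l

/-- one compression step: `es` are the extra inputs of twice the weight -/
def lev (l es : List Nat) (k : Nat → List Nat → List Nat) : List Nat :=
  @List.rec Nat (fun _ => List Nat) (k 0 es) (fun a r _ => csa r false a 0 es k) l

def planes (n : Nat) : List Nat → List Nat → List Nat :=
  @Nat.rec (fun _ => List Nat → List Nat → List Nat) (fun _ acc => acc)
    (fun _ ih l acc => lev l [] (fun b cs => ih cs (b :: acc))) n

def wplanes (w : Nat) (t : List Hex) : List Nat :=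
  inds w t 0 [] [] [] (fun ss us qs => lev ss us (fun b cs => lev cs qs (fun b1 cs =>
    planes 5 cs [b1, b])))

def mapl {α β : Type} (f : α → β) (l : List α) : List β :=
  @List.rec α (fun _ => List β) [] (fun a _ ih => f a :: ih) l

/-- alternating mask with fields of width `w`, `2^e` bits long -/
def msk (e w : Nat) : Nat :=
  Nat.div (Nat.sub (Nat.pow 2 (Nat.pow 2 e)) 1) (Nat.add (Nat.pow 2 w) 1)

def swar (e w x : Nat) : Nat :=
  Nat.add (Nat.land x (msk e w)) (Nat.land (Nat.shiftRight x w) (msk e w))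

/-- number of ones among the low `2^e` bits -/
def pop (e x : Nat) : Nat :=
  Nat.mod (swar e 16 (swar e 8 (swar e 4 (swar e 2 (swar e 1 x))))) 4294967295

def popP (e : Nat) (ps : List Nat) : Nat :=
  @List.rec Nat (fun _ => Nat) 0 (fun p _ s => Nat.add (pop e p) (Nat.mul 2 s)) ps

structure Item where
  m : Nat
  bs : List Nat

def split0 (l : List Item) : List Item :=
  @List.rec Item (fun _ => List Item) []
    (fun i _ ih => @Item.rec (fun _ => List Item)
      (fun m bs => @List.rec Nat (fun _ => List Item) ih
        (fun b bs _ => (fun v => cnd (Nat.beq v 0) ih (⟨v, bs⟩ :: ih)) (Nat.xor m (Nat.land m b))) bs) i) l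

def split1 (l : List Item) : List Item :=
  @List.rec Item (fun _ => List Item) []
    (fun i _ ih => @Item.rec (fun _ => List Item)
      (fun m bs => @List.rec Nat (fun _ => List Item) ih
        (fun b bs _ => (fun v => cnd (Nat.beq v 0) ih (⟨v, bs⟩ :: ih)) (Nat.land m b)) bs) i) l

def ff (w : Nat) : Nat :=
  Nat.pow (Nat.add (Nat.sub 234 (Nat.mul 4 w)) (Nat.sub (Nat.mul 4 w) 234)) 8

def revA (l : List Nat) : List Nat → List Nat :=
  @List.rec Nat (fun _ => List Nat → List Nat) (fun a => a) (fun x _ ih a => ih (x :: a)) l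

def hist (K : Nat) (n : Nat) : Nat → List Item → Nat :=
  @Nat.rec (fun _ => Nat → List Item → Nat)
    (fun w l => @List.rec Item (fun _ => Nat) 0 (fun _ _ _ =>
      Nat.mul (ff w) (popP K (revA (planes 7 (mapl Item.m l) []) []))) l)
    (fun _ ih w l => @List.rec Item (fun _ => Nat) 0 (fun _ _ _ =>
      Nat.add (ih (Nat.mul 2 w) (split0 l)) (ih (Nat.add (Nat.mul 2 w) 1) (split1 l))) l) n

def csum (K : Nat) (o : Nat) (t : List Hex) (ws : List Nat) : Nat :=
  hist K 7 0 (mapl (fun w => ⟨o, wplanes w t⟩) ws)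



/-! ### correctness of the bit-sliced computation -/

theorem tb_eq (x j : ℕ) : tb x j = x.testBit j := by
  have h : x.testBit j = (1 &&& (x >>> j) != 0) := rfl
  rw [h]
  change Nat.beq ((x >>> j) &&& 1) 1 = _
  rw [Nat.and_comm 1, Nat.and_one_is_mod]
  rcases Nat.mod_two_eq_zero_or_one (x >>> j) with h | h <;> rw [h] <;> rfl

theorem cnd_eq {α : Type} (p : Bool) (a b : α) : cnd p a b = if p then a else b := by
  cases p <;> rfl

theorem cnd_app {α β : Type} (f : α → β) (p : Bool) (a b : α) : f (cnd p a b) = cnd p (f a) (f b) := by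
  cases p <;> rfl

theorem word_nil (w l : ℕ) : word [] w l = w := rfl
theorem word_cons (b : ℕ) (t : List ℕ) (w l : ℕ) :
    word (b :: t) w l = word t (if l.testBit t.length then w ^^^ b else w) l := by
  rw [← tb_eq, ← cnd_eq]; rfl

/-- sum over the coset `w + span bs` -/
def SS (bs : List ℕ) (g : ℕ → ℕ) : ℕ → ℕ :=
  match bs with
  | [] => g
  | b :: bs => fun w => SS bs g w + SS bs g (w ^^^ b)

theorem word_xor (bs : List ℕ) (w v l : ℕ) : word bs (w ^^^ v) l = w ^^^ word bs v l := by
  induction bs generalizing v with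
  | nil => rfl
  | cons b t ih =>
    rw [word_cons, word_cons]
    split_ifs
    · rw [Nat.xor_assoc, ih]
    · rw [ih]

theorem word_zero (bs : List ℕ) (w l : ℕ) : word bs w l = w ^^^ word bs 0 l := by
  rw [← word_xor, Nat.xor_zero]

theorem word_low (bs : List ℕ) (w l l' : ℕ) (h : ∀ i < bs.length, l.testBit i = l'.testBit i) :
    word bs w l = word bs w l' := by
  induction bs generalizing w with
  | nil => rfl
  | cons b t ih =>
    rw [word_cons, word_cons, h _ (by simp)]
    exact ih _ (fun i hi => h i (by simp; omega))

theorem word_add (bs : List ℕ) (w l k : ℕ) (h : bs.length ≤ k) : word bs w (2 ^ k + l) = word bs w l := by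
  apply word_low
  intro i hi
  rw [Nat.testBit_two_pow_add_gt (by omega)]

theorem SS_eq (bs : List ℕ) (g : ℕ → ℕ) (w : ℕ) :
    SS bs g w = ∑ l ∈ Finset.range (2 ^ bs.length), g (word bs w l) := by
  induction bs generalizing w with
  | nil => simp [SS, word_nil]
  | cons b t ih =>
    have h2 : 2 ^ (b :: t).length = 2 ^ t.length + 2 ^ t.length := by
      rw [List.length_cons, pow_succ]; ring
    rw [h2, Finset.sum_range_add]
    simp only [SS]
    rw [ih, ih]
    congr 1
    · apply Finset.sum_congr rfl
      intro l hl
      rw [word_cons, Nat.testBit_lt_two_pow (Finset.mem_range.1 hl)]; rfl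
    · apply Finset.sum_congr rfl
      intro l hl
      rw [word_cons, Nat.testBit_two_pow_add_eq, Nat.testBit_lt_two_pow (Finset.mem_range.1 hl),
        word_add _ _ _ _ le_rfl]; rfl

theorem lane_cons (j b : ℕ) (t : List ℕ) : lane j (b :: t) =
    lane j t ||| ((if b.testBit j then lane j t ^^^ (2 ^ 2 ^ t.length - 1) else lane j t) <<< 2 ^ t.length) := by
  rw [← tb_eq, ← cnd_eq]; rfl

theorem lane_lt (j : ℕ) (bs : List ℕ) : lane j bs < 2 ^ 2 ^ bs.length := by
  induction bs with
  | nil => exact Nat.two_pow_pos _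
  | cons b t ih =>
    rw [lane_cons]
    have e : 2 ^ 2 ^ (b :: t).length = 2 ^ 2 ^ t.length * 2 ^ 2 ^ t.length := by
      rw [List.length_cons, pow_succ, ← pow_add]; ring_nf
    apply Nat.or_lt_two_pow
    · exact lt_of_lt_of_le ih (Nat.pow_le_pow_right (by norm_num) (Nat.pow_le_pow_right (by norm_num) (by simp)))
    · rw [Nat.shiftLeft_eq, e]
      apply Nat.mul_lt_mul_of_pos_right _ (by positivity)
      split_ifs
      · exact Nat.xor_lt_two_pow ih (by have := Nat.two_pow_pos (2 ^ t.length); omega)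
      · exact ih

theorem lane_testBit (j : ℕ) (bs : List ℕ) (l : ℕ) (hl : l < 2 ^ bs.length) :
    (lane j bs).testBit l = (word bs 0 l).testBit j := by
  induction bs generalizing l with
  | nil => simp [word_nil]; exact Nat.zero_testBit l
  | cons b t ih =>
    rw [lane_cons, word_cons, Nat.testBit_or, Nat.testBit_shiftLeft]
    by_cases h : l < 2 ^ t.length
    · rw [Nat.testBit_lt_two_pow h, ih l h]
      have : ¬ (l ≥ 2 ^ t.length) := by omega
      simp [this]
    · obtain ⟨m, rfl⟩ := Nat.exists_eq_add_of_le (not_lt.1 h)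
      have hm : m < 2 ^ t.length := by rw [List.length_cons, pow_succ] at hl; omega
      have h1 : (lane j t).testBit (2 ^ t.length + m) = false :=
        Nat.testBit_lt_two_pow (lt_of_lt_of_le (lane_lt j t) (Nat.pow_le_pow_right (by norm_num) (by omega)))
      rw [h1, Nat.testBit_two_pow_add_eq, Nat.testBit_lt_two_pow hm, word_add _ _ _ _ le_rfl, word_zero]
      have h2 : 2 ^ t.length + m - 2 ^ t.length = m := by omega
      simp only [h2, ge_iff_le, Nat.le_add_right, decide_true, Bool.true_and, Bool.false_or,
        Bool.not_false, if_true, Nat.testBit_xor, Nat.zero_xor]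
      split_ifs with hb
      · rw [Nat.testBit_xor, Nat.testBit_two_pow_sub_one, ih m hm, hb]
        simp [hm, Bool.xor_comm]
      · rw [ih m hm]; simp [hb]

/-- indicator that coordinate `c` of the word `x` is nonzero -/
def hh (x c : ℕ) : Bool := x.testBit c || x.testBit (78 + c)

def wt (x : ℕ) : ℕ := ∑ c ∈ Finset.range 78, (hh x c).toNat

theorem pick_eq {α : Type} (K : ℕ) (bs : List ℕ) (hK : bs.length = K) (w c : ℕ) :
    ∃ v, (∀ k : ℕ → α, pick (mkEnt (2 ^ 2 ^ K - 1) (lane c bs) (lane (Nat.add 78 c) bs)) w c k = k v) ∧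
      ∀ l < 2 ^ K, v.testBit l = hh (word bs w l) c := by
  subst hK
  have key : ∀ l < 2 ^ bs.length, hh (word bs w l) c =
     ((w.testBit c ^^ (lane c bs).testBit l) || (w.testBit (78 + c) ^^ (lane (78 + c) bs).testBit l)) := by
    intro l hl
    rw [lane_testBit _ _ _ hl, lane_testBit _ _ _ hl, word_zero bs w, hh, Nat.testBit_xor, Nat.testBit_xor]
  unfold pick mkEnt
  change ∃ v, (∀ k : ℕ → α, cnd (tb w (78 + c)) (cnd (tb w c) (k _) (k _)) (cnd (tb w c) (k _) (k _)) = k v) ∧ _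
  simp only [tb_eq, cnd_eq]
  change ∃ v, (∀ k : ℕ → α, ite _ (ite _ (k ((lane c bs ^^^ (2 ^ 2 ^ bs.length - 1)) ||| (lane (78 + c) bs ^^^ (2 ^ 2 ^ bs.length - 1))))
    (k (lane c bs ||| (lane (78 + c) bs ^^^ (2 ^ 2 ^ bs.length - 1)))))
    (ite _ (k ((lane c bs ^^^ (2 ^ 2 ^ bs.length - 1)) ||| lane (78 + c) bs)) (k (lane c bs ||| lane (78 + c) bs))) = k v) ∧ _
  have hb : ∀ l < 2 ^ bs.length, (2 ^ 2 ^ bs.length - 1).testBit l = true := by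
    intro l hl; rw [Nat.testBit_two_pow_sub_one]; simpa using hl
  generalize w.testBit (78 + c) = p at *
  generalize w.testBit c = q at *
  cases p <;> cases q <;>
  · simp only [if_true, if_false, Bool.false_eq_true]
    refine ⟨_, fun k => rfl, fun l hl => ?_⟩
    rw [key l hl]
    simp [Nat.testBit_or, Nat.testBit_xor, hb l hl]


def bt (x l : ℕ) : ℕ := (x.testBit l).toNat
def cnt (xs : List ℕ) (l : ℕ) : ℕ := (xs.map (fun x => bt x l)).sum

@[simp] theorem cnt_nil (l : ℕ) : cnt [] l = 0 := rfl
@[simp] theorem cnt_cons (x : ℕ) (xs : List ℕ) (l : ℕ) : cnt (x :: xs) l = bt x l + cnt xs l := by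
  simp [cnt]

theorem half_add (a b l : ℕ) : bt (a ^^^ b) l + 2 * bt (a &&& b) l = bt a l + bt b l := by
  unfold bt
  rw [Nat.testBit_xor, Nat.testBit_and]
  cases a.testBit l <;> cases b.testBit l <;> rfl

theorem full_add (a b c l : ℕ) : bt ((a ^^^ b) ^^^ c) l + 2 * bt ((a &&& b) ^^^ ((a ^^^ b) &&& c)) l =
    bt a l + bt b l + bt c l := by
  unfold bt
  simp only [Nat.testBit_xor, Nat.testBit_and]
  cases a.testBit l <;> cases b.testBit l <;> cases c.testBit l <;> rfl

theorem bt_zero (l : ℕ) : bt 0 l = 0 := by simp [bt]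

theorem csa_eq (xs : List ℕ) (p : Bool) (acc a : ℕ) (cs : List ℕ) :
    ∃ b cs', (∀ k, csa xs p acc a cs k = k b cs') ∧ ∀ l, bt b l + 2 * cnt cs' l =
      cnt xs l + bt acc l + (if p then bt a l else 0) + 2 * cnt cs l := by
  induction xs generalizing p acc a cs with
  | nil =>
    cases p
    · exact ⟨acc, cs, fun k => rfl, fun l => by simp⟩
    · refine ⟨acc ^^^ a, (acc &&& a) :: cs, fun k => rfl, fun l => ?_⟩
      have := half_add acc a l
      simp; omega
  | cons b t ih =>
    cases p
    · obtain ⟨x, y, h1, h2⟩ := ih true acc b cs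
      refine ⟨x, y, fun k => h1 k, fun l => ?_⟩
      have := h2 l
      simp at this ⊢; omega
    · obtain ⟨x, y, h1, h2⟩ := ih false ((a ^^^ b) ^^^ acc) 0 (((a &&& b) ^^^ ((a ^^^ b) &&& acc)) :: cs)
      refine ⟨x, y, fun k => h1 k, fun l => ?_⟩
      have := h2 l
      have := full_add a b acc l
      simp only [cnt_cons, Bool.false_eq_true, if_false, if_true] at *; omega

theorem lev_eq (xs es : List ℕ) :
    ∃ b cs', (∀ k, lev xs es k = k b cs') ∧ ∀ l, bt b l + 2 * cnt cs' l = cnt xs l + 2 * cnt es l := by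
  cases xs with
  | nil => exact ⟨0, es, fun k => rfl, fun l => by simp [bt_zero]⟩
  | cons a r =>
    obtain ⟨x, y, h1, h2⟩ := csa_eq r false a 0 es
    refine ⟨x, y, fun k => h1 k, fun l => ?_⟩
    have := h2 l
    simp at this ⊢; omega

/-- value of planes (most significant first) in lane `l` -/
def val : List ℕ → ℕ → ℕ
  | [], _ => 0
  | b :: bs, l => bt b l * 2 ^ bs.length + val bs l

theorem val_append (as bs : List ℕ) (l : ℕ) : val (as ++ bs) l = val as l * 2 ^ bs.length + val bs l := by
  induction as with
  | nil => simp [val]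
  | cons a t ih => simp only [List.cons_append, val, ih, List.length_append, pow_add]; ring

theorem planes_eq (n : ℕ) (xs acc : List ℕ) :
    ∃ ps, planes n xs acc = ps ++ acc ∧ ps.length = n ∧ ∀ l, ∃ r, val ps l + 2 ^ n * r = cnt xs l := by
  induction n generalizing xs acc with
  | zero => exact ⟨[], rfl, rfl, fun l => ⟨cnt xs l, by simp [val]⟩⟩
  | succ n ih =>
    obtain ⟨b, cs, h1, h2⟩ := lev_eq xs []
    obtain ⟨ps, e, hl, hv⟩ := ih cs (b :: acc)
    refine ⟨ps ++ [b], ?_, by simp [hl], fun l => ?_⟩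
    · have : planes (n + 1) xs acc = lev xs [] (fun b cs => planes n cs (b :: acc)) := rfl
      rw [this, h1, e]; simp
    · obtain ⟨r, hr⟩ := hv l
      refine ⟨r, ?_⟩
      have h3 := h2 l
      rw [val_append]
      simp only [val, List.length_cons, List.length_nil, cnt_nil] at *
      rw [← hr] at h3
      rw [pow_succ 2 n]
      simp only [zero_add, pow_one, pow_zero]
      linarith

theorem hx2_eq (a b c d e f : ℕ) {α : Type} : ∃ s u q, (∀ k : ℕ → ℕ → ℕ → α,
    hx2 (par a b c) (carry a b c) (par d e f) (carry d e f) k = k s u q) ∧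
    ∀ l, bt s l + 2 * bt u l + 4 * bt q l = bt a l + bt b l + bt c l + bt d l + bt e l + bt f l := by
  refine ⟨_, _, _, fun k => rfl, fun l => ?_⟩
  have h1 := full_add a b c l
  have h2 := full_add d e f l
  have h3 := half_add (par a b c) (par d e f) l
  have h4 := full_add (carry a b c) (carry d e f) (Nat.land (par a b c) (par d e f)) l
  simp only [par, carry, HXor.hXor, XorOp.xor, HAnd.hAnd, AndOp.and] at *
  omega

theorem table_succ (o : ℕ) (bs : List ℕ) (n c : ℕ) : table o bs (n + 1) c =
    ⟨mkEnt o (lane c bs) (lane (Nat.add 78 c) bs),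
     mkEnt o (lane (c + 13) bs) (lane (Nat.add 78 (c + 13)) bs),
     mkEnt o (lane (c + 26) bs) (lane (Nat.add 78 (c + 26)) bs),
     mkEnt o (lane (c + 39) bs) (lane (Nat.add 78 (c + 39)) bs),
     mkEnt o (lane (c + 52) bs) (lane (Nat.add 78 (c + 52)) bs),
     mkEnt o (lane (c + 65) bs) (lane (Nat.add 78 (c + 65)) bs)⟩ :: table o bs n (c + 1) := rfl

def h6 (x c : ℕ) : ℕ := (hh x c).toNat + (hh x (c + 13)).toNat + (hh x (c + 26)).toNat +
  (hh x (c + 39)).toNat + (hh x (c + 52)).toNat + (hh x (c + 65)).toNat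

theorem inds_cons {α : Type} (w : ℕ) (h : Hex) (t : List Hex) (j : ℕ) (ss us qs : List ℕ)
    (k : List ℕ → List ℕ → List ℕ → α) : inds w (h :: t) j ss us qs k =
    hexS w h j (fun s u q => inds w t (j + 1) (s :: ss) (u :: us) (q :: qs) k) := rfl

theorem hexS_mk {α : Type} (w : ℕ) (a b c d e f : Ent) (j : ℕ) (k : ℕ → ℕ → ℕ → α) :
    hexS w ⟨a, b, c, d, e, f⟩ j k =
    pick a w j (fun a => pick b w (j + 13) (fun b => pick c w (j + 26) (fun c =>
    pick d w (j + 39) (fun d => pick e w (j + 52) (fun e => pick f w (j + 65) (fun f =>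
      hx2 (par a b c) (carry a b c) (par d e f) (carry d e f) k)))))) := rfl

theorem inds_eq {α : Type} (K : ℕ) (bs : List ℕ) (hK : bs.length = K) (w n c : ℕ) (ss us qs : List ℕ) :
    ∃ ss' us' qs', (∀ k : List ℕ → List ℕ → List ℕ → α,
      inds w (table (2 ^ 2 ^ K - 1) bs n c) c ss us qs k = k ss' us' qs') ∧
     ∀ l < 2 ^ K, cnt ss' l + 2 * cnt us' l + 4 * cnt qs' l =
      cnt ss l + 2 * cnt us l + 4 * cnt qs l + ∑ i ∈ Finset.range n, h6 (word bs w l) (c + i) := by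
  induction n generalizing c ss us qs with
  | zero => exact ⟨ss, us, qs, fun k => rfl, fun l _ => by simp⟩
  | succ n ih =>
    obtain ⟨v0, e0, f0⟩ := pick_eq (α := α) K bs hK w c
    obtain ⟨v1, e1, f1⟩ := pick_eq (α := α) K bs hK w (c + 13)
    obtain ⟨v2, e2, f2⟩ := pick_eq (α := α) K bs hK w (c + 26)
    obtain ⟨v3, e3, f3⟩ := pick_eq (α := α) K bs hK w (c + 39)
    obtain ⟨v4, e4, f4⟩ := pick_eq (α := α) K bs hK w (c + 52)
    obtain ⟨v5, e5, f5⟩ := pick_eq (α := α) K bs hK w (c + 65)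
    obtain ⟨s, u, q, e6, f6⟩ := hx2_eq v0 v1 v2 v3 v4 v5 (α := α)
    obtain ⟨ss', us', qs', e7, f7⟩ := ih (c + 1) (s :: ss) (u :: us) (q :: qs)
    refine ⟨ss', us', qs', fun k => ?_, fun l hl => ?_⟩
    · rw [table_succ, ← e7 k]
      rw [inds_cons, hexS_mk, e0, e1, e2, e3, e4, e5, e6]
    · rw [f7 l hl, Finset.sum_range_succ']
      have := f6 l
      simp only [bt, f0 l hl, f1 l hl, f2 l hl, f3 l hl, f4 l hl, f5 l hl] at this
      have h6e : h6 (word bs w l) (c + 0) = bt s l + 2 * bt u l + 4 * bt q l := by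
        unfold h6; simp only [bt, add_zero]; omega
      rw [h6e]
      simp only [cnt_cons]
      have : ∀ i, c + 1 + i = c + (i + 1) := fun i => by ring
      simp only [this]
      ring

theorem wt_h6 (x : ℕ) : ∑ i ∈ Finset.range 13, h6 x (0 + i) = wt x := by
  unfold wt h6
  simp only [zero_add]
  simp only [Finset.sum_range_succ, Finset.sum_range_zero, Nat.reduceAdd]
  ring

theorem wt_le (x : ℕ) : wt x ≤ 78 := by
  unfold wt
  calc _ ≤ ∑ c ∈ Finset.range 78, 1 := Finset.sum_le_sum fun i _ => Bool.toNat_le _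
    _ = 78 := by simp

theorem wplanes_eq (K : ℕ) (bs : List ℕ) (hK : bs.length = K) (w : ℕ) :
    (wplanes w (table (2 ^ 2 ^ K - 1) bs 13 0)).length = 7 ∧
    ∀ l < 2 ^ K, val (wplanes w (table (2 ^ 2 ^ K - 1) bs 13 0)) l = wt (word bs w l) := by
  obtain ⟨ss, us, qs, e, f⟩ := inds_eq (α := List ℕ) K bs hK w 13 0 [] [] []
  obtain ⟨b, cs, e1, f1⟩ := lev_eq ss us
  obtain ⟨b1, cs1, e2, f2⟩ := lev_eq cs qs
  obtain ⟨ps, e3, hl, f3⟩ := planes_eq 5 cs1 [b1, b]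
  have h : wplanes w (table (2 ^ 2 ^ K - 1) bs 13 0) = ps ++ [b1, b] := by
    unfold wplanes
    rw [e, e1, e2, e3]
  rw [h]
  refine ⟨by simp [hl], fun l hl' => ?_⟩
  obtain ⟨r, hr⟩ := f3 l
  have g := f l hl'
  have g1 := f1 l
  have g2 := f2 l
  rw [wt_h6] at g
  have g4 := wt_le (word bs w l)
  rw [val_append]
  simp only [val, cnt_nil, List.length_cons, List.length_nil] at *
  norm_num at *
  omega


def DS (w : ℕ) : ℕ → ℕ → ℕ
  | 0, _ => 0
  | n + 1, x => x % 2 ^ w + DS w n (x / 2 ^ w)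

def MM (w : ℕ) : ℕ → ℕ
  | 0 => 0
  | n + 1 => (2 ^ w - 1) + 2 ^ (2 * w) * MM w n

theorem MM_mul (w n : ℕ) : MM w n * (2 ^ w + 1) + 1 = 2 ^ (2 * w * n) := by
  induction n with
  | zero => simp [MM]
  | succ n ih =>
    have h : (2 ^ w - 1) + 1 = 2 ^ w := Nat.sub_add_cancel Nat.one_le_two_pow
    have h2 : 2 ^ (2 * w * (n + 1)) = 2 ^ (2 * w) * (MM w n * (2 ^ w + 1) + 1) := by
      rw [ih, mul_add, pow_add]; ring
    rw [h2, MM]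
    generalize 2 ^ w - 1 = a at h
    have h3 : 2 ^ (2 * w) = (a + 1) * (a + 1) := by rw [h, two_mul, pow_add]
    rw [h3, ← h]; ring

theorem msk_eq (e w n : ℕ) (h : 2 ^ e = 2 * w * n) : msk e w = MM w n := by
  change (2 ^ 2 ^ e - 1) / (2 ^ w + 1) = _
  rw [h, ← MM_mul, Nat.add_sub_cancel, Nat.mul_div_cancel _ (by positivity)]

theorem swar_DS (w n x : ℕ) :
    DS (2 * w) n ((x &&& MM w n) + ((x >>> w) &&& MM w n)) = DS w (2 * n) x := by
  induction n generalizing x with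
  | zero => rfl
  | succ n ih =>
    have key : ∀ y, (y &&& MM w (n + 1)) = y % 2 ^ w + 2 ^ (2 * w) * ((y / 2 ^ (2 * w)) &&& MM w n) := by
      intro y
      have hM1 : MM w (n + 1) / 2 ^ (2 * w) = MM w n := by
        have : 2 ^ w - 1 < 2 ^ (2 * w) := lt_of_lt_of_le
          (Nat.sub_lt (by positivity) one_pos) (Nat.pow_le_pow_right (by norm_num) (by omega))
        rw [MM, Nat.add_mul_div_left _ _ (by positivity), Nat.div_eq_of_lt this, zero_add]
      have hM2 : MM w (n + 1) % 2 ^ (2 * w) = 2 ^ w - 1 := by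
        have : 2 ^ w - 1 < 2 ^ (2 * w) := lt_of_lt_of_le
          (Nat.sub_lt (by positivity) one_pos) (Nat.pow_le_pow_right (by norm_num) (by omega))
        rw [MM, Nat.add_mul_mod_self_left, Nat.mod_eq_of_lt this]
      conv_lhs => rw [← Nat.mod_add_div (y &&& MM w (n + 1)) (2 ^ (2 * w))]
      rw [Nat.and_mod_two_pow, Nat.and_div_two_pow, hM1, hM2, Nat.and_two_pow_sub_one_eq_mod,
        Nat.mod_mod_of_dvd _ (pow_dvd_pow 2 (by omega))]
    have h2 : 2 * (n + 1) = (2 * n + 1) + 1 := by ring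
    rw [key, key, h2]
    simp only [DS]
    have hp : 0 < 2 ^ w := by positivity
    have hpp : 2 ^ (2 * w) = 2 ^ w * 2 ^ w := by rw [two_mul, pow_add]
    have hlt : x % 2 ^ w + (x >>> w) % 2 ^ w < 2 ^ (2 * w) ∨ w = 0 := by
      rcases Nat.eq_zero_or_pos w with h | h
      · right; exact h
      · left
        have a1 := Nat.mod_lt x hp
        have a2 := Nat.mod_lt (x >>> w) hp
        have : 2 ^ w * 2 ≤ 2 ^ w * 2 ^ w := Nat.mul_le_mul_left _ (by
          calc 2 = 2 ^ 1 := rfl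
            _ ≤ 2 ^ w := Nat.pow_le_pow_right (by norm_num) h)
        omega
    have hlt : x % 2 ^ w + (x >>> w) % 2 ^ w < 2 ^ (2 * w) := by
      rcases hlt with h | h
      · exact h
      · subst h; simp [Nat.mod_one]
    have e1 : ∀ a b c d q : ℕ, a + q * b + (c + q * d) = (a + c) + q * (b + d) := by intros; ring
    rw [e1, Nat.add_mul_mod_self_left, Nat.add_mul_div_left _ _ (by positivity), Nat.mod_eq_of_lt hlt,
      Nat.div_eq_of_lt hlt, zero_add]
    have e2 : (x >>> w) / 2 ^ (2 * w) = (x / 2 ^ (2 * w)) >>> w := by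
      rw [Nat.shiftRight_eq_div_pow, Nat.shiftRight_eq_div_pow, Nat.div_div_eq_div_mul,
        Nat.div_div_eq_div_mul, mul_comm]
    rw [e2, ih, Nat.shiftRight_eq_div_pow, Nat.div_div_eq_div_mul, ← hpp]
    ring

theorem swar_eq (e w n x : ℕ) (h : 2 ^ e = 2 * w * n) : DS (2 * w) n (swar e w x) = DS w (2 * n) x := by
  rw [← swar_DS, ← msk_eq e w n h]; rfl

theorem swar_lt (e w n x : ℕ) (_hw : 0 < w) (h : 2 ^ e = 2 * w * n) : swar e w x < 2 ^ (2 * w * n) := by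
  have h1 : swar e w x = (x &&& MM w n) + ((x >>> w) &&& MM w n) := by rw [← msk_eq e w n h]; rfl
  rw [h1, ← MM_mul]
  have a := Nat.and_le_right (n := x) (m := MM w n)
  have b := Nat.and_le_right (n := x >>> w) (m := MM w n)
  have : MM w n * 2 ≤ MM w n * (2 ^ w + 1) := Nat.mul_le_mul_left _ (by
    have := Nat.one_le_two_pow (n := w); omega)
  omega

theorem DS_mod (w n x : ℕ) (hx : x < 2 ^ (w * n)) : x ≡ DS w n x [MOD 2 ^ w - 1] := by
  induction n generalizing x with
  | zero => simp at hx; subst hx; rfl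
  | succ n ih =>
    have h1 : x / 2 ^ w < 2 ^ (w * n) := by
      rw [Nat.div_lt_iff_lt_mul (by positivity), ← pow_add]; exact hx
    have h2 := ih _ h1
    have h3 : 2 ^ w ≡ 1 [MOD 2 ^ w - 1] := by
      have : 2 ^ w = (2 ^ w - 1) + 1 := (Nat.sub_add_cancel Nat.one_le_two_pow).symm
      conv_lhs => rw [this]
      simp [Nat.ModEq]
    conv_lhs => rw [← Nat.mod_add_div x (2 ^ w)]
    rw [DS]
    apply Nat.ModEq.add_left
    calc 2 ^ w * (x / 2 ^ w) ≡ 1 * (x / 2 ^ w) [MOD 2 ^ w - 1] := Nat.ModEq.mul_right _ h3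
      _ = x / 2 ^ w := one_mul _
      _ ≡ _ [MOD 2 ^ w - 1] := h2

theorem DS_one (n x : ℕ) : DS 1 n x = ∑ l ∈ Finset.range n, bt x l := by
  induction n generalizing x with
  | zero => rfl
  | succ n ih =>
    rw [DS, ih, Finset.sum_range_succ', add_comm]
    congr 1
    · apply Finset.sum_congr rfl
      intro l _
      unfold bt
      rw [Nat.testBit_succ, pow_one]
    · unfold bt
      rw [Nat.testBit_zero, pow_one]
      rcases Nat.mod_two_eq_zero_or_one x with h | h <;> simp [h]

theorem pop_eq (x : ℕ) : pop 20 x = ∑ l ∈ Finset.range (2 ^ 20), bt x l := by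
  change swar 20 16 (swar 20 8 (swar 20 4 (swar 20 2 (swar 20 1 x)))) % 4294967295 = _
  have h0 := DS_mod 32 (2 ^ 15) _ (swar_lt 20 16 (2 ^ 15) (swar 20 8 (swar 20 4 (swar 20 2 (swar 20 1 x)))) (by norm_num) (by norm_num))
  have h5 := swar_eq 20 16 (2 ^ 15) (swar 20 8 (swar 20 4 (swar 20 2 (swar 20 1 x)))) (by norm_num)
  have h4 := swar_eq 20 8 (2 ^ 16) (swar 20 4 (swar 20 2 (swar 20 1 x))) (by norm_num)
  have h3 := swar_eq 20 4 (2 ^ 17) (swar 20 2 (swar 20 1 x)) (by norm_num)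
  have h2 := swar_eq 20 2 (2 ^ 18) (swar 20 1 x) (by norm_num)
  have h1 := swar_eq 20 1 (2 ^ 19) x (by norm_num)
  rw [show 2 * 2 ^ 15 = 2 ^ 16 by norm_num] at h5
  rw [show 2 * 2 ^ 16 = 2 ^ 17 by norm_num] at h4
  rw [show 2 * 2 ^ 17 = 2 ^ 18 by norm_num] at h3
  rw [show 2 * 2 ^ 18 = 2 ^ 19 by norm_num] at h2
  rw [show 2 * 2 ^ 19 = 2 ^ 20 by norm_num] at h1
  have h6 : DS 32 (2 ^ 15) (swar 20 16 (swar 20 8 (swar 20 4 (swar 20 2 (swar 20 1 x))))) =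
      ∑ l ∈ Finset.range (2 ^ 20), bt x l := by
    rw [← DS_one]; exact h5.trans (h4.trans (h3.trans (h2.trans h1)))
  rw [h6] at h0
  have h7 : ∑ l ∈ Finset.range (2 ^ 20), bt x l ≤ 2 ^ 20 := by
    calc _ ≤ ∑ l ∈ Finset.range (2 ^ 20), 1 := Finset.sum_le_sum fun i _ => Bool.toNat_le _
      _ = 2 ^ 20 := by rw [Finset.sum_const, Finset.card_range]; rfl
  have h8 : (2 ^ 32 - 1 : ℕ) = 4294967295 := by norm_num
  rw [h8] at h0
  clear h1 h2 h3 h4 h5 h6 h8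
  generalize ∑ l ∈ Finset.range (2 ^ 20), bt x l = s at *
  generalize swar 20 16 (swar 20 8 (swar 20 4 (swar 20 2 (swar 20 1 x)))) = y at *
  have h0 : y % 4294967295 = s % 4294967295 := h0
  rw [h0, Nat.mod_eq_of_lt (lt_of_le_of_lt h7 (by norm_num))]

theorem pop_eq' (K : ℕ) (hK : K = 20) (x : ℕ) : pop K x = ∑ l ∈ Finset.range (2 ^ K), bt x l := by
  subst hK; exact pop_eq x

def valL : List ℕ → ℕ → ℕ
  | [], _ => 0
  | b :: bs, l => bt b l + 2 * valL bs l

theorem popP_eq (K : ℕ) (hK : K = 20) (ps : List ℕ) : popP K ps = ∑ l ∈ Finset.range (2 ^ K), valL ps l := by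
  induction ps with
  | nil => simp only [valL, Finset.sum_const_zero]; rfl
  | cons p t ih =>
    have : popP K (p :: t) = pop K p + 2 * popP K t := rfl
    rw [this, pop_eq' K hK, ih]
    simp only [valL]
    rw [Finset.sum_add_distrib, Finset.mul_sum]

theorem valL_append (as : List ℕ) (b l : ℕ) : valL (as ++ [b]) l = valL as l + 2 ^ as.length * bt b l := by
  induction as with
  | nil => simp [valL]
  | cons a t ih => simp only [List.cons_append, valL, ih, List.length_cons, pow_succ]; ring

theorem revA_eq (l a : List ℕ) : revA l a = l.reverse ++ a := by
  induction l generalizing a with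
  | nil => rfl
  | cons x t ih =>
    have : revA (x :: t) a = revA t (x :: a) := rfl
    rw [this, ih]; simp

theorem valL_rev (l : List ℕ) (i : ℕ) : valL (revA l []) i = val l i := by
  rw [revA_eq, List.append_nil]
  induction l with
  | nil => rfl
  | cons x t ih => rw [List.reverse_cons, valL_append, ih, val, List.length_reverse]; ring

def iv (K : ℕ) (f : ℕ → ℕ) (w : ℕ) (i : Item) : ℕ :=
  ∑ l ∈ Finset.range (2 ^ K), bt i.m l * f (w * 2 ^ i.bs.length + val i.bs l)

theorem mapl_eq {α β : Type} (f : α → β) (l : List α) : mapl f l = l.map f := by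
  induction l with
  | nil => rfl
  | cons a t ih => rw [List.map_cons, ← ih]; rfl

theorem split_len (K : ℕ) (n : ℕ) (l : List Item) (h : ∀ i ∈ l, i.bs.length = n + 1) :
    (split0 l).length ≤ l.length ∧ (split1 l).length ≤ l.length ∧
    (∀ i ∈ split0 l, i.bs.length = n) ∧ (∀ i ∈ split1 l, i.bs.length = n) ∧
    ∀ f w, ((split0 l).map (iv K f (2 * w))).sum + ((split1 l).map (iv K f (2 * w + 1))).sum =
      (l.map (iv K f w)).sum := by
  induction l with
  | nil => exact ⟨le_rfl, le_rfl, by simp [split0], by simp [split1], fun f w => rfl⟩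
  | cons i t ih =>
    obtain ⟨a1, a2, a3, a4, a5⟩ := ih (fun j hj => h j (List.mem_cons_of_mem _ hj))
    obtain ⟨m, bs⟩ := i
    have hb := h ⟨m, bs⟩ List.mem_cons_self
    cases bs with
    | nil => simp at hb
    | cons b bs =>
      have hb : bs.length = n := by simpa using hb
      have e0 : split0 (⟨m, b :: bs⟩ :: t) =
        if Nat.beq (m ^^^ (m &&& b)) 0 then split0 t else ⟨m ^^^ (m &&& b), bs⟩ :: split0 t := by
        rw [← cnd_eq]; rfl
      have e1 : split1 (⟨m, b :: bs⟩ :: t) =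
        if Nat.beq (m &&& b) 0 then split1 t else ⟨m &&& b, bs⟩ :: split1 t := by
        rw [← cnd_eq]; rfl
      have f0 : ∀ f w, ((split0 (⟨m, b :: bs⟩ :: t)).map (iv K f w)).sum =
          iv K f w ⟨m ^^^ (m &&& b), bs⟩ + ((split0 t).map (iv K f w)).sum := by
        intro f w
        rw [e0]; split_ifs with hz
        · rw [Nat.eq_of_beq_eq_true hz]; simp [iv, bt_zero]
        · simp
      have f1 : ∀ f w, ((split1 (⟨m, b :: bs⟩ :: t)).map (iv K f w)).sum =
          iv K f w ⟨m &&& b, bs⟩ + ((split1 t).map (iv K f w)).sum := by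
        intro f w
        rw [e1]; split_ifs with hz
        · rw [Nat.eq_of_beq_eq_true hz]; simp [iv, bt_zero]
        · simp
      refine ⟨?_, ?_, ?_, ?_, ?_⟩
      · rw [e0]; split_ifs <;> simp <;> omega
      · rw [e1]; split_ifs <;> simp <;> omega
      · rw [e0]; split_ifs
        · exact a3
        · intro i hi
          rcases List.mem_cons.1 hi with rfl | hi
          · exact hb
          · exact a3 i hi
      · rw [e1]; split_ifs
        · exact a4
        · intro i hi
          rcases List.mem_cons.1 hi with rfl | hi
          · exact hb
          · exact a4 i hi
      · intro f w
        rw [f0, f1, List.map_cons, List.sum_cons, ← a5 f w]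
        have : iv K f (2 * w) ⟨m ^^^ (m &&& b), bs⟩ + iv K f (2 * w + 1) ⟨m &&& b, bs⟩ = iv K f w ⟨m, b :: bs⟩ := by
          unfold iv
          rw [← Finset.sum_add_distrib]
          apply Finset.sum_congr rfl
          intro l _
          simp only [val, List.length_cons, pow_succ]
          have e : bt (m ^^^ (m &&& b)) l = if b.testBit l then 0 else bt m l := by
            unfold bt; rw [Nat.testBit_xor, Nat.testBit_and]
            cases m.testBit l <;> cases b.testBit l <;> rfl
          have e' : bt (m &&& b) l = if b.testBit l then bt m l else 0 := by
            unfold bt; rw [Nat.testBit_and]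
            cases m.testBit l <;> cases b.testBit l <;> rfl
          rw [e, e', show bt b l = if b.testBit l then 1 else 0 by unfold bt; cases b.testBit l <;> rfl]
          split_ifs
          · rw [zero_mul, zero_add]; ring_nf
          · rw [zero_mul, add_zero, zero_mul, zero_add]; ring_nf
        omega

theorem hist_eq (K : ℕ) (hK : K = 20) (n w : ℕ) (l : List Item) (hl : l.length < 128) (h : ∀ i ∈ l, i.bs.length = n) :
    hist K n w l = (l.map (iv K ff w)).sum := by
  induction n generalizing w l with
  | zero =>
    cases l with
    | nil => rfl
    | cons i t =>
      have : hist K 0 w (i :: t) = ff w * popP K (revA (planes 7 (mapl Item.m (i :: t)) []) []) := rfl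
      rw [this, popP_eq K hK]
      generalize i :: t = l at *
      obtain ⟨ps, e, hl', hv⟩ := planes_eq 7 (mapl Item.m l) []
      have e1 : ∀ j, valL (revA (planes 7 (mapl Item.m l) []) []) j = cnt (mapl Item.m l) j := by
        intro j
        rw [valL_rev, e, List.append_nil]
        obtain ⟨r, hr⟩ := hv j
        have : cnt (mapl Item.m l) j ≤ l.length := by
          rw [mapl_eq]
          clear * -
          induction l with
          | nil => simp
          | cons a t ih =>
            have : bt a.m j ≤ 1 := Bool.toNat_le _
            simp only [List.map_cons, cnt_cons, List.length_cons]; omega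
        have : r = 0 := by
          by_contra h0
          have : 1 ≤ r := Nat.one_le_iff_ne_zero.2 h0
          norm_num at hr
          omega
        rw [this] at hr; simpa using hr
      simp only [e1]
      clear * - h
      rw [mapl_eq]
      induction l with
      | nil => simp
      | cons a t ih =>
        simp only [List.map_cons, cnt_cons, List.sum_cons]
        rw [Finset.sum_add_distrib, mul_add, ih (fun i hi => h i (List.mem_cons_of_mem _ hi))]
        have hb := List.eq_nil_of_length_eq_zero (h a List.mem_cons_self)
        have he : ff w * ∑ l ∈ Finset.range (2 ^ K), bt a.m l = iv K ff w a := by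
          unfold iv
          rw [hb, Finset.mul_sum]
          apply Finset.sum_congr rfl
          intro l _
          simp only [val, List.length_nil, pow_zero, mul_one, add_zero]; ring
        rw [he]
  | succ n ih =>
    cases hc : l with
    | nil => rfl
    | cons i t =>
      have : hist K (n + 1) w (i :: t) = hist K n (2 * w) (split0 (i :: t)) +
        hist K n (2 * w + 1) (split1 (i :: t)) := rfl
      rw [this, ← hc]
      obtain ⟨a1, a2, a3, a4, a5⟩ := split_len K n l h
      rw [ih _ _ (by omega) a3, ih _ _ (by omega) a4, a5]

def gg (x : ℕ) : ℕ := ff (wt x)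

theorem csum_eq (K : ℕ) (hK : K = 20) (bs ws : List ℕ) (hb : bs.length = K) (hw : ws.length < 128) :
    csum K (Nat.sub (Nat.pow 2 (Nat.pow 2 K)) 1) (table (Nat.sub (Nat.pow 2 (Nat.pow 2 K)) 1) bs 13 0) ws =
      (ws.map (SS bs gg)).sum := by
  have e : Nat.sub (Nat.pow 2 (Nat.pow 2 K)) 1 = 2 ^ 2 ^ K - 1 := rfl
  rw [e]
  have : ∀ o t, csum K o t ws = hist K 7 0 (mapl (fun w => ⟨o, wplanes w t⟩) ws) := fun _ _ => rfl
  rw [this, mapl_eq, hist_eq K hK _ _ _ (by simpa using hw)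
    (by
      intro i hi
      obtain ⟨w, _, rfl⟩ := List.mem_map.1 hi
      exact (wplanes_eq K bs hb w).1), List.map_map]
  refine congrArg List.sum (List.map_congr_left ?_)
  intro w _
  rw [SS_eq, hb]
  simp only [Function.comp, iv]
  apply Finset.sum_congr rfl
  intro l hl
  have hl := Finset.mem_range.1 hl
  rw [(wplanes_eq K bs hb w).2 l hl, gg]
  have : bt (2 ^ 2 ^ K - 1) l = 1 := by
    unfold bt
    rw [Nat.testBit_two_pow_sub_one, decide_eq_true hl]; rfl
  rw [this]; simp


/-! ### coset sums and symmetries -/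

theorem SS_append (as bs : List ℕ) (g : ℕ → ℕ) (w : ℕ) : SS (as ++ bs) g w = SS as (SS bs g) w := by
  induction as generalizing w with
  | nil => rfl
  | cons a t ih => simp only [List.cons_append, SS, ih]

theorem SS_comm (as bs : List ℕ) (g : ℕ → ℕ) (w : ℕ) : SS as (SS bs g) w = SS bs (SS as g) w := by
  rw [SS_eq, SS_eq]
  simp only [SS_eq]
  rw [Finset.sum_comm]
  refine Finset.sum_congr rfl fun i _ => Finset.sum_congr rfl fun j _ => ?_
  rw [word_zero bs (word as w j), word_zero as w j, word_zero as (word bs w i), word_zero bs w i,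
    Nat.xor_assoc, Nat.xor_assoc, Nat.xor_comm (word as 0 j)]

theorem word_cons' (b : ℕ) (t : List ℕ) (m : ℕ) :
    word (b :: t) 0 m = (if m.testBit t.length then b else 0) ^^^ word t 0 m := by
  rw [word_cons, word_zero]; simp

theorem SS_inv (bs : List ℕ) (g : ℕ → ℕ) (w m : ℕ) : SS bs g (w ^^^ word bs 0 m) = SS bs g w := by
  induction bs generalizing w with
  | nil => simp [word_nil]
  | cons b t ih =>
    rw [word_cons', ← Nat.xor_assoc]
    simp only [SS]
    have : ∀ v u, v ^^^ word t 0 m ^^^ u = v ^^^ u ^^^ word t 0 m := fun v u => by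
      rw [Nat.xor_assoc, Nat.xor_comm _ u, ← Nat.xor_assoc]
    rw [this, ih, ih]
    split_ifs
    · rw [Nat.xor_assoc w b b, Nat.xor_self, Nat.xor_zero, add_comm]
    · simp

theorem SS_const (bs : List ℕ) (F : ℕ → ℕ) (h : ∀ b ∈ bs, ∀ w, F (w ^^^ b) = F w) (w : ℕ) :
    SS bs F w = 2 ^ bs.length * F w := by
  induction bs generalizing w with
  | nil => simp [SS]
  | cons b t ih =>
    have h' : ∀ b ∈ t, ∀ w, F (w ^^^ b) = F w := fun c hc => h c (List.mem_cons_of_mem _ hc)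
    simp only [SS]
    rw [ih h', ih h', h b List.mem_cons_self, List.length_cons, pow_succ]; ring

theorem SS_span (as bs : List ℕ) (hl : as.length = bs.length) (h1 : ∀ a ∈ as, ∃ m, a = word bs 0 m)
    (h2 : ∀ b ∈ bs, ∃ m, b = word as 0 m) (g : ℕ → ℕ) (w : ℕ) : SS as g w = SS bs g w := by
  have e1 : SS as (SS bs g) w = 2 ^ as.length * SS bs g w := by
    apply SS_const
    intro b hb v
    obtain ⟨m, rfl⟩ := h1 b hb
    exact SS_inv _ _ _ _
  have e2 : SS bs (SS as g) w = 2 ^ bs.length * SS as g w := by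
    apply SS_const
    intro b hb v
    obtain ⟨m, rfl⟩ := h2 b hb
    exact SS_inv _ _ _ _
  rw [SS_comm, e2, hl] at e1
  exact Nat.eq_of_mul_eq_mul_left (by positivity) e1

def Lin (P : ℕ → ℕ) : Prop := ∀ x y, P (x ^^^ y) = P x ^^^ P y

theorem Lin.zero {P : ℕ → ℕ} (h : Lin P) : P 0 = 0 := by
  have := h 0 0
  simpa using this

theorem Lin.comp {P Q : ℕ → ℕ} (h : Lin P) (h' : Lin Q) : Lin (fun x => P (Q x)) := fun x y => by
  change P (Q (x ^^^ y)) = P (Q x) ^^^ P (Q y)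
  rw [h' x y, h]

theorem SS_map (P : ℕ → ℕ) (hP : Lin P) (bs : List ℕ) (g : ℕ → ℕ) (w : ℕ) :
    SS (bs.map P) g (P w) = SS bs (fun x => g (P x)) w := by
  induction bs generalizing w with
  | nil => rfl
  | cons b t ih =>
    simp only [List.map_cons, SS]
    rw [← hP, ih, ih]

theorem word_map (P : ℕ → ℕ) (hP : Lin P) (bs : List ℕ) (w m : ℕ) :
    P (word bs w m) = word (bs.map P) (P w) m := by
  induction bs generalizing w with
  | nil => rfl
  | cons b t ih =>
    rw [List.map_cons, word_cons, word_cons, ih, List.length_map]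
    split_ifs
    · rw [hP]
    · rfl

theorem word_lin (bs : List ℕ) : Lin (word bs 0) := by
  intro x y
  induction bs with
  | nil => simp [word_nil]
  | cons b t ih =>
    rw [word_cons', word_cons', word_cons', ih, Nat.testBit_xor]
    cases x.testBit t.length <;> cases y.testBit t.length <;>
      simp [Nat.xor_assoc, Nat.xor_left_comm]

theorem SS_P (P : ℕ → ℕ) (hP : Lin P) (bs : List ℕ) (g : ℕ → ℕ) (hg : ∀ x, g (P x) = g x)
    (ca cb : List ℕ) (h1 : bs.map P = ca.map (word bs 0)) (h2 : bs = cb.map (word (bs.map P) 0)) (w : ℕ) :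
    SS bs g (P w) = SS bs g w := by
  have e : SS (bs.map P) g (P w) = SS bs g w := by
    rw [SS_map P hP]; simp only [hg]
  rw [← e]
  apply SS_span
  · simp
  · intro a ha
    rw [h2] at ha
    obtain ⟨m, _, rfl⟩ := List.mem_map.1 ha
    exact ⟨m, rfl⟩
  · intro a ha
    rw [h1] at ha
    obtain ⟨m, _, rfl⟩ := List.mem_map.1 ha
    exact ⟨m, rfl⟩

/-! ### the weight preserving maps -/

def pm (s : List ℕ) (x : ℕ) : ℕ :=
  @List.rec ℕ (fun _ => ℕ) 0 (fun i _ ih => Nat.add (cnd (tb x i) 1 0) (Nat.mul 2 ih)) s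

def pp (s : List ℕ) (x : ℕ) : ℕ := Nat.lor (pm s x) (Nat.shiftLeft (pm s (Nat.shiftRight x 78)) 78)

theorem pm_testBit (s : List ℕ) (x i : ℕ) :
    (pm s x).testBit i = (decide (i < s.length) && x.testBit (s.getD i 0)) := by
  induction s generalizing i with
  | nil => simp [pm]
  | cons a t ih =>
    have e : pm (a :: t) x = (x.testBit a).toNat + 2 * pm t x := by
      rw [← tb_eq]
      change cnd (tb x a) 1 0 + 2 * pm t x = _
      cases tb x a <;> rfl
    rw [e]
    cases i with
    | zero => rw [Nat.testBit_zero]; cases h : x.testBit a <;> simp [Nat.add_mod, h]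
    | succ i =>
      rw [Nat.testBit_succ]
      have : ((x.testBit a).toNat + 2 * pm t x) / 2 = pm t x := by
        have := Bool.toNat_le (x.testBit a); omega
      rw [this, ih]; simp

theorem pp_lo (s : List ℕ) (hs : s.length = 78) (x c : ℕ) (hc : c < 78) :
    (pp s x).testBit c = x.testBit (s.getD c 0) := by
  change ((pm s x) ||| (pm s (x >>> 78)) <<< 78).testBit c = _
  rw [Nat.testBit_or, pm_testBit, Nat.testBit_shiftLeft, hs]
  have : ¬ (c ≥ 78) := by omega
  simp [hc]

theorem pp_hi (s : List ℕ) (hs : s.length = 78) (x c : ℕ) :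
    (pp s x).testBit (78 + c) = (decide (c < 78) && x.testBit (78 + s.getD c 0)) := by
  change ((pm s x) ||| (pm s (x >>> 78)) <<< 78).testBit _ = _
  rw [Nat.testBit_or, pm_testBit, Nat.testBit_shiftLeft, pm_testBit, hs, Nat.testBit_shiftRight]
  simp

theorem bits_ext (x y : ℕ) (h1 : ∀ c < 78, x.testBit c = y.testBit c)
    (h2 : ∀ c, x.testBit (78 + c) = y.testBit (78 + c)) : x = y := by
  apply Nat.eq_of_testBit_eq
  intro i
  by_cases h : i < 78
  · exact h1 i h
  · obtain ⟨c, rfl⟩ := Nat.exists_eq_add_of_le (not_lt.1 h)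
    exact h2 c

theorem pp_lin (s : List ℕ) (hs : s.length = 78) : Lin (pp s) := by
  intro x y
  apply bits_ext
  · intro c hc
    rw [Nat.testBit_xor, pp_lo s hs _ _ hc, pp_lo s hs _ _ hc, pp_lo s hs _ _ hc, Nat.testBit_xor]
  · intro c
    rw [Nat.testBit_xor, pp_hi s hs, pp_hi s hs, pp_hi s hs, Nat.testBit_xor]
    cases decide (c < 78) <;> simp

theorem sum_getD (s : List ℕ) (f : ℕ → ℕ) :
    ∑ c ∈ Finset.range s.length, f (s.getD c 0) = (s.map f).sum := by
  induction s with
  | nil => rfl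
  | cons a t ih => rw [List.length_cons, Finset.sum_range_succ', List.map_cons, List.sum_cons, ← ih]; simp [add_comm]

theorem wt_pp (s : List ℕ) (hs : s.Perm (List.range 78)) (x : ℕ) : wt (pp s x) = wt x := by
  have hl : s.length = 78 := by rw [hs.length_eq, List.length_range]
  have e : wt (pp s x) = ∑ c ∈ Finset.range s.length, (hh x (s.getD c 0)).toNat := by
    rw [hl]
    apply Finset.sum_congr rfl
    intro c hc
    have hc := Finset.mem_range.1 hc
    simp only [hh]
    rw [pp_lo s hl x c hc, pp_hi s hl, decide_eq_true hc, Bool.true_and]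
  rw [e, sum_getD s (fun c => (hh x c).toNat), (hs.map _).sum_eq]
  unfold wt
  exact (Finset.sum_range _).trans (by rw [← List.sum_ofFn, List.ofFn_eq_map, ← List.map_coe_finRange_eq_range, List.map_map]; rfl) |>.symm

theorem scal_lo (x c : ℕ) (hc : c < 78) : (scal x).testBit c = x.testBit (78 + c) := by
  change (((x >>> 78) % 2 ^ 78) ||| ((x ^^^ (x >>> 78)) % 2 ^ 78) <<< 78).testBit c = _
  rw [Nat.testBit_or, Nat.testBit_mod_two_pow, Nat.testBit_shiftLeft, Nat.testBit_shiftRight]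
  simp [hc]

theorem scal_hi (x c : ℕ) : (scal x).testBit (78 + c) =
    (decide (c < 78) && (x.testBit c ^^ x.testBit (78 + c))) := by
  change (((x >>> 78) % 2 ^ 78) ||| ((x ^^^ (x >>> 78)) % 2 ^ 78) <<< 78).testBit _ = _
  rw [Nat.testBit_or, Nat.testBit_mod_two_pow, Nat.testBit_shiftLeft, Nat.testBit_shiftRight,
    Nat.testBit_mod_two_pow, Nat.testBit_xor]
  simp

theorem scal_lin : Lin scal := by
  intro x y
  apply bits_ext
  · intro c hc
    rw [Nat.testBit_xor, scal_lo _ _ hc, scal_lo _ _ hc, scal_lo _ _ hc, Nat.testBit_xor]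
  · intro c
    rw [Nat.testBit_xor, scal_hi, scal_hi, scal_hi, Nat.testBit_xor, Nat.testBit_xor]
    cases decide (c < 78) <;> cases x.testBit c <;> cases y.testBit c <;> simp

theorem wt_scal (x : ℕ) : wt (scal x) = wt x := by
  apply Finset.sum_congr rfl
  intro c hc
  have hc := Finset.mem_range.1 hc
  simp only [hh]
  rw [scal_lo _ _ hc, scal_hi, decide_eq_true hc]
  cases x.testBit c <;> cases x.testBit (78 + c) <;> rfl

/-! ### orbit covers -/

def mask (L : List ℕ) : ℕ :=
  @List.rec ℕ (fun _ => ℕ) 0 (fun m _ ih => Nat.lor (Nat.shiftLeft 1 m) ih) L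

theorem mask_mem (L : List ℕ) (m : ℕ) (h : (mask L).testBit m = true) : m ∈ L := by
  induction L with
  | nil => simp [mask] at h
  | cons a t ih =>
    have e : mask (a :: t) = (1 <<< a) ||| mask t := rfl
    rw [e, Nat.testBit_or, Nat.testBit_shiftLeft, Bool.or_eq_true] at h
    rcases h with h | h
    · rw [Bool.and_eq_true, decide_eq_true_eq, Nat.testBit_one_eq_true_iff_self_eq_zero] at h
      have : m = a := by omega
      simp [this]
    · exact List.mem_cons_of_mem _ (ih h)

theorem cover (F : ℕ → ℕ) (n : ℕ) (L : List ℕ) (h : mask L = 2 ^ n - 1) :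
    ∑ m ∈ Finset.range n, F m ≤ (L.map F).sum := by
  have hs : Finset.range n ⊆ L.toFinset := by
    intro m hm
    rw [List.mem_toFinset]
    apply mask_mem
    rw [h, Nat.testBit_two_pow_sub_one]
    simpa using hm
  refine le_trans (Finset.sum_le_sum_of_subset hs) ?_
  clear h hs
  induction L with
  | nil => simp
  | cons a t ih =>
    rw [List.toFinset_cons, List.map_cons, List.sum_cons]
    by_cases ha : a ∈ t.toFinset
    · rw [Finset.insert_eq_of_mem ha]; omega
    · rw [Finset.sum_insert ha]; omega

def iter (f : ℕ → ℕ) (n : ℕ) : ℕ → List ℕ :=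
  @Nat.rec (fun _ => ℕ → List ℕ) (fun _ => []) (fun _ ih x => x :: ih (f x)) n

def fmap (f : ℕ → List ℕ) (l : List ℕ) : List ℕ :=
  @List.rec ℕ (fun _ => List ℕ) [] (fun a _ ih => f a ++ ih) l

theorem fmap_sum (f : ℕ → List ℕ) (l : List ℕ) (F : ℕ → ℕ) (c : ℕ) (G : ℕ → ℕ)
    (h : ∀ a, ((f a).map F).sum = c * G a) : ((fmap f l).map F).sum = c * (l.map G).sum := by
  induction l with
  | nil => rfl
  | cons a t ih =>
    have e : fmap f (a :: t) = f a ++ fmap f t := rfl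
    rw [e, List.map_append, List.sum_append, ih, h, List.map_cons, List.sum_cons, mul_add]

theorem iter_sum (f : ℕ → ℕ) (n : ℕ) (F : ℕ → ℕ) (h : ∀ x, F (f x) = F x) (x : ℕ) :
    ((iter f n x).map F).sum = n * F x := by
  induction n generalizing x with
  | zero => rw [zero_mul]; rfl
  | succ n ih =>
    have e : iter f (n + 1) x = x :: iter f n (f x) := rfl
    rw [e, List.map_cons, List.sum_cons, ih, h]; ring

def GK1 : List ℕ := [0xd0e6873439f80fc07e031c58e2c712505282941, 0xb63db1ed8e9c04e027017b2bd95ecb409a04d02,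
    0x6c7b63db1f3809c04e02f657b2bd96813409a04, 0x1fe0ff07f8e407203901b36d9b6cd8b205902c8,
    0x3fc1fe0ff1c80e40720366db36d9b1640b20590, 0x6873439a1cfc07e03f018e2c71638d2829414a0]
def GK2 : List ℕ := [0x8073d07e9ffc16e0c801e83f4f8073706401fc1, 0xfa9ba363bcd822212701d1b1defa99109380d82,
    0xf53746c77bb044424e03a363bdf532212701b04]
def GIn : List ℕ := [0x10128e10744087642b0147083a1013b21580408, 0x20251c20e8810ec856028e10742027642b00810,
    0xc039e83f4efe0b706400f41fa7c03db83200fe0, 0xc70cd1d74c4c1da0fe0174d8e19a3fe00983b41,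
    0x49157279d6d426e102039d6922ae48201a84dc2, 0x922ae4f3ada84dc204033ad2455c98403509b84,
    0xbe6f205698e484441b016997cde409b01c90888, 0x7cde40ad33c908883602d32f9bc813603921110,
    0x638668eba6260ed07f02ba6c70cd1ff004c1da0, 0xfffffffffe0000000003fffffffffffffffffff]

abbrev B1 : List ℕ := dbl GK1
abbrev B6 : List ℕ := dbl GK2
abbrev B20 : List ℕ := dbl GIn
def YS : List ℕ := [1, 4, 5, 6, 7, 16, 17, 18, 19, 20, 21, 22, 23, 24, 25, 26, 27, 28, 29, 30, 31]
def R3 : List ℕ := [1, 6, 17, 18, 20, 21, 22, 26, 28, 29, 31, 70, 73, 78, 86, 89, 90, 94, 95, 103, 104, 109, 118, 119, 127, 343, 349, 365, 405, 409]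
def R1 : List ℕ := [4, 5, 19, 27, 93, 115, 277, 294, 359, 374, 378, 382, 425, 471, 494]

def piA : List ℕ := (List.range 39).map (fun i => (i + 1) % 39) ++ (List.range 39).map (fun i => 39 + (i + 1) % 39)
def piM : List ℕ := (List.range 39).map (fun i => 16 * i % 39) ++ (List.range 39).map (fun i => 39 + (16 * i + 13) % 39)
def piT : List ℕ := (List.range 39).map (fun i => (i + 13) % 39) ++ (List.range 39).map (fun i => 39 + (i + 13) % 39)
def mA (x : ℕ) : ℕ := scal (pp piA x)
def mM (x : ℕ) : ℕ := pp piM x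
def mT (x : ℕ) : ℕ := pp piT x

def cA1 : List ℕ := [1, 3, 1027, 3074, 256, 768, 66, 193, 16, 48, 7, 14]
def cM1 : List ℕ := [2196, 1148, 64, 192, 62, 41, 752, 416, 4, 12, 88, 244]
def cA : List ℕ := [16384, 49152, 16826368, 50364416, 4194304, 12582912, 1097728, 3178496, 262144, 786432,
    81920, 245760, 4, 12, 4100, 12300, 1024, 3072, 268, 776, 64, 192, 28, 56, 1, 3]
def dA : List ℕ := [46137344, 25165824, 3145728, 2097152, 34340864, 17301504, 196608, 131072, 50380800,
    33587200, 50331648, 33554432, 15360, 10240, 768, 512, 8384, 4224, 48, 32, 8204, 4104, 12288, 8192, 3, 2]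
def cM : List ℕ := [37617664, 19464192, 2097152, 1048576, 950272, 606208, 6553600, 14417920, 196608, 131072,
    3866624, 2490368, 8656, 5040, 256, 768, 184, 100, 3904, 2752, 48, 32, 848, 752, 2, 1]
def dM : List ℕ := [42123264, 21069824, 950272, 606208, 8388608, 4194304, 12746752, 8470528, 65536, 196608,
    6471680, 13729792, 9236, 7228, 100, 220, 3072, 2048, 2076, 1080, 16, 48, 2620, 1320, 2, 1]
def cT6 : List ℕ := [16, 48, 4, 12, 1, 3]
def cT : List ℕ := [262144, 786432, 65536, 196608, 16384, 49152, 12288, 8192, 3072, 2048, 768, 512, 192, 128,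
    48, 32, 12, 8, 2, 1]
def dT : List ℕ := [786432, 524288, 196608, 131072, 49152, 32768, 4096, 12288, 1024, 3072, 256, 768, 64, 192,
    16, 48, 4, 12, 2, 1]

theorem perm_A : piA.Perm (List.range 78) := by decide +kernel
theorem perm_M : piM.Perm (List.range 78) := by decide +kernel
theorem perm_T : piT.Perm (List.range 78) := by decide +kernel
theorem act_A1 : B1.map mA = cA1.map (word B1 0) := by decide +kernel
theorem act_M1 : B1.map mM = cM1.map (word B1 0) := by decide +kernel
theorem act_T1 : B1.map mT = B1 := by decide +kernel
theorem act_T6 : B6.map mT = cT6.map (word B6 0) := by decide +kernel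
theorem act_A : (B6 ++ B20).map mA = cA.map (word (B6 ++ B20) 0) := by decide +kernel
theorem act_A' : B6 ++ B20 = dA.map (word ((B6 ++ B20).map mA) 0) := by decide +kernel
theorem act_M : (B6 ++ B20).map mM = cM.map (word (B6 ++ B20) 0) := by decide +kernel
theorem act_M' : B6 ++ B20 = dM.map (word ((B6 ++ B20).map mM) 0) := by decide +kernel
theorem act_T : B20.map mT = cT.map (word B20 0) := by decide +kernel
theorem act_T' : B20 = dT.map (word (B20.map mT) 0) := by decide +kernel

def cov1 : List ℕ := 0 :: (fmap (fun r => fmap (fun y => iter (word cA1 0) 39 y) (iter (word cM1 0) 3 r)) R3 ++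
  fmap (fun r => iter (word cA1 0) 39 r) R1)
def cov2 : List ℕ := 0 :: fmap (fun y => iter (word cT6 0) 3 y) YS

theorem cov1_eq : mask cov1 = 2 ^ 4096 - 1 := by decide +kernel
theorem cov2_eq : mask cov2 = 2 ^ 64 - 1 := by decide +kernel

theorem lin_A : Lin mA := scal_lin.comp (pp_lin piA (by rw [perm_A.length_eq, List.length_range]))
theorem lin_M : Lin mM := pp_lin piM (by rw [perm_M.length_eq, List.length_range])
theorem lin_T : Lin mT := pp_lin piT (by rw [perm_T.length_eq, List.length_range])
theorem gg_A (x : ℕ) : gg (mA x) = gg x := by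
  unfold gg mA; rw [wt_scal, wt_pp piA perm_A]
theorem gg_M (x : ℕ) : gg (mM x) = gg x := by
  unfold gg mM; rw [wt_pp piM perm_M]
theorem gg_T (x : ℕ) : gg (mT x) = gg x := by
  unfold gg mT; rw [wt_pp piT perm_T]

def HH (x : ℕ) : ℕ := SS B20 gg x
def wr (r : ℕ) : ℕ := word B1 0 r
def Wl (r : ℕ) : List ℕ := mapl (fun y => word B6 (wr r) y) YS
def VV (r : ℕ) : ℕ := ((Wl r).map HH).sum

theorem HH_T (x : ℕ) : HH (mT x) = HH x := SS_P mT lin_T B20 gg gg_T cT dT act_T act_T' x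

theorem len1 : B1.length = 12 := rfl
theorem len6 : B6.length = 6 := rfl
theorem len20 : B20.length = 20 := rfl

theorem level2 (r : ℕ) : SS (B6 ++ B20) gg (wr r) ≤ HH (wr r) + 3 * VV r := by
  have e : SS (B6 ++ B20) gg (wr r) = ∑ y ∈ Finset.range 64, HH (word B6 (wr r) y) := by
    rw [SS_append, SS_eq, len6]
    exact Finset.sum_congr (by norm_num) (fun _ _ => rfl)
  rw [e]
  have inv : ∀ y, HH (word B6 (wr r) (word cT6 0 y)) = HH (word B6 (wr r) y) := by
    intro y
    rw [← HH_T (word B6 (wr r) y), word_map mT lin_T, act_T6]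
    have h1 : mT (wr r) = wr r := by
      unfold wr
      rw [word_map mT lin_T, act_T1, lin_T.zero]
    rw [h1, word_zero (cT6.map (word B6 0)), word_zero B6, word_map (word B6 0) (word_lin B6), (word_lin B6).zero]
  refine (cover _ 64 cov2 cov2_eq).trans ?_
  unfold cov2
  rw [List.map_cons, List.sum_cons, fmap_sum _ _ _ 3 (fun y => HH (word B6 (wr r) y))
    (fun a => iter_sum _ 3 (fun y => HH (word B6 (wr r) y)) inv a)]
  have h0 : word B6 (wr r) 0 = wr r := by
    rw [word_zero, (word_lin B6).zero, Nat.xor_zero]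
  rw [h0]
  unfold VV Wl
  rw [mapl_eq, List.map_map]
  exact le_rfl

theorem level1 : SS (B1 ++ (B6 ++ B20)) gg 0 ≤ SS (B6 ++ B20) gg (wr 0) +
    (39 * (3 * (R3.map (fun r => SS (B6 ++ B20) gg (wr r))).sum) +
     39 * (R1.map (fun r => SS (B6 ++ B20) gg (wr r))).sum) := by
  have e : SS (B1 ++ (B6 ++ B20)) gg 0 = ∑ r ∈ Finset.range 4096, SS (B6 ++ B20) gg (wr r) := by
    rw [SS_append, SS_eq, len1]
    exact Finset.sum_congr (by norm_num) (fun _ _ => rfl)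
  rw [e]
  have iA : ∀ r, SS (B6 ++ B20) gg (wr (word cA1 0 r)) = SS (B6 ++ B20) gg (wr r) := by
    intro r
    rw [← SS_P mA lin_A (B6 ++ B20) gg gg_A cA dA act_A act_A' (wr r)]
    unfold wr
    rw [word_map mA lin_A, act_A1, word_map (word B1 0) (word_lin B1), (word_lin B1).zero, lin_A.zero]
  have iM : ∀ r, SS (B6 ++ B20) gg (wr (word cM1 0 r)) = SS (B6 ++ B20) gg (wr r) := by
    intro r
    rw [← SS_P mM lin_M (B6 ++ B20) gg gg_M cM dM act_M act_M' (wr r)]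
    unfold wr
    rw [word_map mM lin_M, act_M1, word_map (word B1 0) (word_lin B1), (word_lin B1).zero, lin_M.zero]
  refine (cover (fun r => SS (B6 ++ B20) gg (wr r)) 4096 cov1 cov1_eq).trans ?_
  generalize SS (B6 ++ B20) gg = F at *
  clear e
  have k1 : ∀ a, ((iter (word cA1 0) 39 a).map (fun r => F (wr r))).sum = 39 * F (wr a) :=
    fun a => iter_sum (word cA1 0) 39 (fun r => F (wr r)) iA a
  have k2 : ∀ a, ((iter (word cM1 0) 3 a).map (fun r => F (wr r))).sum = 3 * F (wr a) :=
    fun a => iter_sum (word cM1 0) 3 (fun r => F (wr r)) iM a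
  have k3 := fmap_sum (fun r => iter (word cA1 0) 39 r) R1 (fun r => F (wr r)) 39 (fun r => F (wr r)) k1
  have k4 : ∀ a, ((fmap (fun y => iter (word cA1 0) 39 y) (iter (word cM1 0) 3 a)).map (fun r => F (wr r))).sum =
      (39 * 3) * F (wr a) := fun a => by
    have := fmap_sum (fun y => iter (word cA1 0) 39 y) (iter (word cM1 0) 3 a) (fun r => F (wr r)) 39 (fun r => F (wr r)) k1
    rw [this, k2, mul_assoc]
  have k5 := fmap_sum (fun r => fmap (fun y => iter (word cA1 0) 39 y) (iter (word cM1 0) 3 r)) R3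
    (fun r => F (wr r)) (39 * 3) (fun r => F (wr r)) k4
  clear k1 k2 k4 iA iM
  unfold cov1
  rw [List.map_cons, List.sum_cons, List.map_append, List.sum_append, k3, k5]
  generalize (List.map (fun r => F (wr r)) R3).sum = x3
  generalize (List.map (fun r => F (wr r)) R1).sum = x1
  generalize F (wr 0) = x0
  omega

def OO (K : ℕ) : ℕ := Nat.sub (Nat.pow 2 (Nat.pow 2 K)) 1
def TT (K : ℕ) (bs : List ℕ) : List Hex := table (OO K) bs 13 0

theorem use_csum' (K : ℕ) (hK : K = 20) (bs ws : List ℕ) (hb : bs.length = K) (c : ℕ) (hw : ws.length < 128)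
    (h : csum K (OO K) (TT K bs) ws = c) : (ws.map (SS bs gg)).sum = c := by
  rw [← h]
  unfold TT OO
  exact (csum_eq K hK bs ws hb hw).symm

attribute [irreducible] OO TT

theorem use_csum (ws : List ℕ) (c : ℕ) (hw : ws.length < 128)
    (h : csum 20 (OO 20) (TT 20 B20) ws = c) : (ws.map HH).sum = c :=
  use_csum' 20 rfl B20 ws len20 c hw h

theorem Wl_len (r : ℕ) : (Wl r).length = 21 := by
  unfold Wl; rw [mapl_eq, List.length_map]; rfl

theorem use2 (r s c : ℕ) (h : csum 20 (OO 20) (TT 20 B20) (Wl r ++ Wl s) = c) : VV r + VV s = c := by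
  rw [← use_csum _ c (by rw [List.length_append, Wl_len, Wl_len]; norm_num) h, List.map_append, List.sum_append]
  rfl

theorem use1 (r c : ℕ) (h : csum 20 (OO 20) (TT 20 B20) (Wl r) = c) : VV r = c :=
  use_csum _ c (by rw [Wl_len]; norm_num) h

theorem sum_le_aux (R : List ℕ) (F H V w : ℕ → ℕ) (h : ∀ r, F (w r) ≤ H (w r) + 3 * V r) :
    (R.map (fun r => F (w r))).sum ≤ ((R.map w).map H).sum + 3 * (R.map V).sum := by
  induction R with
  | nil => simp
  | cons r t ih =>
    simp only [List.map_cons, List.sum_cons]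
    have := h r
    omega

theorem sum_le2 (R : List ℕ) : (R.map (fun r => SS (B6 ++ B20) gg (wr r))).sum ≤
    ((mapl wr R).map HH).sum + 3 * (R.map VV).sum := by
  rw [mapl_eq]
  exact sum_le_aux R (SS (B6 ++ B20) gg) HH VV wr level2

theorem pair (V : ℕ → ℕ) (a b : ℕ) (t : List ℕ) :
    ((a :: b :: t).map V).sum = (V a + V b) + (t.map V).sum := by
  simp only [List.map_cons, List.sum_cons, add_assoc]

theorem sum_R3 (V : ℕ → ℕ) (p0 : V 1 + V 6 = 14229522950167461888) (p1 : V 17 + V 18 = 14220545278812880896) (p2 : V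
    20 + V 21 = 14210498534263750656) (p3 : V 22 + V 26 = 14204098909512400896) (p4 : V 28 + V 29 =
    14181119788654264320) (p5 : V 31 + V 70 = 14212411217418387456) (p6 : V 73 + V 78 = 14236197419539759104) (p7 :
    V 86 + V 89 = 14281506397492346880) (p8 : V 90 + V 94 = 14215655912739176448) (p9 : V 95 + V 103 =
    14262113312333365248) (p10 : V 104 + V 109 = 14250158822768246784) (p11 : V 118 + V 119 = 14228818555129823232)
    (p12 : V 127 + V 343 = 14222275859649134592) (p13 : V 349 + V 365 = 14231193596882583552) (p14 : V 405 + V 409 =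
    14232636548053991424) : (R3.map V).sum = 213418753103417573376 := by
  rw [R3, pair, p0, pair, p1, pair, p2, pair, p3, pair, p4, pair, p5, pair, p6, pair, p7, pair, p8, pair, p9, pair, p10,
    pair, p11, pair, p12, pair, p13, pair, p14, List.map_nil, List.sum_nil]
  norm_num

theorem sum_R1 (V : ℕ → ℕ) (q0 : V 4 + V 5 = 14173588653695041536) (q1 : V 19 + V 27 = 14183502609666539520) (q2 : V
    93 + V 115 = 14177450548701167616) (q3 : V 277 + V 294 = 14305050833757143040) (q4 : V 359 + V 374 =
    14218912716646514688) (q5 : V 378 + V 382 = 14173930264656347136) (q6 : V 425 + V 471 = 14248748003320922112)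
    (q7 : V 494 = 7110245039946596352) : (R1.map V).sum = 106591428670390272000 := by
  rw [R1, pair, q0, pair, q1, pair, q2, pair, q3, pair, q4, pair, q5, pair, q6, List.map_cons, List.sum_cons, q7,
    List.map_nil, List.sum_nil]
  norm_num

theorem fin_arith (L a c3 c1 x v : ℕ) (hL : L ≤ a + (39 * (3 * c3) + 39 * c1)) (ha : a ≤ x + 3 * v)
    (h3 : c3 ≤ 10837270480281403392 + 3 * 213418753103417573376)
    (h1 : c1 ≤ 5406823922773524480 + 3 * 106591428670390272000)
    (hx : x = 9637713661623533568) (hv : v = 7531055695332900864) : L ≤ 88892237153663943966720 := by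
  omega

theorem HH0_aux (H w : ℕ → ℕ) (c : ℕ) (h : ((mapl w [0]).map H).sum = c) : H (w 0) = c := by
  rw [← h, mapl_eq, List.map_cons, List.map_nil, List.map_cons, List.map_nil, List.sum_cons, List.sum_nil, add_zero]

theorem HH0 (c : ℕ) (h : ((mapl wr [0]).map HH).sum = c) : HH (wr 0) = c := HH0_aux HH wr c h

theorem le_trans_sum (R : List ℕ) (c v : ℕ) (hR : (mapl wr R).length < 128)
    (h : csum 20 (OO 20) (TT 20 B20) (mapl wr R) = c) (hv : (R.map VV).sum = v) :
    (R.map (fun r => SS (B6 ++ B20) gg (wr r))).sum ≤ c + 3 * v := by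
  rw [← use_csum _ c hR h, ← hv]
  exact sum_le2 R

theorem S_bound : SS (B1 ++ (B6 ++ B20)) gg 0 ≤ 88892237153663943966720 := by
  have z0 : csum 20 (OO 20) (TT 20 B20) (mapl wr [0]) = 9637713661623533568 := by decide +kernel
  have z1 : csum 20 (OO 20) (TT 20 B20) (mapl wr R1) = 5406823922773524480 := by decide +kernel
  have z3 : csum 20 (OO 20) (TT 20 B20) (mapl wr R3) = 10837270480281403392 := by decide +kernel
  have v0 : VV 0 = 7531055695332900864 := use1 _ _ (by decide +kernel)
  have p0 : VV 1 + VV 6 = 14229522950167461888 := use2 _ _ _ (by decide +kernel)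
  have p1 : VV 17 + VV 18 = 14220545278812880896 := use2 _ _ _ (by decide +kernel)
  have p2 : VV 20 + VV 21 = 14210498534263750656 := use2 _ _ _ (by decide +kernel)
  have p3 : VV 22 + VV 26 = 14204098909512400896 := use2 _ _ _ (by decide +kernel)
  have p4 : VV 28 + VV 29 = 14181119788654264320 := use2 _ _ _ (by decide +kernel)
  have p5 : VV 31 + VV 70 = 14212411217418387456 := use2 _ _ _ (by decide +kernel)
  have p6 : VV 73 + VV 78 = 14236197419539759104 := use2 _ _ _ (by decide +kernel)
  have p7 : VV 86 + VV 89 = 14281506397492346880 := use2 _ _ _ (by decide +kernel)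
  have p8 : VV 90 + VV 94 = 14215655912739176448 := use2 _ _ _ (by decide +kernel)
  have p9 : VV 95 + VV 103 = 14262113312333365248 := use2 _ _ _ (by decide +kernel)
  have p10 : VV 104 + VV 109 = 14250158822768246784 := use2 _ _ _ (by decide +kernel)
  have p11 : VV 118 + VV 119 = 14228818555129823232 := use2 _ _ _ (by decide +kernel)
  have p12 : VV 127 + VV 343 = 14222275859649134592 := use2 _ _ _ (by decide +kernel)
  have p13 : VV 349 + VV 365 = 14231193596882583552 := use2 _ _ _ (by decide +kernel)
  have p14 : VV 405 + VV 409 = 14232636548053991424 := use2 _ _ _ (by decide +kernel)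
  have q0 : VV 4 + VV 5 = 14173588653695041536 := use2 _ _ _ (by decide +kernel)
  have q1 : VV 19 + VV 27 = 14183502609666539520 := use2 _ _ _ (by decide +kernel)
  have q2 : VV 93 + VV 115 = 14177450548701167616 := use2 _ _ _ (by decide +kernel)
  have q3 : VV 277 + VV 294 = 14305050833757143040 := use2 _ _ _ (by decide +kernel)
  have q4 : VV 359 + VV 374 = 14218912716646514688 := use2 _ _ _ (by decide +kernel)
  have q5 : VV 378 + VV 382 = 14173930264656347136 := use2 _ _ _ (by decide +kernel)
  have q6 : VV 425 + VV 471 = 14248748003320922112 := use2 _ _ _ (by decide +kernel)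
  have q7 : VV 494 = 7110245039946596352 := use1 _ _ (by decide +kernel)
  have l1 : (mapl wr R1).length < 128 := by rw [mapl_eq, List.length_map]; decide
  have l3 : (mapl wr R3).length < 128 := by rw [mapl_eq, List.length_map]; decide
  have l0 : (mapl wr [0]).length < 128 := by rw [mapl_eq, List.length_map]; decide
  exact fin_arith _ _ _ _ _ _ level1 (level2 0) (le_trans_sum R3 _ _ l3 z3 (sum_R3 VV p0 p1 p2 p3 p4 p5 p6 p7 p8 p9 p10 p11 p12 p13 p14))
    (le_trans_sum R1 _ _ l1 z1 (sum_R1 VV q0 q1 q2 q3 q4 q5 q6 q7)) (HH0 _ (use_csum _ _ l0 z0)) v0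


/-! ### the eighth moment argument -/

section moment
set_option linter.unusedSectionVars false
variable {F : Type} [Field F] [Fintype F] [DecidableEq F]

theorem two_zero (h4 : Fintype.card F = 4) : (2 : F) = 0 := by
  have h := Nat.cast_card_eq_zero (R := F)
  rw [h4] at h
  have h' : (2 : F) * 2 = 0 := by rw [← h]; norm_num
  rcases mul_eq_zero.1 h' with h | h <;> exact h

theorem pow_four (h4 : Fintype.card F = 4) (a : F) : a ^ 4 = a := by
  have := FiniteField.pow_card a; rwa [h4] at this

def psi (a : F) : ℤ := if a ^ 2 + a = 0 then 1 else -1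

theorem psi_zero : psi (0 : F) = 1 := by simp [psi]

theorem psi_add (h4 : Fintype.card F = 4) (a b : F) : psi (a + b) = psi a * psi b := by
  have h2 := two_zero h4
  have ht : ∀ a : F, a ^ 2 + a = 0 ∨ a ^ 2 + a = 1 := by
    intro a
    have h : (a ^ 2 + a) * (a ^ 2 + a - 1) = 0 := by
      linear_combination pow_four h4 a + a ^ 3 * h2
    rcases mul_eq_zero.1 h with h | h
    · exact Or.inl h
    · exact Or.inr (by linear_combination h)
  have hab : (a + b) ^ 2 + (a + b) = (a ^ 2 + a) + (b ^ 2 + b) := by linear_combination a * b * h2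
  unfold psi
  rw [hab]
  have h11 : (1 : F) + 1 = 0 := by rw [← h2]; norm_num
  rcases ht a with h | h <;> rcases ht b with h' | h' <;> rw [h, h'] <;> simp [h11]

theorem psi_cases (a : F) : psi a = 1 ∨ psi a = -1 := by
  unfold psi; split_ifs <;> simp

theorem psi_sum (h4 : Fintype.card F = 4) {ι : Type} (s : Finset ι) (f : ι → F) :
    psi (∑ i ∈ s, f i) = ∏ i ∈ s, psi (f i) := by
  classical
  induction s using Finset.induction_on with
  | empty => simp [psi_zero]
  | insert a s ha ih => rw [Finset.sum_insert ha, Finset.prod_insert ha, psi_add h4, ih]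

theorem exists_psi (h4 : Fintype.card F = 4) : ∃ a : F, psi a = -1 := by
  by_contra h
  push Not at h
  have h1 : ∀ a : F, a = 0 ∨ a = 1 := by
    intro a
    have h2 := (psi_cases a).resolve_right (h a)
    unfold psi at h2
    have h3 : a ^ 2 + a = 0 := by by_contra h3; rw [if_neg h3] at h2; norm_num at h2
    have h5 : a * (a - 1) = 0 := by linear_combination h3 - a * two_zero h4
    rcases mul_eq_zero.1 h5 with h | h
    · exact Or.inl h
    · exact Or.inr (by linear_combination h)
  have : (Finset.univ : Finset F) ⊆ {0, 1} := by
    intro a _; simpa using h1 a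
  have := Finset.card_le_card this
  rw [Finset.card_univ, h4] at this
  have := this.trans (Finset.card_le_two)
  omega

theorem sum_psi (h4 : Fintype.card F = 4) : ∑ a : F, psi a = 0 := by
  obtain ⟨b, hb⟩ := exists_psi h4
  have : ∑ a : F, psi a = ∑ a : F, psi (b + a) := (Equiv.sum_comp (Equiv.addLeft b) psi).symm
  simp only [psi_add h4, hb] at this
  rw [← Finset.mul_sum] at this
  linarith

theorem sum_psi_mul (h4 : Fintype.card F = 4) (v : F) :
    ∑ l : {l : F // l ≠ 0}, psi (l.1 * v) = 3 - 4 * (if v ≠ 0 then 1 else 0) := by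
  have h : ∑ l : {l : F // l ≠ 0}, psi (l.1 * v) = ∑ l : F, psi (l * v) - psi (0 * v) := by
    rw [← Finset.sum_erase_add _ _ (Finset.mem_univ (0 : F)), add_sub_cancel_right]
    exact (Finset.sum_subtype (Finset.univ.erase (0 : F)) (by simp) (fun l => psi (l * v))).symm
  rw [h, zero_mul, psi_zero]
  by_cases hv : v = 0
  · simp [hv, psi_zero, h4]
  · have := Equiv.sum_comp (Equiv.mulRight₀ v hv) (psi (F := F))
    rw [sum_psi h4] at this
    have e : ∑ l : F, psi (l * v) = 0 := this
    rw [e, if_pos hv]; norm_num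

def hwt {n : ℕ} (v : Fin n → F) : ℕ := ∑ c, if v c ≠ 0 then 1 else 0

abbrev Idx (F : Type) [Field F] := Fin 78 × {l : F // l ≠ 0}

def UU {n : ℕ} (τ : Fin n → Idx F) : Fin 78 → F := ∑ i, Pi.single (τ i).1 (τ i).2.1

theorem kraw (h4 : Fintype.card F = 4) (v : Fin 78 → F) :
    ∑ p : Idx F, psi (p.2.1 * v p.1) = 234 - 4 * (hwt v : ℤ) := by
  rw [Fintype.sum_prod_type]
  simp only [sum_psi_mul h4]
  rw [Finset.sum_sub_distrib, ← Finset.mul_sum, Finset.sum_const, Finset.card_univ, Fintype.card_fin]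
  unfold hwt
  rw [Nat.cast_sum]
  have : ∀ c, (((if v c ≠ 0 then 1 else 0 : ℕ)) : ℤ) = if v c ≠ 0 then 1 else 0 := by
    intro c; split_ifs <;> rfl
  rw [Finset.sum_congr rfl (fun c _ => this c)]
  rfl

theorem UU_dot {n : ℕ} (τ : Fin n → Idx F) (v : Fin 78 → F) :
    ∑ c, UU τ c * v c = ∑ i, (τ i).2.1 * v (τ i).1 := by
  unfold UU
  simp only [Finset.sum_apply, Finset.sum_mul]
  rw [Finset.sum_comm]
  apply Finset.sum_congr rfl
  intro i _
  rw [Finset.sum_eq_single (τ i).1]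
  · simp
  · intro c _ hc; simp [Pi.single_eq_of_ne hc]
  · simp

theorem kpow (h4 : Fintype.card F = 4) (v : Fin 78 → F) :
    (234 - 4 * (hwt v : ℤ)) ^ 8 = ∑ τ : Fin 8 → Idx F, psi (∑ c, UU τ c * v c) := by
  rw [← kraw h4, Fintype.sum_pow]
  apply Finset.sum_congr rfl
  intro τ _
  rw [UU_dot, psi_sum h4]

theorem full_sum (h4 : Fintype.card F = 4) (u : Fin 78 → F) :
    ∑ v : Fin 78 → F, psi (∑ c, u c * v c) = if u = 0 then 2 ^ 156 else 0 := by
  split_ifs with hu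
  · subst hu
    simp [psi_zero, h4]
  · obtain ⟨c, hc⟩ := Function.ne_iff.1 hu
    obtain ⟨b, hb⟩ := exists_psi h4
    set v0 : Fin 78 → F := Pi.single c ((u c)⁻¹ * b) with hv0
    have e : ∑ v : Fin 78 → F, psi (∑ c, u c * v c) = ∑ v : Fin 78 → F, psi (∑ c, u c * (v0 + v) c) :=
      (Equiv.sum_comp (Equiv.addLeft v0) (fun v => psi (∑ c, u c * v c))).symm
    have h0 : ∑ c, u c * v0 c = b := by
      rw [Finset.sum_eq_single c]
      · rw [hv0, Pi.single_eq_same, ← mul_assoc, mul_inv_cancel₀ hc, one_mul]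
      · intro d _ hd; rw [hv0, Pi.single_eq_of_ne hd, mul_zero]
      · simp
    have h1 : ∀ v : Fin 78 → F, psi (∑ c, u c * (v0 + v) c) = - psi (∑ c, u c * v c) := by
      intro v
      simp only [Pi.add_apply, mul_add, Finset.sum_add_distrib]
      rw [h0, psi_add h4, hb, neg_one_mul]
    simp only [h1, Finset.sum_neg_distrib] at e
    linarith

/-- every nonzero vector of weight at most `n` is a sum of `n` nonzero monomials -/
theorem exists_UU (h4 : Fintype.card F = 4) (n : ℕ) (u : Fin 78 → F) (hu : u ≠ 0) (hw : hwt u ≤ n) :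
    ∃ τ : Fin n → Idx F, UU τ = u := by
  have step : ∀ n (c : Fin 78) (l : F) (hl : l ≠ 0) (u : Fin 78 → F) (τ : Fin n → Idx F),
      UU τ = u - Pi.single c l → ∃ τ' : Fin (n + 1) → Idx F, UU τ' = u := by
    intro n c l hl u τ h
    refine ⟨Fin.cons (c, ⟨l, hl⟩) τ, ?_⟩
    unfold UU at *
    rw [Fin.sum_univ_succ]
    simp only [Fin.cons_zero, Fin.cons_succ]
    rw [h]; abel
  have hne : ∀ (u : Fin 78 → F) (c : Fin 78) (l : F), hwt (u - Pi.single c l) + (if u c ≠ 0 then 1 else 0) =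
      hwt u + (if u c ≠ l then 1 else 0) := by
    intro u c l
    unfold hwt
    rw [← Finset.sum_erase_add _ _ (Finset.mem_univ c), 
      ← Finset.sum_erase_add _ (fun d => if u d ≠ 0 then 1 else 0) (Finset.mem_univ c)]
    have : ∑ d ∈ Finset.univ.erase c, (if (u - Pi.single c l : Fin 78 → F) d ≠ 0 then 1 else 0) =
        ∑ d ∈ Finset.univ.erase c, (if u d ≠ 0 then 1 else 0) := by
      apply Finset.sum_congr rfl
      intro d hd
      rw [Pi.sub_apply, Pi.single_eq_of_ne (Finset.ne_of_mem_erase hd), sub_zero]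
    rw [this, Pi.sub_apply, Pi.single_eq_same]
    simp only [ne_eq, sub_eq_zero]
    ring
  have hz : ∀ u : Fin 78 → F, hwt u = 0 ↔ u = 0 := by
    intro u
    unfold hwt
    rw [Finset.sum_eq_zero_iff]
    simp [funext_iff]
  induction n generalizing u with
  | zero => exact absurd ((hz u).1 (by omega)) hu
  | succ n ih =>
    obtain ⟨c, hc⟩ := Function.ne_iff.1 hu
    simp only [Pi.zero_apply] at hc
    by_cases h : hwt u ≤ n
    · -- split a coefficient
      have : ∃ l : F, l ∉ ({0, u c} : Finset F) := by
        by_contra h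
        push Not at h
        have := Finset.card_le_card (fun l _ => h l : (Finset.univ : Finset F) ⊆ {0, u c})
        rw [Finset.card_univ, h4] at this
        have := this.trans (Finset.card_le_two)
        omega
      obtain ⟨l, hl⟩ := this
      simp only [Finset.mem_insert, Finset.mem_singleton, not_or] at hl
      have h1 := hne u c l
      rw [if_pos hc, if_pos (Ne.symm hl.2)] at h1
      have h2 : u - Pi.single c l ≠ 0 := by
        intro h0; rw [h0] at h1
        have h3 : hwt u ≠ 0 := fun h => hu ((hz u).1 h)
        have := (hz (0 : Fin 78 → F)).2 rfl
        omega
      obtain ⟨τ, hτ⟩ := ih _ h2 (by omega)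
      exact step n c l hl.1 u τ hτ
    · have h1 := hne u c (u c)
      rw [if_pos hc, if_neg (by simp)] at h1
      by_cases hn : n = 0
      · subst hn
        refine step 0 c (u c) hc u Fin.elim0 ?_
        rw [(hz _).1 (by omega : hwt (u - Pi.single c (u c)) = 0)]
        simp [UU]
      · have h2 : u - Pi.single c (u c) ≠ 0 := by
          intro h0
          rw [(hz _).2 h0] at h1
          omega
        obtain ⟨τ, hτ⟩ := ih _ h2 (by omega)
        exact step n c (u c) hc u τ hτ

end moment


section moment2
variable {F : Type} [Field F] [Fintype F] [DecidableEq F]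
set_option linter.unusedSectionVars false

theorem hwt_cons {n : ℕ} (a : F) (v : Fin n → F) :
    hwt (Fin.cons a v : Fin (n + 1) → F) = (if a ≠ 0 then 1 else 0) + hwt v := by
  unfold hwt
  rw [Fin.sum_univ_succ]
  simp only [Fin.cons_zero, Fin.cons_succ]

theorem T_succ (h4 : Fintype.card F = 4) (n : ℕ) (g : ℕ → ℕ) :
    ∑ v : Fin (n + 1) → F, g (hwt v) = ∑ v : Fin n → F, (g (hwt v) + 3 * g (hwt v + 1)) := by
  rw [← Equiv.sum_comp (Fin.consEquiv (fun _ : Fin (n + 1) => F)) (fun v => g (hwt v)),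
    Fintype.sum_prod_type, Finset.sum_comm]
  apply Finset.sum_congr rfl
  intro v _
  have h : ∀ a : F, g (hwt ((Fin.consEquiv (fun _ : Fin (n + 1) => F)) (a, v))) =
      g ((if a ≠ 0 then 1 else 0) + hwt v) := fun a => congrArg g (hwt_cons a v)
  rw [Finset.sum_congr rfl (fun a _ => h a), ← Finset.sum_erase_add _ _ (Finset.mem_univ (0 : F)),
    Finset.sum_congr rfl (g := fun _ => g (hwt v + 1)) (fun a ha => by
      rw [if_pos (Finset.ne_of_mem_erase ha), add_comm]), Finset.sum_const, Finset.card_erase_of_mem (Finset.mem_univ _),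
    Finset.card_univ, h4, if_neg (by simp), zero_add, smul_eq_mul, add_comm]

def stp (l : List ℕ) : List ℕ := List.zipWith (fun a b => Nat.add a (Nat.mul 3 b)) l l.tail

def evl (n : ℕ) (l : List ℕ) : List ℕ := @Nat.rec (fun _ => List ℕ → List ℕ) (fun l => l) (fun _ ih l => ih (stp l)) n l

theorem stp_map (m s : ℕ) (g : ℕ → ℕ) : stp ((List.range' s (m + 1)).map g) =
    (List.range' s m).map (fun k => g k + 3 * g (k + 1)) := by
  induction m generalizing s with
  | zero => rfl
  | succ m ih =>
    have h1 : List.range' s (m + 1 + 1) = s :: List.range' (s + 1) (m + 1) := rfl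
    have h2 : List.range' s (m + 1) = s :: List.range' (s + 1) m := rfl
    have h3 : List.range' (s + 1) (m + 1) = (s + 1) :: List.range' (s + 1 + 1) m := rfl
    rw [h1, h2, List.map_cons, List.map_cons, ← ih (s + 1), h3, List.map_cons]
    rfl

theorem T_evl (h4 : Fintype.card F = 4) (n : ℕ) (g : ℕ → ℕ) :
    evl n ((List.range' 0 (n + 1)).map g) = [∑ v : Fin n → F, g (hwt v)] := by
  induction n generalizing g with
  | zero =>
    have : ∑ v : Fin 0 → F, g (hwt v) = g 0 := by
      rw [Fintype.sum_unique]; rfl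
    rw [this]; rfl
  | succ n ih =>
    have : evl (n + 1) ((List.range' 0 (n + 1 + 1)).map g) = evl n (stp ((List.range' 0 (n + 1 + 1)).map g)) := rfl
    rw [this, stp_map, ih, T_succ h4]

theorem evl_val : evl 78 ((List.range' 0 79).map ff) = [88892237153663943966720 * 2 ^ 118] := by decide +kernel

theorem E_val (h4 : Fintype.card F = 4) : ∑ v : Fin 78 → F, ff (hwt v) = 88892237153663943966720 * 2 ^ 118 := by
  have h1 := T_evl (F := F) h4 78 ff
  have h2 := h1.symm.trans evl_val
  exact (List.cons.inj h2).1

theorem ff_cast (w : ℕ) : (ff w : ℤ) = (234 - 4 * (w : ℤ)) ^ 8 := by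
  have : ff w = ((234 - 4 * w) + (4 * w - 234)) ^ 8 := rfl
  rw [this, Nat.cast_pow]
  rcases le_total (4 * w) 234 with h | h
  · rw [Nat.sub_eq_zero_of_le h, add_zero, Nat.cast_sub h]; push_cast; rfl
  · rw [Nat.sub_eq_zero_of_le h, zero_add, Nat.cast_sub h, ← Even.neg_pow (by decide : Even 8)]; push_cast; ring

def dec (w : F) (x : ℕ) : Fin 78 → F := fun c =>
  (if x.testBit c then 1 else 0) + (if x.testBit (78 + c) then w else 0)

theorem ite_xor (h4 : Fintype.card F = 4) (a b : Bool) (t : F) :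
    (if (a ^^ b) then t else 0) = (if a then t else 0) + (if b then t else 0) := by
  have h2 := two_zero h4
  have : t + t = 0 := by linear_combination t * h2
  cases a <;> cases b <;> simp [this]

theorem dec_xor (h4 : Fintype.card F = 4) (w : F) (x y : ℕ) : dec w (x ^^^ y) = dec w x + dec w y := by
  funext c
  simp only [dec, Pi.add_apply, Nat.testBit_xor, ite_xor h4]
  ring

theorem dec_zero (w : F) : dec w 0 = 0 := by
  funext c; simp [dec]

theorem dec_scal (h4 : Fintype.card F = 4) (w : F) (hw : w ^ 2 + w + 1 = 0) (x : ℕ) :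
    dec w (scal x) = fun c => w * dec w x c := by
  have h2 := two_zero h4
  funext c
  simp only [dec]
  rw [scal_lo x c c.2, scal_hi, decide_eq_true c.2, Bool.true_and, ite_xor h4]
  cases x.testBit c <;> cases x.testBit (78 + c) <;> simp
  · linear_combination (w + 1) * h2 - hw
  · linear_combination (w + 1) * h2 - hw

theorem w_ne (w : F) (hw : w ^ 2 + w + 1 = 0) : w ≠ 0 := by
  rintro rfl; simp at hw

theorem w_ne1 (w : F) (hw : w ^ 2 + w + 1 = 0) : 1 + w ≠ 0 := by
  intro h
  have : w ^ 2 = 0 := by linear_combination hw - h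
  exact w_ne w hw (pow_eq_zero_iff (two_ne_zero) |>.1 this)

theorem dec_ne (w : F) (hw : w ^ 2 + w + 1 = 0) (x : ℕ) (c : Fin 78) :
    dec w x c ≠ 0 ↔ hh x c = true := by
  have h0 := w_ne w hw
  have h1 := w_ne1 w hw
  unfold dec hh
  cases x.testBit c <;> cases x.testBit (78 + c) <;> simp [h0, h1]

theorem hwt_dec (w : F) (hw : w ^ 2 + w + 1 = 0) (x : ℕ) : hwt (dec w x) = wt x := by
  unfold hwt wt
  rw [Finset.sum_range]
  apply Finset.sum_congr rfl
  intro c _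
  have := dec_ne w hw x c
  by_cases h : hh x c = true
  · rw [if_pos (this.2 h), h]; rfl
  · rw [if_neg (fun h' => h (this.1 h')), Bool.eq_false_iff.2 h]; rfl

def ZZ (bs : List ℕ) (f : ℕ → ℤ) : ℕ → ℤ :=
  match bs with
  | [] => f
  | b :: bs => fun w => ZZ bs f w + ZZ bs f (w ^^^ b)

theorem ZZ_cast (bs : List ℕ) (g : ℕ → ℕ) (w : ℕ) : (SS bs g w : ℤ) = ZZ bs (fun x => (g x : ℤ)) w := by
  induction bs generalizing w with
  | nil => rfl
  | cons b t ih => rw [SS, ZZ, Nat.cast_add, ih, ih]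

theorem ZZ_sum {ι : Type} (s : Finset ι) (f : ι → ℕ → ℤ) (bs : List ℕ) (w : ℕ) :
    ZZ bs (fun x => ∑ i ∈ s, f i x) w = ∑ i ∈ s, ZZ bs (f i) w := by
  induction bs generalizing w with
  | nil => rfl
  | cons b t ih => simp only [ZZ]; rw [ih, ih, Finset.sum_add_distrib]

theorem ZZ_char (f : ℕ → ℤ) (hf : ∀ x y, f (x ^^^ y) = f x * f y) (bs : List ℕ) (w : ℕ) :
    ZZ bs f w = f w * (bs.map (fun b => 1 + f b)).prod := by
  induction bs generalizing w with
  | nil => simp [ZZ]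
  | cons b t ih => simp only [ZZ]; rw [ih, ih, hf, List.map_cons, List.prod_cons]; ring

def chi (w : F) (u : Fin 78 → F) (x : ℕ) : ℤ := psi (∑ c, u c * dec w x c)

theorem chi_xor (h4 : Fintype.card F = 4) (w : F) (u : Fin 78 → F) (x y : ℕ) :
    chi w u (x ^^^ y) = chi w u x * chi w u y := by
  unfold chi
  rw [dec_xor h4, ← psi_add h4, ← Finset.sum_add_distrib]
  simp only [Pi.add_apply, mul_add]

theorem chi_zero (w : F) (u : Fin 78 → F) : chi w u 0 = 1 := by
  unfold chi
  rw [dec_zero]; simp [psi_zero]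

theorem ZZ_nonneg (h4 : Fintype.card F = 4) (w : F) (u : Fin 78 → F) (bs : List ℕ) : 0 ≤ ZZ bs (chi w u) 0 := by
  rw [ZZ_char _ (chi_xor h4 w u), chi_zero, one_mul]
  apply List.prod_nonneg
  intro a ha
  obtain ⟨b, _, rfl⟩ := List.mem_map.1 ha
  rcases psi_cases (∑ c, u c * dec w b c) with h | h <;> simp [chi, h]

theorem ZZ_one (h4 : Fintype.card F = 4) (w : F) (u : Fin 78 → F) (bs : List ℕ) (h : ∀ b ∈ bs, chi w u b = 1) :
    ZZ bs (chi w u) 0 = 2 ^ bs.length := by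
  rw [ZZ_char _ (chi_xor h4 w u), chi_zero, one_mul, List.map_congr_left (g := fun _ => (2 : ℤ))
    (fun b hb => by rw [h b hb]; norm_num)]
  simp

theorem contra (h4 : Fintype.card F = 4) (w : F) (hw : w ^ 2 + w + 1 = 0) (bs : List ℕ) (hl : bs.length = 38)
    (hS : SS bs gg 0 ≤ 88892237153663943966720) (u : Fin 78 → F) (hu : u ≠ 0) (hu8 : hwt u ≤ 8)
    (hb : ∀ b ∈ bs, chi w u b = 1) : False := by
  have e1 : (SS bs gg 0 : ℤ) = ∑ τ : Fin 8 → Idx F, ZZ bs (chi w (UU τ)) 0 := by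
    rw [ZZ_cast, ← ZZ_sum]
    congr 1
    funext x
    unfold gg chi
    rw [ff_cast, ← hwt_dec w hw, kpow h4]
  have e2 : ((88892237153663943966720 * 2 ^ 118 : ℕ) : ℤ) = ∑ τ : Fin 8 → Idx F, (if UU τ = 0 then 2 ^ 156 else 0) := by
    rw [← E_val (F := F) h4, Nat.cast_sum]
    simp only [ff_cast, kpow h4]
    rw [Finset.sum_comm]
    exact Finset.sum_congr rfl (fun τ _ => full_sum h4 _)
  obtain ⟨τ0, h0⟩ := exists_UU h4 8 u hu hu8
  have e3 : ∑ τ : Fin 8 → Idx F, (if UU τ = 0 then (2 : ℤ) ^ 156 else 0) <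
      ∑ τ : Fin 8 → Idx F, 2 ^ 118 * ZZ bs (chi w (UU τ)) 0 := by
    apply Finset.sum_lt_sum
    · intro τ _
      split_ifs with h
      · rw [h, ZZ_one h4, hl]
        · norm_num
        · intro b _; unfold chi; simp [psi_zero]
      · have := ZZ_nonneg h4 w (UU τ) bs
        positivity
    · refine ⟨τ0, Finset.mem_univ _, ?_⟩
      rw [h0, if_neg hu, ZZ_one h4 w u bs hb]
      positivity
  rw [← Finset.mul_sum, ← e1, ← e2] at e3
  have e4 : 88892237153663943966720 * 2 ^ 118 < 2 ^ 118 * SS bs gg 0 := by exact_mod_cast e3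
  have e5 := Nat.mul_le_mul_left (2 ^ 118) hS
  rw [Nat.mul_comm] at e4
  exact absurd (e4.trans_le e5) (lt_irrefl _)

end moment2


/-! ### the code -/

def UR : List ℕ := [0xc656c000000000000006a773, 0x1635a800000000000000488df, 0xb73b4000000000000003685b,
    0x16e768000000000000006d0b6, 0xad634000000000000007d889, 0x1b5318000000000000006772b,
    0xbf0f800000000000000511f9, 0x191e80000000000000003e5cb, 0x1bda94000000000000004744a,
    0x10adcc0000000000000029171, 0x8bc0c0000000000000069d3e, 0x1f8768000000000000004fc45,
    0x1f3718000000000000002dc3f, 0x1789a400000000000000607a2, 0x80bac00000000000000676a1,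
    0x1ee8280000000000000052b7b, 0x1ac8b40000000000000002f13, 0x1c76fc000000000000003e1fa,
    0x18a28c0000000000000016ab4]
def W9 : ℕ := 0x9400080000002000000060103000000200000
def GG : List ℕ := GK1 ++ (GK2 ++ GIn)

def xf (n : ℕ) (f : ℕ → Bool) : Bool := @Nat.rec (fun _ => Bool) false (fun k ih => Bool.xor ih (f k)) n

def d0 (x y : ℕ) : Bool := xf 78 (fun c => Bool.xor (tb x c && tb y c) (tb x (78 + c) && tb y (78 + c)))
def d1 (x y : ℕ) : Bool := xf 78 (fun c =>
  Bool.xor (Bool.xor (tb x c && tb y (78 + c)) (tb x (78 + c) && tb y c)) (tb x (78 + c) && tb y (78 + c)))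
def cj (x : ℕ) : ℕ := Nat.xor x (Nat.mod (Nat.shiftRight x 78) (Nat.pow 2 78))

def zero2 (x y : ℕ) : Bool := !(d0 x y) && !(d1 x y)
def one2 (x y : ℕ) : Bool := d0 x y && !(d1 x y)

theorem GG_len : GG.length = 19 := rfl

theorem chk_orth : ∀ r < 19, ∀ s < 19, zero2 (cj (GG.getD r 0)) (GG.getD s 0) = true := by decide +kernel
theorem chk_inv : ∀ r < 19, ∀ s < 19, (if r = s then one2 (UR.getD r 0) (GG.getD s 0) else
  zero2 (UR.getD r 0) (GG.getD s 0)) = true := by decide +kernel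
theorem chk_W9 : ∀ s < 19, zero2 W9 (GG.getD s 0) = true := by decide +kernel
theorem wt_W9 : wt W9 = 9 := by decide +kernel

section code
variable {F : Type} [Field F] [Fintype F] [DecidableEq F]
set_option linter.unusedSectionVars false

theorem xf_sum (h4 : Fintype.card F = 4) (n : ℕ) (f : ℕ → Bool) (t : F) :
    ∑ c : Fin n, (if f c then t else 0) = if xf n f then t else 0 := by
  induction n with
  | zero => simp [xf]
  | succ n ih =>
    have : xf (n + 1) f = (xf n f ^^ f n) := rfl
    rw [Fin.sum_univ_castSucc, this, ite_xor h4, ← ih]; rfl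

theorem dot_eq (h4 : Fintype.card F = 4) (w : F) (hw : w ^ 2 + w + 1 = 0) (x y : ℕ) :
    ∑ c, dec w x c * dec w y c = (if d0 x y then 1 else 0) + (if d1 x y then w else 0) := by
  have h2 := two_zero h4
  have hw' : w * w = 1 + w := by linear_combination hw - (1 + w) * h2
  unfold d0 d1
  rw [← xf_sum h4, ← xf_sum h4, ← Finset.sum_add_distrib]
  apply Finset.sum_congr rfl
  intro c _
  simp only [dec, tb_eq, ite_xor h4]
  cases x.testBit c <;> cases y.testBit c <;> cases x.testBit (78 + c) <;> cases y.testBit (78 + c) <;>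
    simp [hw'] <;> linear_combination hw'

theorem dot_zero (h4 : Fintype.card F = 4) (w : F) (hw : w ^ 2 + w + 1 = 0) (x y : ℕ) (h : zero2 x y = true) :
    ∑ c, dec w x c * dec w y c = 0 := by
  rw [dot_eq h4 w hw]
  simp only [zero2, Bool.and_eq_true, Bool.not_eq_true'] at h
  simp [h]

theorem dot_one (h4 : Fintype.card F = 4) (w : F) (hw : w ^ 2 + w + 1 = 0) (x y : ℕ) (h : one2 x y = true) :
    ∑ c, dec w x c * dec w y c = 1 := by
  rw [dot_eq h4 w hw]
  simp only [one2, Bool.and_eq_true, Bool.not_eq_true'] at h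
  simp [h]

theorem cj_lo (x c : ℕ) (hc : c < 78) : (cj x).testBit c = (x.testBit c ^^ x.testBit (78 + c)) := by
  change (x ^^^ ((x >>> 78) % 2 ^ 78)).testBit c = _
  rw [Nat.testBit_xor, Nat.testBit_mod_two_pow, Nat.testBit_shiftRight]
  simp [hc]

theorem cj_hi (x c : ℕ) : (cj x).testBit (78 + c) = x.testBit (78 + c) := by
  change (x ^^^ ((x >>> 78) % 2 ^ 78)).testBit _ = _
  rw [Nat.testBit_xor, Nat.testBit_mod_two_pow]
  simp

theorem dec_cj (h4 : Fintype.card F = 4) (w : F) (hw : w ^ 2 + w + 1 = 0) (x : ℕ) (c : Fin 78) :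
    dec w (cj x) c = dec w x c ^ 2 := by
  have h2 := two_zero h4
  simp only [dec]
  rw [cj_lo x c c.2, cj_hi, ite_xor h4]
  cases x.testBit c <;> cases x.testBit (78 + c) <;> simp
  · linear_combination (1 + w) * h2 - hw
  · linear_combination h2 - hw

def row (w : F) (r : Fin 19) : Fin 78 → F := dec w (GG.getD r 0)
def rinv (w : F) (r : Fin 19) : Fin 78 → F := dec w (UR.getD r 0)

def phi (w : F) : (Fin 78 → F) →ₗ[F] (Fin 19 → F) where
  toFun u := fun r => ∑ c, u c * row w r c
  map_add' u v := by
    funext r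
    simp only [Pi.add_apply, add_mul, Finset.sum_add_distrib]
  map_smul' a u := by
    funext r
    simp only [Pi.smul_apply, smul_eq_mul, mul_assoc, Finset.mul_sum, RingHom.id_apply]

theorem phi_apply (w : F) (u : Fin 78 → F) (r : Fin 19) : phi w u r = ∑ c, u c * row w r c := rfl

theorem phi_rinv (h4 : Fintype.card F = 4) (w : F) (hw : w ^ 2 + w + 1 = 0) (r s : Fin 19) :
    phi w (rinv w r) s = if r = s then 1 else 0 := by
  rw [phi_apply]
  have := chk_inv r r.2 s s.2
  split_ifs with h
  · rw [if_pos (by rw [h])] at this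
    exact dot_one h4 w hw _ _ this
  · rw [if_neg (fun h' => h (Fin.ext h'))] at this
    exact dot_zero h4 w hw _ _ this

theorem phi_comb (h4 : Fintype.card F = 4) (w : F) (hw : w ^ 2 + w + 1 = 0) (a : Fin 19 → F) :
    phi w (∑ r, a r • rinv w r) = a := by
  funext s
  rw [map_sum, Finset.sum_apply, Finset.sum_eq_single s]
  · rw [map_smul, Pi.smul_apply, phi_rinv h4 w hw, if_pos rfl, smul_eq_mul, mul_one]
  · intro r _ hr
    rw [map_smul, Pi.smul_apply, phi_rinv h4 w hw, if_neg hr, smul_eq_mul, mul_zero]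
  · simp

theorem finrank_ker (h4 : Fintype.card F = 4) (w : F) (hw : w ^ 2 + w + 1 = 0) :
    Module.finrank F (LinearMap.ker (phi w)) = 59 := by
  have h1 := LinearMap.finrank_range_add_finrank_ker (phi w)
  have h2 : LinearMap.range (phi w) = ⊤ := LinearMap.range_eq_top.2 (fun a => ⟨_, phi_comb h4 w hw a⟩)
  rw [h2, finrank_top, Module.finrank_fin_fun, Module.finrank_fin_fun] at h1
  omega

theorem dual_ker (h4 : Fintype.card F = 4) (w : F) (hw : w ^ 2 + w + 1 = 0) (v : Fin 78 → F)
    (hv : ∀ u, phi w u = 0 → ∑ c, u c * v c ^ 2 = 0) : phi w v = 0 := by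
  have hL : ∀ u : Fin 78 → F, ∑ c, u c * v c ^ 2 = ∑ r, phi w u r * ∑ c, rinv w r c * v c ^ 2 := by
    intro u
    have h := hv (u - ∑ r, phi w u r • rinv w r) (by rw [map_sub, phi_comb h4 w hw, sub_self])
    simp only [Pi.sub_apply, sub_mul, Finset.sum_sub_distrib, Finset.sum_apply, Pi.smul_apply, smul_eq_mul,
      Finset.sum_mul] at h
    rw [sub_eq_zero.1 h, Finset.sum_comm]
    simp only [Finset.mul_sum, mul_assoc]
  generalize hm : (fun r => ∑ c, rinv w r c * v c ^ 2) = μ at hL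
  have hL' : ∀ u : Fin 78 → F, ∑ c, u c * v c ^ 2 = ∑ r, phi w u r * μ r := by
    intro u; rw [hL u, ← hm]
  have hc : ∀ c, v c ^ 2 = ∑ r, row w r c * μ r := by
    intro c
    have h := hL' (Pi.single c 1)
    rw [Finset.sum_eq_single c (by intro d _ hd; rw [Pi.single_eq_of_ne hd, zero_mul]) (by simp),
      Pi.single_eq_same, one_mul] at h
    rw [h]
    apply Finset.sum_congr rfl
    intro r _
    rw [phi_apply, Finset.sum_eq_single c (by intro d _ hd; rw [Pi.single_eq_of_ne hd, zero_mul]) (by simp),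
      Pi.single_eq_same, one_mul]
  haveI : CharP F 2 := CharTwo.of_one_ne_zero_of_two_eq_zero one_ne_zero (two_zero h4)
  have hc2 : ∀ c, v c = ∑ r, row w r c ^ 2 * μ r ^ 2 := by
    intro c
    have : v c = (v c ^ 2) ^ 2 := by rw [← pow_mul]; exact (pow_four h4 _).symm
    rw [this, hc c, CharTwo.sum_sq]
    simp only [mul_pow]
  funext s
  rw [phi_apply, Finset.sum_congr rfl (fun c _ => by rw [hc2 c])]
  simp only [Finset.sum_mul]
  rw [Finset.sum_comm]
  apply Finset.sum_eq_zero
  intro r _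
  have h := dot_zero h4 w hw _ _ (chk_orth r r.2 s s.2)
  have e : ∑ c, row w r c ^ 2 * μ r ^ 2 * row w s c = μ r ^ 2 * ∑ c, dec w (cj (GG.getD r 0)) c * dec w (GG.getD s 0) c := by
    rw [Finset.mul_sum]
    apply Finset.sum_congr rfl
    intro c _
    rw [dec_cj h4 w hw]
    unfold row; ring
  rw [e, h, mul_zero]

theorem mem_dbl (l : List ℕ) (b : ℕ) (h : b ∈ dbl l) : ∃ g ∈ l, b = g ∨ b = scal g := by
  induction l with
  | nil => exact absurd h (by simp [dbl])
  | cons g t ih =>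
    have : dbl (g :: t) = g :: scal g :: dbl t := rfl
    rw [this, List.mem_cons, List.mem_cons] at h
    rcases h with h | h | h
    · exact ⟨g, by simp, Or.inl h⟩
    · exact ⟨g, by simp, Or.inr h⟩
    · obtain ⟨g', h1, h2⟩ := ih h
      exact ⟨g', by simp [h1], h2⟩

theorem mem_BB (b : ℕ) (h : b ∈ B1 ++ (B6 ++ B20)) : ∃ g ∈ GG, b = g ∨ b = scal g := by
  rw [List.mem_append, List.mem_append] at h
  unfold GG
  rcases h with h | h | h <;> obtain ⟨g, h1, h2⟩ := mem_dbl _ _ h <;> exact ⟨g, by simp [h1], h2⟩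

theorem len_BB : (B1 ++ (B6 ++ B20)).length = 38 := rfl

theorem chi_BB (h4 : Fintype.card F = 4) (w : F) (hw : w ^ 2 + w + 1 = 0) (u : Fin 78 → F) (hu : phi w u = 0) :
    ∀ b ∈ B1 ++ (B6 ++ B20), chi w u b = 1 := by
  intro b hb
  obtain ⟨g, hg, h⟩ := mem_BB b hb
  obtain ⟨i, hi, rfl⟩ := List.getElem_of_mem hg
  have h0 : ∑ c, u c * dec w GG[i] c = 0 := by
    have := congrFun hu ⟨i, hi⟩
    rw [phi_apply] at this
    unfold row at this
    rw [List.getD_eq_getElem _ _ hi] at this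
    exact this
  unfold chi
  rcases h with rfl | rfl
  · rw [h0, psi_zero]
  · rw [dec_scal h4 w hw]
    have : ∑ c, u c * (w * dec w GG[i] c) = w * ∑ c, u c * dec w GG[i] c := by
      rw [Finset.mul_sum]; exact Finset.sum_congr rfl (fun c _ => by ring)
    rw [this, h0, mul_zero, psi_zero]

theorem W9_mem (h4 : Fintype.card F = 4) (w : F) (hw : w ^ 2 + w + 1 = 0) : phi w (dec w W9) = 0 := by
  funext s
  exact dot_zero h4 w hw _ _ (chk_W9 s s.2)

theorem exists_w (h4 : Fintype.card F = 4) : ∃ w : F, w ^ 2 + w + 1 = 0 := by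
  obtain ⟨a, ha⟩ := exists_psi h4
  refine ⟨a, ?_⟩
  unfold psi at ha
  have h : a ^ 2 + a ≠ 0 := by intro h; rw [if_pos h] at ha; norm_num at ha
  have h' : (a ^ 2 + a) * (a ^ 2 + a + 1) = 0 := by
    linear_combination pow_four h4 a + (a ^ 3 + a ^ 2 + a) * two_zero h4
  exact (mul_eq_zero.1 h').resolve_left h

end code


theorem final_gen {F : Type} [Field F] [Fintype F] [DecidableEq F] (h4 : Fintype.card F = 4) :
    ∃ K : Submodule F (Fin 78 → F), Module.finrank F ↥K = 59 ∧
      (∀ u ∈ K, u ≠ 0 → 9 ≤ hwt u) ∧ (∃ u ∈ K, u ≠ 0 ∧ hwt u = 9) ∧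
      ∀ v : Fin 78 → F, (∀ u ∈ K, ∑ c, u c * v c ^ 2 = 0) → v ∈ K := by
  obtain ⟨w, hw⟩ := exists_w (F := F) h4
  refine ⟨LinearMap.ker (phi w), finrank_ker h4 w hw, ?_, ?_, ?_⟩
  · intro u hu h0
    rw [LinearMap.mem_ker] at hu
    by_contra hlt
    exact contra h4 w hw (B1 ++ (B6 ++ B20)) len_BB S_bound u h0 (by omega) (chi_BB h4 w hw u hu)
  · have h9 : hwt (dec w W9) = 9 := (hwt_dec w hw W9).trans wt_W9
    refine ⟨dec w W9, LinearMap.mem_ker.mpr (W9_mem h4 w hw), ?_, h9⟩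
    intro h0
    rw [h0] at h9
    simp [hwt] at h9
  · intro v hv
    rw [LinearMap.mem_ker]
    exact dual_ker h4 w hw v fun u hu => hv u (LinearMap.mem_ker.mpr hu)

end QC78


/-- There exists a Hermitian dual-containing `[78, 59, 9]₄` code. -/
theorem exists_dual_containing_78_59_9 :
    ∃ Ccode : Submodule F4 (Fin 78 → F4),
      Module.finrank F4 ↥Ccode = 59 ∧
      (∀ u ∈ Ccode, u ≠ 0 → 9 ≤ hammingWt u) ∧
      (∃ u ∈ Ccode, u ≠ 0 ∧ hammingWt u = 9) ∧
      hermDual Ccode ≤ Ccode := by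
  classical
  haveI : Fintype F4 := Fintype.ofFinite _
  have h4 : Fintype.card F4 = 4 := by
    rw [← Nat.card_eq_fintype_card, GaloisField.card 2 2 (by norm_num)]
    norm_num
  have hwt_eq : ∀ u : Fin 78 → F4, hammingWt u = QC78.hwt u := by
    intro u
    rw [hammingWt, Nat.card_eq_fintype_card, Fintype.card_subtype, Finset.card_filter]
    rfl
  obtain ⟨K, h1, h2, ⟨x, hx, hx0, hx9⟩, h3⟩ := QC78.final_gen (F := F4) h4
  refine ⟨K, h1, ?_, ⟨x, hx, hx0, ?_⟩, ?_⟩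
  · intro u hu h0
    rw [hwt_eq]
    exact h2 u hu h0
  · rw [hwt_eq]
    exact hx9
  · intro v hv
    exact h3 v hv

end
end
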